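/- Let T > 0, 0 < α < 1, r ≥ 1, p ≥ 1 an integer, and let v satisfy the regularity condition with constants C₀ > 0 and σ ∈ (0,1). Then there exists C > 0 depending only on p, σ, α, r, C₀ and T (in particular independent of N and n) with the following property: for every integer N ≥ 1, every 1 ≤ n ≤ N and every function R : (0,t_n] → ℝ which on each subinterval (t_{k−1}, t_k] (1 ≤ k ≤ n) of the graded mesh agrees with a polynomial of degree ≤ p and which satisfies the orthogonality relations ∫_0^{t_n} (D_{0+}^α (R − v))(t) · X(t) dt = 0 for every X : (0,t_n] → ℝ that agrees on each (t_{k−1}, t_k] with a polynomial of degree ≤ p, one has ∫_0^{t_n} (R(t) − v(t))² dt ≤ C · E(n,N,σ,α,r,p). -/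

import Mathlib

/-- The Riemann–Liouville kernel `ω_β(t) = t^(β-1) / Γ(β)`. -/
noncomputable def rlKernel (β t : ℝ) : ℝ := t ^ (β - 1) / Real.Gamma β

/-- The graded mesh `t_n = (n/N)^r * T`. -/
noncomputable def gradedMesh (T r : ℝ) (N n : ℕ) : ℝ := ((n : ℝ) / (N : ℝ)) ^ r * T

/-- The error bound `E(n,N,σ,α,r,p)`:
`E = N^{-r(1+2σ-α)-α}` if `1 ≤ r < (2p+2-α)/(1+2σ-α)`,
`E = N^{-2p-2}(1+ln n)` if `r = (2p+2-α)/(1+2σ-α)`,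
`E = N^{-2p-2} t_n^{1+2σ-α-(2p+2-α)/r}` if `r > (2p+2-α)/(1+2σ-α)`. -/
noncomputable def projErrBound (T r α σ : ℝ) (p N n : ℕ) : ℝ :=
  if r < (2 * (p : ℝ) + 2 - α) / (1 + 2 * σ - α) then
    (N : ℝ) ^ (-(r * (1 + 2 * σ - α)) - α)
  else if r = (2 * (p : ℝ) + 2 - α) / (1 + 2 * σ - α) then
    (N : ℝ) ^ (-2 * (p : ℝ) - 2) * (1 + Real.log n)
  else
    (N : ℝ) ^ (-2 * (p : ℝ) - 2) *
      gradedMesh T r N n ^ (1 + 2 * σ - α - (2 * (p : ℝ) + 2 - α) / r)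

namespace GradedRL

open MeasureTheory Set Filter Topology

/-! ### Kernels on product spaces -/

theorem integrable_kernel_fst {μ ν : Measure ℝ} [SFinite μ] [SFinite ν] {κ : ℝ → ℝ → ℝ}
    (hκ : Measurable (Function.uncurry κ)) (hκ0 : ∀ x y, 0 ≤ κ x y) {m f : ℝ → ℝ}
    (hm : ∀ᵐ x ∂μ, Integrable (κ x) ν ∧ ∫ y, κ x y ∂ν ≤ m x) (hf : Measurable f)
    (hfm : Integrable (fun x => |f x| * m x) μ) :
    Integrable (fun p : ℝ × ℝ => κ p.1 p.2 * f p.1) (μ.prod ν) := by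
  have hmeas : Measurable (fun p : ℝ × ℝ => κ p.1 p.2 * f p.1) :=
    hκ.mul (hf.comp measurable_fst)
  rw [integrable_prod_iff hmeas.aestronglyMeasurable]
  refine ⟨?_, ?_⟩
  · filter_upwards [hm] with x hx using hx.1.mul_const _
  · refine hfm.mono' (hmeas.norm.stronglyMeasurable.integral_prod_right
      (f := fun x y => ‖κ x y * f x‖)).aestronglyMeasurable ?_
    filter_upwards [hm] with x hx
    have h1 : ∫ y, ‖κ x y * f x‖ ∂ν = (∫ y, κ x y ∂ν) * |f x| := by
      rw [← integral_mul_const]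
      congr 1
      ext y
      rw [Real.norm_eq_abs, abs_mul, abs_of_nonneg (hκ0 x y)]
    rw [h1, Real.norm_eq_abs, abs_mul, abs_abs, abs_of_nonneg (integral_nonneg (hκ0 x)), mul_comm]
    exact mul_le_mul_of_nonneg_left hx.2 (abs_nonneg _)

theorem integral_kernel_fst_le {μ ν : Measure ℝ} [SFinite μ] [SFinite ν] {κ : ℝ → ℝ → ℝ}
    (hκ : Measurable (Function.uncurry κ)) (hκ0 : ∀ x y, 0 ≤ κ x y) {m f : ℝ → ℝ}
    (hm : ∀ᵐ x ∂μ, Integrable (κ x) ν ∧ ∫ y, κ x y ∂ν ≤ m x) (hf : Measurable f)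
    (hf0 : ∀ x, 0 ≤ f x) (hfm : Integrable (fun x => f x * m x) μ) :
    Integrable (fun p : ℝ × ℝ => κ p.1 p.2 * f p.1) (μ.prod ν) ∧
      ∫ p : ℝ × ℝ, κ p.1 p.2 * f p.1 ∂(μ.prod ν) ≤ ∫ x, f x * m x ∂μ := by
  have hi : Integrable (fun p : ℝ × ℝ => κ p.1 p.2 * f p.1) (μ.prod ν) :=
    integrable_kernel_fst hκ hκ0 hm hf (by simpa only [abs_of_nonneg (hf0 _)] using hfm)
  refine ⟨hi, ?_⟩
  rw [integral_prod _ hi]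
  refine integral_mono_ae hi.integral_prod_left hfm ?_
  filter_upwards [hm] with x hx
  rw [integral_mul_const, mul_comm]
  exact mul_le_mul_of_nonneg_left hx.2 (hf0 x)

theorem integrable_kernel_snd {μ ν : Measure ℝ} [SFinite μ] [SFinite ν] {κ : ℝ → ℝ → ℝ}
    (hκ : Measurable (Function.uncurry κ)) (hκ0 : ∀ x y, 0 ≤ κ x y) {m f : ℝ → ℝ}
    (hm : ∀ᵐ y ∂ν, Integrable (fun x => κ x y) μ ∧ ∫ x, κ x y ∂μ ≤ m y) (hf : Measurable f)
    (hfm : Integrable (fun y => |f y| * m y) ν) :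
    Integrable (fun p : ℝ × ℝ => κ p.1 p.2 * f p.2) (μ.prod ν) := by
  have h := integrable_kernel_fst (μ := ν) (ν := μ) (κ := fun y x => κ x y)
    (hκ.comp measurable_swap) (fun y x => hκ0 x y) hm hf hfm
  exact h.swap

theorem integral_kernel_snd_le {μ ν : Measure ℝ} [SFinite μ] [SFinite ν] {κ : ℝ → ℝ → ℝ}
    (hκ : Measurable (Function.uncurry κ)) (hκ0 : ∀ x y, 0 ≤ κ x y) {m f : ℝ → ℝ}
    (hm : ∀ᵐ y ∂ν, Integrable (fun x => κ x y) μ ∧ ∫ x, κ x y ∂μ ≤ m y) (hf : Measurable f)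
    (hf0 : ∀ x, 0 ≤ f x) (hfm : Integrable (fun y => f y * m y) ν) :
    Integrable (fun p : ℝ × ℝ => κ p.1 p.2 * f p.2) (μ.prod ν) ∧
      ∫ p : ℝ × ℝ, κ p.1 p.2 * f p.2 ∂(μ.prod ν) ≤ ∫ y, f y * m y ∂ν := by
  have h := integral_kernel_fst_le (μ := ν) (ν := μ) (κ := fun y x => κ x y)
    (hκ.comp measurable_swap) (fun y x => hκ0 x y) hm hf hf0 hfm
  refine ⟨h.1.swap, ?_⟩
  rw [← integral_prod_swap]
  exact h.2

/-- Cauchy–Schwarz for a nonnegative kernel of bounded mass. -/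
theorem sq_integral_mul_le {μ : Measure ℝ} {κ e : ℝ → ℝ} {m : ℝ} (hm : 0 < m)
    (hκ0 : ∀ x, 0 ≤ κ x) (hκ : Integrable κ μ) (hκm : ∫ x, κ x ∂μ ≤ m)
    (h1 : Integrable (fun x => κ x * e x) μ) (h2 : Integrable (fun x => κ x * e x ^ 2) μ) :
    (∫ x, κ x * e x ∂μ) ^ 2 ≤ m * ∫ x, κ x * e x ^ 2 ∂μ := by
  set z := ∫ x, κ x * e x ∂μ with hz
  have h0 : 0 ≤ ∫ x, κ x * (e x - z / m) ^ 2 ∂μ :=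
    integral_nonneg fun x => mul_nonneg (hκ0 x) (sq_nonneg _)
  have hexp : ∫ x, κ x * (e x - z / m) ^ 2 ∂μ
      = (∫ x, κ x * e x ^ 2 ∂μ) - 2 * (z / m) * z + (z / m) ^ 2 * ∫ x, κ x ∂μ := by
    have hs : Integrable (fun x => κ x * e x ^ 2 - 2 * (z / m) * (κ x * e x)) μ :=
      h2.sub (h1.const_mul _)
    rw [hz, ← integral_const_mul, ← hz, ← integral_const_mul, ← integral_sub h2 (h1.const_mul _),
      ← integral_add hs (hκ.const_mul _)]
    congr 1
    ext x
    ring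
  rw [hexp] at h0
  have h3 : (z / m) ^ 2 * ∫ x, κ x ∂μ ≤ (z / m) ^ 2 * m :=
    mul_le_mul_of_nonneg_left hκm (sq_nonneg _)
  have h4 : (z / m) ^ 2 * m = z ^ 2 / m := by field_simp
  have h5 : 2 * (z / m) * z = 2 * (z ^ 2 / m) := by ring
  have h6 : z ^ 2 / m ≤ ∫ x, κ x * e x ^ 2 ∂μ := by linarith
  rwa [div_le_iff₀' hm] at h6

/-! ### Integrals of powers -/

theorem integrableOn_sub_left_rpow {a b γ : ℝ} (hab : a ≤ b) (hγ : -1 < γ) :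
    IntegrableOn (fun x => (x - a) ^ γ) (Ioc a b) := by
  rw [← intervalIntegrable_iff_integrableOn_Ioc_of_le hab]
  have := (intervalIntegral.intervalIntegrable_rpow' (a := 0) (b := b - a) hγ).comp_sub_right a
  simpa using this

theorem integral_sub_left_rpow {a b γ : ℝ} (hab : a ≤ b) (hγ : -1 < γ) :
    ∫ x in Ioc a b, (x - a) ^ γ = (b - a) ^ (γ + 1) / (γ + 1) := by
  rw [← intervalIntegral.integral_of_le hab,
    intervalIntegral.integral_comp_sub_right (fun x => x ^ γ) a, integral_rpow (Or.inl hγ)]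
  rw [sub_self, Real.zero_rpow (by linarith), sub_zero]

theorem integrableOn_sub_right_rpow {a b γ : ℝ} (hab : a ≤ b) (hγ : -1 < γ) :
    IntegrableOn (fun x => (b - x) ^ γ) (Ioc a b) := by
  rw [← intervalIntegrable_iff_integrableOn_Ioc_of_le hab]
  have := (intervalIntegral.intervalIntegrable_rpow' (a := b - a) (b := 0) hγ).comp_sub_left b
  simpa using this

theorem integral_sub_right_rpow {a b γ : ℝ} (hab : a ≤ b) (hγ : -1 < γ) :
    ∫ x in Ioc a b, (b - x) ^ γ = (b - a) ^ (γ + 1) / (γ + 1) := by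
  rw [← intervalIntegral.integral_of_le hab,
    intervalIntegral.integral_comp_sub_left (fun x => x ^ γ) b, integral_rpow (Or.inl hγ)]
  rw [sub_self, Real.zero_rpow (by linarith), sub_zero]

theorem integrableOn_sub_rpow_of_lt {a b c γ : ℝ} (hbc : b < c) :
    IntegrableOn (fun y => (c - y) ^ γ) (Ioc a b) := by
  refine (ContinuousOn.integrableOn_Icc ?_).mono_set Ioc_subset_Icc_self
  refine ContinuousOn.rpow_const (by fun_prop) fun x hx => Or.inl ?_
  have := hx.2
  linarith

theorem integral_sub_rpow_of_lt {a b c γ : ℝ} (hab : a ≤ b) (hbc : b < c) (hγ : γ ≠ -1) :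
    ∫ y in Ioc a b, (c - y) ^ γ = ((c - a) ^ (γ + 1) - (c - b) ^ (γ + 1)) / (γ + 1) := by
  rw [← intervalIntegral.integral_of_le hab,
    intervalIntegral.integral_comp_sub_left (fun x => x ^ γ) c, integral_rpow (Or.inr ⟨hγ, ?_⟩)]
  rw [uIcc_of_le (by linarith)]
  intro h
  linarith [h.1]

theorem integrableOn_rpow_sub_of_lt {a b c γ : ℝ} (hca : c < a) :
    IntegrableOn (fun y => (y - c) ^ γ) (Ioc a b) := by
  refine (ContinuousOn.integrableOn_Icc ?_).mono_set Ioc_subset_Icc_self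
  refine ContinuousOn.rpow_const (by fun_prop) fun x hx => Or.inl ?_
  have := hx.1
  linarith

theorem integral_rpow_sub_of_lt {a b c γ : ℝ} (hab : a ≤ b) (hca : c < a) (hγ : γ ≠ -1) :
    ∫ y in Ioc a b, (y - c) ^ γ = ((b - c) ^ (γ + 1) - (a - c) ^ (γ + 1)) / (γ + 1) := by
  rw [← intervalIntegral.integral_of_le hab,
    intervalIntegral.integral_comp_sub_right (fun x => x ^ γ) c, integral_rpow (Or.inr ⟨hγ, ?_⟩)]
  rw [uIcc_of_le (by linarith)]
  intro h
  linarith [h.1]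

/-- Lebesgue measure on `(0, b]`. -/
noncomputable abbrev lam (b : ℝ) : Measure ℝ := volume.restrict (Ioc (0 : ℝ) b)

/-- The hypersingular kernel `(x - y)^(-1-α)` on `y < x`. -/
noncomputable def ker (α x y : ℝ) : ℝ := if y < x then (x - y) ^ (-1 - α) else 0

/-- The regularisation of `ker` obtained by shifting the singularity by `ε`. -/
noncomputable def kerReg (α ε x y : ℝ) : ℝ := if y < x then (x - y + ε) ^ (-1 - α) else 0

theorem ker_nonneg (α x y : ℝ) : 0 ≤ ker α x y := by
  unfold ker
  split_ifs with h
  · exact Real.rpow_nonneg (by linarith) _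
  · exact le_rfl

theorem kerReg_nonneg (α : ℝ) {ε : ℝ} (hε : 0 < ε) (x y : ℝ) : 0 ≤ kerReg α ε x y := by
  unfold kerReg
  split_ifs with h
  · exact Real.rpow_nonneg (by linarith) _
  · exact le_rfl

theorem measurable_ker (α : ℝ) : Measurable (Function.uncurry (ker α)) := by
  unfold ker Function.uncurry
  refine Measurable.ite (measurableSet_lt measurable_snd measurable_fst) ?_ measurable_const
  fun_prop

theorem measurable_kerReg (α ε : ℝ) : Measurable (Function.uncurry (kerReg α ε)) := by
  unfold kerReg Function.uncurry
  refine Measurable.ite (measurableSet_lt measurable_snd measurable_fst) ?_ measurable_const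
  fun_prop

theorem kerReg_le_ker {α : ℝ} (hα : 0 < α) {ε : ℝ} (hε : 0 < ε) (x y : ℝ) :
    kerReg α ε x y ≤ ker α x y := by
  unfold kerReg ker
  split_ifs with h
  · exact Real.rpow_le_rpow_of_nonpos (by linarith) (by linarith) (by linarith)
  · exact le_rfl

theorem kerReg_le {α : ℝ} (hα : 0 < α) {ε : ℝ} (hε : 0 < ε) (x y : ℝ) :
    kerReg α ε x y ≤ ε ^ (-1 - α) := by
  unfold kerReg
  split_ifs with h
  · exact Real.rpow_le_rpow_of_nonpos (by linarith) (by linarith) (by linarith)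
  · exact Real.rpow_nonneg hε.le _

theorem tendsto_kerReg (α x y : ℝ) :
    Tendsto (fun ε => kerReg α ε x y) (𝓝[>] 0) (𝓝 (ker α x y)) := by
  unfold kerReg ker
  split_ifs with h
  · have hc : ContinuousAt (fun ε : ℝ => (x - y + ε) ^ (-1 - α)) 0 :=
      ContinuousAt.rpow_const (by fun_prop) (Or.inl (by linarith))
    have := hc.tendsto
    simp only [add_zero] at this
    exact this.mono_left nhdsWithin_le_nhds
  · exact tendsto_const_nhds

theorem integral_kerReg_snd {α : ℝ} (hα : 0 < α) {ε : ℝ} (hε : 0 < ε) {b x : ℝ}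
    (hx : x ∈ Ioc 0 b) :
    ∫ y, kerReg α ε x y ∂lam b = (ε ^ (-α) - (x + ε) ^ (-α)) / α := by
  have h1 : ∀ y, kerReg α ε x y = (Iio x).indicator (fun y => (x + ε - y) ^ (-1 - α)) y := by
    intro y
    simp only [kerReg, indicator, mem_Iio]
    congr 2
    ring
  simp_rw [h1]
  rw [integral_indicator measurableSet_Iio, Measure.restrict_restrict measurableSet_Iio]
  have h2 : Iio x ∩ Ioc 0 b = Ioo 0 x := by
    ext y
    simp only [mem_inter_iff, mem_Iio, mem_Ioc, mem_Ioo]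
    constructor
    · rintro ⟨h, h', _⟩
      exact ⟨h', h⟩
    · rintro ⟨h, h'⟩
      exact ⟨h', h, by linarith [hx.2]⟩
  rw [h2, ← integral_Ioc_eq_integral_Ioo, integral_sub_rpow_of_lt hx.1.le (by linarith)
    (by linarith : (-1 - α) ≠ -1)]
  have h3 : -1 - α + 1 = -α := by ring
  rw [h3, sub_zero, div_neg, ← neg_div, neg_sub, add_sub_cancel_left]

theorem integral_kerReg_fst {α : ℝ} (hα : 0 < α) {ε : ℝ} (hε : 0 < ε) {b y : ℝ}
    (hy : y ∈ Ioc 0 b) :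
    ∫ x, kerReg α ε x y ∂lam b = (ε ^ (-α) - (b - y + ε) ^ (-α)) / α := by
  have h1 : ∀ x, kerReg α ε x y = (Ioi y).indicator (fun x => (x - (y - ε)) ^ (-1 - α)) x := by
    intro x
    simp only [kerReg, indicator, mem_Ioi]
    congr 2
    ring
  simp_rw [h1]
  rw [integral_indicator measurableSet_Ioi, Measure.restrict_restrict measurableSet_Ioi]
  have h2 : Ioi y ∩ Ioc 0 b = Ioc y b := by
    ext x
    simp only [mem_inter_iff, mem_Ioi, mem_Ioc]
    constructor
    · rintro ⟨h, h', h''⟩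
      exact ⟨h, h''⟩
    · rintro ⟨h, h'⟩
      exact ⟨h, by linarith [hy.1], h'⟩
  rw [h2, integral_rpow_sub_of_lt hy.2 (by linarith) (by linarith : (-1 - α) ≠ -1)]
  have h3 : -1 - α + 1 = -α := by ring
  rw [h3, div_neg, ← neg_div, neg_sub]
  congr 3 <;> ring

theorem integral_kerReg_mul_sub {α : ℝ} (hα : 0 < α) {ε : ℝ} (hε : 0 < ε) {b : ℝ}
    {g : ℝ → ℝ} (hg : Integrable g (lam b)) :
    ∫ p : ℝ × ℝ, kerReg α ε p.1 p.2 * (g p.1 - g p.2) ∂((lam b).prod (lam b))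
      = (∫ x, g x * ((b - x + ε) ^ (-α) - (x + ε) ^ (-α)) ∂lam b) / α := by
  have hbd : ∀ᵐ p : ℝ × ℝ ∂((lam b).prod (lam b)), ‖kerReg α ε p.1 p.2‖ ≤ ε ^ (-1 - α) :=
    ae_of_all _ fun p => by
      rw [Real.norm_of_nonneg (kerReg_nonneg α hε _ _)]
      exact kerReg_le hα hε _ _
  have hme : AEStronglyMeasurable (fun p : ℝ × ℝ => kerReg α ε p.1 p.2)
      ((lam b).prod (lam b)) := (measurable_kerReg α ε).aestronglyMeasurable
  have hi1 : Integrable (fun p : ℝ × ℝ => kerReg α ε p.1 p.2 * g p.1)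
      ((lam b).prod (lam b)) := hg.comp_fst (lam b) |>.bdd_mul hme hbd
  have hi2 : Integrable (fun p : ℝ × ℝ => kerReg α ε p.1 p.2 * g p.2)
      ((lam b).prod (lam b)) := hg.comp_snd (lam b) |>.bdd_mul hme hbd
  simp_rw [mul_sub]
  rw [integral_sub hi1 hi2, integral_prod _ hi1, integral_prod_symm _ hi2]
  simp only
  simp_rw [integral_mul_const]
  have e1 : ∫ x, (∫ y, kerReg α ε x y ∂lam b) * g x ∂lam b
      = ∫ x, (ε ^ (-α) - (x + ε) ^ (-α)) / α * g x ∂lam b :=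
    setIntegral_congr_fun measurableSet_Ioc fun x hx => by
      simp only [integral_kerReg_snd hα hε hx]
  have e2 : ∫ y, (∫ x, kerReg α ε x y ∂lam b) * g y ∂lam b
      = ∫ y, (ε ^ (-α) - (b - y + ε) ^ (-α)) / α * g y ∂lam b :=
    setIntegral_congr_fun measurableSet_Ioc fun x hx => by
      simp only [integral_kerReg_fst hα hε hx]
  rw [e1, e2]
  have hb1 : ∀ᵐ x ∂lam b, ‖(ε ^ (-α) - (x + ε) ^ (-α)) / α‖ ≤ ε ^ (-α) / α := by
    filter_upwards [ae_restrict_mem measurableSet_Ioc] with x hx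
    have h1 : (x + ε) ^ (-α) ≤ ε ^ (-α) :=
      Real.rpow_le_rpow_of_nonpos hε (by linarith [hx.1]) (by linarith)
    have h2 : 0 ≤ (x + ε) ^ (-α) := Real.rpow_nonneg (by linarith [hx.1]) _
    rw [Real.norm_of_nonneg (div_nonneg (by linarith) hα.le)]
    gcongr
    linarith
  have hb2 : ∀ᵐ x ∂lam b, ‖(ε ^ (-α) - (b - x + ε) ^ (-α)) / α‖ ≤ ε ^ (-α) / α := by
    filter_upwards [ae_restrict_mem measurableSet_Ioc] with x hx
    have h1 : (b - x + ε) ^ (-α) ≤ ε ^ (-α) :=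
      Real.rpow_le_rpow_of_nonpos hε (by linarith [hx.2]) (by linarith)
    have h2 : 0 ≤ (b - x + ε) ^ (-α) := Real.rpow_nonneg (by linarith [hx.2]) _
    rw [Real.norm_of_nonneg (div_nonneg (by linarith) hα.le)]
    gcongr
    linarith
  rw [← integral_sub (hg.bdd_mul (Measurable.aestronglyMeasurable (by fun_prop)) hb1)
      (hg.bdd_mul (Measurable.aestronglyMeasurable (by fun_prop)) hb2),
    ← integral_div]
  congr 1
  ext x
  ring

theorem integrable_rpow_neg {α : ℝ} (hα1 : α < 1) (b : ℝ) :
    Integrable (fun x => x ^ (-α)) (lam b) := by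
  rcases le_total 0 b with hb | hb
  · have h := integrableOn_sub_left_rpow hb (by linarith : -1 < -α)
    simp only [sub_zero] at h
    exact h
  · simp [lam, Ioc_eq_empty_of_le hb]

theorem integrable_sub_rpow_neg {α : ℝ} (hα1 : α < 1) (b : ℝ) :
    Integrable (fun x => (b - x) ^ (-α)) (lam b) := by
  rcases le_total 0 b with hb | hb
  · exact integrableOn_sub_right_rpow hb (by linarith : -1 < -α)
  · simp [lam, Ioc_eq_empty_of_le hb]

/-- The antisymmetric double integral of a difference telescopes to boundary weights. -/
theorem integral_ker_mul_sub {α : ℝ} (hα : 0 < α) (hα1 : α < 1) {b : ℝ} {g : ℝ → ℝ}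
    (hgm : Measurable g) {B : ℝ} (hB : ∀ x ∈ Ioc 0 b, |g x| ≤ B)
    (hi : Integrable (fun p : ℝ × ℝ => ker α p.1 p.2 * (g p.1 - g p.2))
      ((lam b).prod (lam b))) :
    ∫ p : ℝ × ℝ, ker α p.1 p.2 * (g p.1 - g p.2) ∂((lam b).prod (lam b))
      = (∫ x, g x * ((b - x) ^ (-α) - x ^ (-α)) ∂lam b) / α := by
  have hgB : ∀ᵐ x ∂lam b, ‖g x‖ ≤ B := by
    filter_upwards [ae_restrict_mem measurableSet_Ioc] with x hx using hB x hx
  have hg : Integrable g (lam b) :=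
    (integrable_const B).mono' hgm.aestronglyMeasurable hgB
  have hL : Tendsto (fun ε => ∫ p : ℝ × ℝ, kerReg α ε p.1 p.2 * (g p.1 - g p.2)
      ∂((lam b).prod (lam b))) (𝓝[>] 0)
      (𝓝 (∫ p : ℝ × ℝ, ker α p.1 p.2 * (g p.1 - g p.2) ∂((lam b).prod (lam b)))) := by
    refine tendsto_integral_filter_of_dominated_convergence _ ?_ ?_ hi.norm ?_
    · refine Eventually.of_forall fun ε => Measurable.aestronglyMeasurable ?_
      exact (measurable_kerReg α ε).mul
        ((hgm.comp measurable_fst).sub (hgm.comp measurable_snd))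
    · filter_upwards [self_mem_nhdsWithin] with ε hε
      refine ae_of_all _ fun p => ?_
      rw [norm_mul, norm_mul, Real.norm_of_nonneg (kerReg_nonneg α hε _ _),
        Real.norm_of_nonneg (ker_nonneg α _ _)]
      exact mul_le_mul_of_nonneg_right (kerReg_le_ker hα hε _ _) (norm_nonneg _)
    · exact ae_of_all _ fun p => (tendsto_kerReg α _ _).mul_const _
  have hR : Tendsto (fun ε => (∫ x, g x * ((b - x + ε) ^ (-α) - (x + ε) ^ (-α)) ∂lam b) / α)
      (𝓝[>] 0) (𝓝 ((∫ x, g x * ((b - x) ^ (-α) - x ^ (-α)) ∂lam b) / α)) := by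
    refine Tendsto.div_const ?_ _
    refine tendsto_integral_filter_of_dominated_convergence
      (fun x => B * ((b - x) ^ (-α) + x ^ (-α))) ?_ ?_
      (((integrable_sub_rpow_neg hα1 b).add (integrable_rpow_neg hα1 b)).const_mul B) ?_
    · exact Eventually.of_forall fun ε => Measurable.aestronglyMeasurable (by fun_prop)
    · filter_upwards [self_mem_nhdsWithin] with ε hε
      have hε' : 0 < ε := hε
      have hne : ∀ᵐ x ∂lam b, x ≠ b := Measure.ae_ne _ b
      filter_upwards [ae_restrict_mem measurableSet_Ioc, hne] with x hx hxb
      have hxb' : x < b := lt_of_le_of_ne hx.2 hxb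
      have h1 : (b - x + ε) ^ (-α) ≤ (b - x) ^ (-α) :=
        Real.rpow_le_rpow_of_nonpos (by linarith) (by linarith) (by linarith)
      have h2 : (x + ε) ^ (-α) ≤ x ^ (-α) :=
        Real.rpow_le_rpow_of_nonpos hx.1 (by linarith) (by linarith)
      have h3 : 0 ≤ (b - x + ε) ^ (-α) := Real.rpow_nonneg (by linarith) _
      have h4 : 0 ≤ (x + ε) ^ (-α) := Real.rpow_nonneg (by linarith [hx.1]) _
      rw [norm_mul]
      refine mul_le_mul (hB x hx) ?_ (norm_nonneg _) ((abs_nonneg _).trans (hB x hx))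
      rw [Real.norm_eq_abs, abs_le]
      constructor <;> linarith
    · have hne : ∀ᵐ x ∂lam b, x ≠ b := Measure.ae_ne _ b
      filter_upwards [ae_restrict_mem measurableSet_Ioc, hne] with x hx hxb
      have hxb' : x < b := lt_of_le_of_ne hx.2 hxb
      have hc : ContinuousAt (fun ε : ℝ => g x * ((b - x + ε) ^ (-α) - (x + ε) ^ (-α))) 0 := by
        refine ContinuousAt.mul continuousAt_const (ContinuousAt.sub ?_ ?_)
        · exact ContinuousAt.rpow_const (by fun_prop) (Or.inl (by linarith))
        · exact ContinuousAt.rpow_const (by fun_prop) (Or.inl (by linarith [hx.1]))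
      have := hc.tendsto
      simp only [add_zero] at this
      exact this.mono_left nhdsWithin_le_nhds
  refine tendsto_nhds_unique (hL.congr' ?_) hR
  filter_upwards [self_mem_nhdsWithin] with ε hε
  exact integral_kerReg_mul_sub hα hε hg

/-! ### The Marchaud form of the Riemann–Liouville derivative -/

/-- The Marchaud form of `Γ(1-α)` times the Riemann–Liouville derivative on `(0, b]`. -/
noncomputable def marchaud (α b : ℝ) (e : ℝ → ℝ) (x : ℝ) : ℝ :=
  x ^ (-α) * e x + α * ∫ y, ker α x y * (e x - e y) ∂lam b

theorem integrable_of_bounded {b B : ℝ} {f : ℝ → ℝ} (hf : Measurable f)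
    (hB : ∀ x ∈ Ioc 0 b, |f x| ≤ B) : Integrable f (lam b) := by
  refine (integrable_const B).mono' hf.aestronglyMeasurable ?_
  filter_upwards [ae_restrict_mem measurableSet_Ioc] with x hx using hB x hx

theorem integrable_bdd_mul {b B : ℝ} {f g : ℝ → ℝ} (hf : Measurable f)
    (hB : ∀ x ∈ Ioc 0 b, |f x| ≤ B) (hg : Integrable g (lam b)) :
    Integrable (fun x => g x * f x) (lam b) := by
  refine hg.mul_bdd (c := B) hf.aestronglyMeasurable ?_
  filter_upwards [ae_restrict_mem measurableSet_Ioc] with x hx using hB x hx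

theorem ae_prod_mem (b : ℝ) :
    ∀ᵐ p : ℝ × ℝ ∂((lam b).prod (lam b)), p.1 ∈ Ioc 0 b ∧ p.2 ∈ Ioc 0 b := by
  rw [lam, Measure.prod_restrict]
  filter_upwards [ae_restrict_mem (measurableSet_Ioc.prod measurableSet_Ioc)] with p hp using hp

theorem integrable_prod_mul_fst {b B : ℝ} {f : ℝ → ℝ} (hf : Measurable f)
    (hB : ∀ x ∈ Ioc 0 b, |f x| ≤ B) {F : ℝ × ℝ → ℝ} (hF : Integrable F ((lam b).prod (lam b))) :
    Integrable (fun p => F p * f p.1) ((lam b).prod (lam b)) := by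
  refine hF.mul_bdd (c := B) (hf.comp measurable_fst).aestronglyMeasurable ?_
  filter_upwards [ae_prod_mem b] with p hp using hB _ hp.1

theorem integrable_prod_mul_snd {b B : ℝ} {f : ℝ → ℝ} (hf : Measurable f)
    (hB : ∀ x ∈ Ioc 0 b, |f x| ≤ B) {F : ℝ × ℝ → ℝ} (hF : Integrable F ((lam b).prod (lam b))) :
    Integrable (fun p => F p * f p.2) ((lam b).prod (lam b)) := by
  refine hF.mul_bdd (c := B) (hf.comp measurable_snd).aestronglyMeasurable ?_
  filter_upwards [ae_prod_mem b] with p hp using hB _ hp.2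

section marchaud

variable {α b B : ℝ} {e : ℝ → ℝ}

theorem integrable_marchaud (hα1 : α < 1) (he : Measurable e) (hB : ∀ x ∈ Ioc 0 b, |e x| ≤ B)
    (hi : Integrable (fun p : ℝ × ℝ => ker α p.1 p.2 * (e p.1 - e p.2))
      ((lam b).prod (lam b))) :
    Integrable (marchaud α b e) (lam b) :=
  (integrable_bdd_mul he hB (integrable_rpow_neg hα1 b)).add (hi.integral_prod_left.const_mul α)

theorem integral_marchaud_mul (hα1 : α < 1) (he : Measurable e) (hB : ∀ x ∈ Ioc 0 b, |e x| ≤ B)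
    (hi : Integrable (fun p : ℝ × ℝ => ker α p.1 p.2 * (e p.1 - e p.2))
      ((lam b).prod (lam b))) {X : ℝ → ℝ} {B' : ℝ} (hX : Measurable X)
    (hX' : ∀ x ∈ Ioc 0 b, |X x| ≤ B') :
    ∫ x, marchaud α b e x * X x ∂lam b = (∫ x, x ^ (-α) * e x * X x ∂lam b)
      + α * ∫ p : ℝ × ℝ, ker α p.1 p.2 * (e p.1 - e p.2) * X p.1 ∂((lam b).prod (lam b)) := by
  have hi' := integrable_prod_mul_fst hX hX' hi
  rw [integral_prod _ hi', ← integral_const_mul, ← integral_add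
    (integrable_bdd_mul hX hX' (integrable_bdd_mul he hB (integrable_rpow_neg hα1 b)))
    (hi'.integral_prod_left.const_mul α)]
  congr 1
  ext x
  simp only [marchaud]
  rw [integral_mul_const]
  ring

theorem integral_marchaud (hα : 0 < α) (hα1 : α < 1) (he : Measurable e)
    (hB : ∀ x ∈ Ioc 0 b, |e x| ≤ B)
    (hi : Integrable (fun p : ℝ × ℝ => ker α p.1 p.2 * (e p.1 - e p.2))
      ((lam b).prod (lam b))) {x : ℝ} (hx : x ≤ b) :
    ∫ y, marchaud α b e y ∂lam x = ∫ y, (x - y) ^ (-α) * e y ∂lam x := by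
  have hB' : ∀ y ∈ Ioc 0 x, |e y| ≤ B := fun y hy => hB y ⟨hy.1, hy.2.trans hx⟩
  have hi' : Integrable (fun p : ℝ × ℝ => ker α p.1 p.2 * (e p.1 - e p.2))
      ((lam x).prod (lam x)) := by
    refine hi.mono_measure ?_
    exact Measure.prod_mono (Measure.restrict_mono (Ioc_subset_Ioc_right hx) le_rfl)
      (Measure.restrict_mono (Ioc_subset_Ioc_right hx) le_rfl)
  have h1 : ∫ y, marchaud α b e y ∂lam x = ∫ y, marchaud α x e y ∂lam x := by
    refine setIntegral_congr_fun measurableSet_Ioc fun y hy => ?_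
    simp only [marchaud]
    congr 2
    refine (setIntegral_eq_of_subset_of_forall_sdiff_eq_zero measurableSet_Ioc
      (Ioc_subset_Ioc_right hx) fun z hz => ?_).trans rfl
    have : ¬ z < y := fun h => hz.2 ⟨hz.1.1, by linarith [hy.2]⟩
    simp [ker, this]
  rw [h1]
  have h2 := integral_marchaud_mul hα1 he hB' hi' (X := fun _ => 1) (B' := 1) measurable_const
    (by simp)
  simp only [mul_one] at h2
  rw [h2, integral_ker_mul_sub hα hα1 he hB' hi', mul_div_cancel₀ _ hα.ne']
  have hj1 := integrable_bdd_mul he hB' (integrable_rpow_neg hα1 x)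
  have hj2 := integrable_bdd_mul he hB'
    ((integrable_sub_rpow_neg hα1 x).sub (integrable_rpow_neg hα1 x))
  have hj3 : Integrable (fun y => e y * ((x - y) ^ (-α) - y ^ (-α))) (lam x) := by
    refine hj2.congr (ae_of_all _ fun y => ?_)
    simp only [Pi.sub_apply]
    ring
  rw [← integral_add hj1 hj3]
  congr 1
  ext y
  ring

theorem ae_eq_marchaud (hα : 0 < α) (hα1 : α < 1) (he : Measurable e)
    (hB : ∀ x ∈ Ioc 0 b, |e x| ≤ B)
    (hi : Integrable (fun p : ℝ × ℝ => ker α p.1 p.2 * (e p.1 - e p.2))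
      ((lam b).prod (lam b))) {D : ℝ → ℝ}
    (hD : ∀ᵐ x ∂lam b, HasDerivAt (fun x => ∫ y in (0 : ℝ)..x, (x - y) ^ (-α) * e y) (D x) x) :
    D =ᵐ[lam b] marchaud α b e := by
  rcases le_or_gt b 0 with hb | hb
  · simp [lam, Ioc_eq_empty_of_le hb, EventuallyEq]
  have hM := integrable_marchaud hα1 he hB hi
  have hM' : IntervalIntegrable (marchaud α b e) volume 0 b :=
    (intervalIntegrable_iff_integrableOn_Ioc_of_le hb.le).2 hM
  have hne : ∀ᵐ x ∂lam b, x ≠ b := Measure.ae_ne _ b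
  filter_upwards [hD, ae_restrict_of_ae hM'.ae_hasDerivAt_integral,
    ae_restrict_mem measurableSet_Ioc, hne] with x h1 h2 hx hxb
  have h3 := h2 (by rw [uIcc_of_le hb.le]; exact Ioc_subset_Icc_self hx) 0 left_mem_uIcc
  refine h1.unique (h3.congr_of_eventuallyEq ?_)
  filter_upwards [Ioo_mem_nhds hx.1 (lt_of_le_of_ne hx.2 hxb)] with z hz
  rw [intervalIntegral.integral_of_le hz.1.le, intervalIntegral.integral_of_le hz.1.le]
  exact (integral_marchaud hα hα1 he hB hi hz.2.le).symm

end marchaud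

theorem ae_eq_zero_of_forall_integral_eq_zero {b : ℝ} {f : ℝ → ℝ} (hf : Integrable f (lam b))
    (h : ∀ x ∈ Ioc 0 b, ∫ y, f y ∂lam x = 0) : ∀ᵐ x ∂lam b, f x = 0 := by
  rcases le_or_gt b 0 with hb | hb
  · simp [lam, Ioc_eq_empty_of_le hb]
  have hf' : IntervalIntegrable f volume 0 b :=
    (intervalIntegrable_iff_integrableOn_Ioc_of_le hb.le).2 hf
  have hne : ∀ᵐ x ∂lam b, x ≠ b := Measure.ae_ne _ b
  filter_upwards [ae_restrict_of_ae hf'.ae_hasDerivAt_integral,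
    ae_restrict_mem measurableSet_Ioc, hne] with x h2 hx hxb
  have h3 := h2 (by rw [uIcc_of_le hb.le]; exact Ioc_subset_Icc_self hx) 0 left_mem_uIcc
  refine h3.unique ((hasDerivAt_const x (0 : ℝ)).congr_of_eventuallyEq ?_)
  filter_upwards [Ioo_mem_nhds hx.1 (lt_of_le_of_ne hx.2 hxb)] with z hz
  rw [intervalIntegral.integral_of_le hz.1.le]
  exact h z ⟨hz.1, hz.2.le⟩

/-! ### The beta integral -/

/-- The constant `Β(α, 1-α)`. -/
noncomputable def betaConst (α : ℝ) : ℝ := ∫ w in (0 : ℝ)..1, (1 - w) ^ (α - 1) * w ^ (-α)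

theorem integrableOn_beta {α : ℝ} (hα : 0 < α) (hα1 : α < 1) {u x : ℝ} (hux : u < x) :
    IntegrableOn (fun w => (x - w) ^ (α - 1) * (w - u) ^ (-α)) (Ioc u x) := by
  set m := (u + x) / 2 with hm
  have hum : u < m := by rw [hm]; linarith
  have hmx : m < x := by rw [hm]; linarith
  rw [← Ioc_union_Ioc_eq_Ioc hum.le hmx.le]
  refine IntegrableOn.union ?_ ?_
  · refine Integrable.bdd_mul (c := (x - m) ^ (α - 1))
      (integrableOn_sub_left_rpow hum.le (by linarith : -1 < -α))
      (Measurable.aestronglyMeasurable (by fun_prop)) ?_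
    filter_upwards [ae_restrict_mem measurableSet_Ioc] with w hw
    rw [Real.norm_of_nonneg (Real.rpow_nonneg (by linarith [hw.2]) _)]
    exact Real.rpow_le_rpow_of_nonpos (by linarith) (by linarith [hw.2]) (by linarith)
  · refine Integrable.mul_bdd (c := (m - u) ^ (-α))
      (integrableOn_sub_right_rpow hmx.le (by linarith : -1 < α - 1))
      (Measurable.aestronglyMeasurable (by fun_prop)) ?_
    filter_upwards [ae_restrict_mem measurableSet_Ioc] with w hw
    rw [Real.norm_of_nonneg (Real.rpow_nonneg (by linarith [hw.1]) _)]
    exact Real.rpow_le_rpow_of_nonpos (by linarith) (by linarith [hw.1]) (by linarith)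

theorem integral_beta {α : ℝ} {u x : ℝ} (hux : u < x) :
    ∫ w in Ioc u x, (x - w) ^ (α - 1) * (w - u) ^ (-α) = betaConst α := by
  have hd : 0 < x - u := by linarith
  rw [← intervalIntegral.integral_of_le hux.le]
  have h := intervalIntegral.integral_comp_mul_add (a := 0) (b := 1)
    (fun w => (x - w) ^ (α - 1) * (w - u) ^ (-α)) hd.ne' u
  simp only [mul_zero, zero_add, mul_one, sub_add_cancel, smul_eq_mul] at h
  rw [eq_inv_mul_iff_mul_eq₀ hd.ne'] at h
  rw [← h, betaConst, ← intervalIntegral.integral_const_mul]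
  refine intervalIntegral.integral_congr fun v hv => ?_
  rw [uIcc_of_le zero_le_one] at hv
  have h1 : x - ((x - u) * v + u) = (x - u) * (1 - v) := by ring
  have h2 : (x - u) * v + u - u = (x - u) * v := by ring
  rw [h1, h2, Real.mul_rpow hd.le (by linarith [hv.2]), Real.mul_rpow hd.le hv.1]
  have h3 : (x - u) * ((x - u) ^ (α - 1) * (x - u) ^ (-α)) = 1 := by
    rw [← Real.rpow_add hd]
    have : α - 1 + -α = -1 := by ring
    rw [this, Real.rpow_neg_one, mul_inv_cancel₀ hd.ne']
  linear_combination ((1 - v) ^ (α - 1) * v ^ (-α)) * h3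

theorem one_le_betaConst {α : ℝ} (hα : 0 < α) (hα1 : α < 1) : 1 ≤ betaConst α := by
  have h1 : (1 : ℝ) = ∫ w in Ioc (0 : ℝ) 1, (1 : ℝ) := by simp
  rw [← integral_beta (α := α) (zero_lt_one (α := ℝ))]
  conv_lhs => rw [h1]
  refine integral_mono_ae (integrable_const _) (integrableOn_beta hα hα1 zero_lt_one) ?_
  have hne : ∀ᵐ x ∂lam 1, x ≠ 1 := Measure.ae_ne _ 1
  filter_upwards [ae_restrict_mem measurableSet_Ioc, hne] with w hw hw1
  have hw1' : w < 1 := lt_of_le_of_ne hw.2 hw1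
  refine one_le_mul_of_one_le_of_one_le ?_ ?_
  · exact Real.one_le_rpow_of_pos_of_le_one_of_nonpos (by linarith) (by linarith [hw.1])
      (by linarith)
  · exact Real.one_le_rpow_of_pos_of_le_one_of_nonpos (by linarith [hw.1]) (by linarith)
      (by linarith)

/-! ### Duality with the fractional integral -/

/-- The Abel kernel `(x - y)^(α-1)` on `y < x`. -/
noncomputable def aker (α x y : ℝ) : ℝ := if y < x then (x - y) ^ (α - 1) else 0

theorem aker_nonneg (α x y : ℝ) : 0 ≤ aker α x y := by
  unfold aker
  split_ifs with h
  · exact Real.rpow_nonneg (by linarith) _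
  · exact le_rfl

theorem measurable_aker (α : ℝ) : Measurable (Function.uncurry (aker α)) := by
  unfold aker Function.uncurry
  refine Measurable.ite (measurableSet_lt measurable_snd measurable_fst) ?_ measurable_const
  fun_prop

theorem Ioi_inter_Ioc_of_nonneg {y b : ℝ} (hy : 0 ≤ y) : Ioi y ∩ Ioc 0 b = Ioc y b := by
  ext x
  simp only [mem_inter_iff, mem_Ioi, mem_Ioc]
  exact ⟨fun h => ⟨h.1, h.2.2⟩, fun h => ⟨h.1, hy.trans_lt h.1, h.2⟩⟩

theorem Iio_inter_Ioc {x b : ℝ} (hx : x ≤ b) : Iio x ∩ Ioc 0 b = Ioo 0 x := by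
  ext y
  simp only [mem_inter_iff, mem_Iio, mem_Ioc, mem_Ioo]
  exact ⟨fun h => ⟨h.2.1, h.1⟩, fun h => ⟨h.2, h.1, h.2.le.trans hx⟩⟩

/-- Slices in the first variable of a kernel supported on `y < x`. -/
theorem slice_fst {b y : ℝ} (hy : 0 ≤ y) {f : ℝ → ℝ} (hf : IntegrableOn f (Ioc y b)) :
    Integrable (fun x => if y < x then f x else 0) (lam b) ∧
      ∫ x, (if y < x then f x else 0) ∂lam b = ∫ x in Ioc y b, f x := by
  have h1 : (fun x => if y < x then f x else 0) = (Ioi y).indicator f := by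
    ext x
    simp [indicator]
  rw [h1, integral_indicator measurableSet_Ioi, integrable_indicator_iff measurableSet_Ioi,
    IntegrableOn, Measure.restrict_restrict measurableSet_Ioi, Ioi_inter_Ioc_of_nonneg hy]
  exact ⟨hf, rfl⟩

/-- Slices in the second variable of a kernel supported on `y < x`. -/
theorem slice_snd {b x : ℝ} (hx : x ≤ b) {f : ℝ → ℝ} (hf : IntegrableOn f (Ioc 0 x)) :
    Integrable (fun y => if y < x then f y else 0) (lam b) ∧
      ∫ y, (if y < x then f y else 0) ∂lam b = ∫ y in Ioc 0 x, f y := by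
  have h1 : (fun y => if y < x then f y else 0) = (Iio x).indicator f := by
    ext y
    simp [indicator]
  rw [h1, integral_indicator measurableSet_Iio, integrable_indicator_iff measurableSet_Iio,
    IntegrableOn, Measure.restrict_restrict measurableSet_Iio, Iio_inter_Ioc hx,
    integral_Ioc_eq_integral_Ioo]
  exact ⟨hf.mono_set Ioo_subset_Ioc_self, rfl⟩

theorem aker_slice_fst {α : ℝ} (hα : 0 < α) {b y : ℝ} (hy : y ∈ Ioc 0 b) :
    Integrable (fun x => aker α x y) (lam b) ∧
      ∫ x, aker α x y ∂lam b = (b - y) ^ α / α := by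
  have h := slice_fst hy.1.le (integrableOn_sub_left_rpow hy.2 (by linarith : -1 < α - 1))
  refine ⟨h.1, h.2.trans ?_⟩
  rw [integral_sub_left_rpow hy.2 (by linarith)]
  simp

theorem ae_aker_slice_fst {α : ℝ} (hα : 0 < α) (b : ℝ) :
    ∀ᵐ y ∂lam b, Integrable (fun x => aker α x y) (lam b) ∧
      ∫ x, aker α x y ∂lam b ≤ b ^ α / α := by
  filter_upwards [ae_restrict_mem measurableSet_Ioc] with y hy
  have h := aker_slice_fst hα hy
  refine ⟨h.1, h.2.le.trans ?_⟩
  gcongr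
  · linarith [hy.2]
  · linarith [hy.1]

theorem integrable_aker_mul {α : ℝ} (hα : 0 < α) {b : ℝ} {M : ℝ → ℝ}
    (hMm : Measurable M) (hM : Integrable M (lam b)) :
    Integrable (fun p : ℝ × ℝ => aker α p.1 p.2 * M p.2) ((lam b).prod (lam b)) :=
  integrable_kernel_snd (measurable_aker α) (aker_nonneg α) (ae_aker_slice_fst hα b) hMm
    (hM.abs.mul_const _)

/-- The Abel inversion formula, in integrated form. -/
theorem integral_abel {α : ℝ} (hα : 0 < α) (hα1 : α < 1) {x : ℝ} {M e : ℝ → ℝ}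
    (hMm : Measurable M) (hM : Integrable M (lam x)) (hem : Measurable e)
    (he : Integrable e (lam x))
    (hMe : ∀ w ∈ Ioc 0 x, ∫ y, M y ∂lam w = ∫ y, (w - y) ^ (-α) * e y ∂lam w) :
    ∫ w, ∫ y, aker α w y * M y ∂lam x ∂lam x = betaConst α * ∫ y, e y ∂lam x := by
  have hα' : (-1 : ℝ) < α - 1 := by linarith
  have hsw : ∀ F : ℝ × ℝ → ℝ, Integrable F ((lam x).prod (lam x)) →
      ∫ y, ∫ w, F (w, y) ∂lam x ∂lam x = ∫ w, ∫ y, F (w, y) ∂lam x ∂lam x := fun F hF => by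
    rw [← integral_prod_symm _ hF, integral_prod _ hF]
  refine (hsw _ (integrable_aker_mul hα hMm hM)).symm.trans ?_
  -- the first kernel, with the power moved to the other endpoint
  set Φ : ℝ → ℝ → ℝ := fun w y => if y < w then (x - w) ^ (α - 1) else 0 with hΦ
  have hΦm : Measurable (Function.uncurry Φ) :=
    Measurable.ite (measurableSet_lt measurable_snd measurable_fst) (by fun_prop)
      measurable_const
  have hΦs : ∀ y ∈ Ioc 0 x, Integrable (fun w => max (Φ w y) 0) (lam x) ∧
      ∫ w, max (Φ w y) 0 ∂lam x = (x - y) ^ α / α := by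
    intro y hy
    have h := slice_fst hy.1.le (integrableOn_sub_right_rpow hy.2 hα')
    have hc : ∀ᵐ w ∂lam x, (if y < w then (x - w) ^ (α - 1) else 0) = max (Φ w y) 0 := by
      filter_upwards [ae_restrict_mem measurableSet_Ioc] with w hw
      rw [max_eq_left]
      simp only [hΦ]
      split_ifs
      · exact Real.rpow_nonneg (by linarith [hw.2]) _
      · exact le_rfl
    refine ⟨h.1.congr hc, ?_⟩
    rw [← integral_congr_ae hc, h.2, integral_sub_right_rpow hy.2 hα']
    simp
  have hΦi : Integrable (fun p : ℝ × ℝ => max (Φ p.1 p.2) 0 * M p.2) ((lam x).prod (lam x)) := by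
    refine integrable_kernel_snd (κ := fun w y => max (Φ w y) 0) (m := fun _ => x ^ α / α)
      (hΦm.max measurable_const) (fun _ _ => le_max_right _ _) ?_ hMm (hM.abs.mul_const _)
    filter_upwards [ae_restrict_mem measurableSet_Ioc] with y hy
    refine ⟨(hΦs y hy).1, (hΦs y hy).2.le.trans ?_⟩
    gcongr
    · linarith [hy.2]
    · linarith [hy.1]
  have e1 : ∫ y, ∫ w, aker α w y * M y ∂lam x ∂lam x
      = ∫ y, ∫ w, max (Φ w y) 0 * M y ∂lam x ∂lam x := by
    refine setIntegral_congr_fun measurableSet_Ioc fun y hy => ?_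
    rw [integral_mul_const, integral_mul_const, (hΦs y hy).2, (aker_slice_fst hα hy).2]
  -- the second kernel
  set Ψ : ℝ → ℝ → ℝ := fun w u => if u < w then |(x - w) ^ (α - 1) * (w - u) ^ (-α)| else 0
    with hΨ
  have hΨm : Measurable (Function.uncurry Ψ) :=
    Measurable.ite (measurableSet_lt measurable_snd measurable_fst)
      (Measurable.abs (by fun_prop)) measurable_const
  have hΨ0 : ∀ w u, 0 ≤ Ψ w u := by
    intro w u
    simp only [hΨ]
    split_ifs
    · exact abs_nonneg _
    · exact le_rfl
  have hΨs : ∀ u ∈ Ioo 0 x, Integrable (fun w => Ψ w u) (lam x) ∧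
      ∫ w, Ψ w u ∂lam x = betaConst α := by
    intro u hu
    have h := slice_fst hu.1.le (integrableOn_beta hα hα1 hu.2).abs
    refine ⟨h.1, h.2.trans ?_⟩
    rw [← integral_beta hu.2]
    refine setIntegral_congr_fun measurableSet_Ioc fun w hw => ?_
    exact abs_of_nonneg (mul_nonneg (Real.rpow_nonneg (by linarith [hw.2]) _)
      (Real.rpow_nonneg (by linarith [hw.1]) _))
  have hΨi : Integrable (fun p : ℝ × ℝ => Ψ p.1 p.2 * e p.2) ((lam x).prod (lam x)) := by
    refine integrable_kernel_snd (m := fun _ => betaConst α) hΨm hΨ0 ?_ hem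
      (he.abs.mul_const _)
    have hne : ∀ᵐ u ∂lam x, u ≠ x := Measure.ae_ne _ x
    filter_upwards [ae_restrict_mem measurableSet_Ioc, hne] with u hu hux
    have h := hΨs u ⟨hu.1, lt_of_le_of_ne hu.2 hux⟩
    exact ⟨h.1, h.2.le⟩
  have e2 : ∫ w, ∫ y, max (Φ w y) 0 * M y ∂lam x ∂lam x
      = ∫ w, ∫ u, Ψ w u * e u ∂lam x ∂lam x := by
    refine setIntegral_congr_fun measurableSet_Ioc fun w hw => ?_
    have hx0 : 0 ≤ (x - w) ^ (α - 1) := Real.rpow_nonneg (by linarith [hw.2]) _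
    have hMw : IntegrableOn M (Ioc 0 w) := IntegrableOn.mono_set hM (Ioc_subset_Ioc_right hw.2)
    have l1 : ∫ y, max (Φ w y) 0 * M y ∂lam x = (x - w) ^ (α - 1) * ∫ y, M y ∂lam w := by
      rw [← integral_const_mul]
      rw [← (slice_snd hw.2 (hMw.const_mul ((x - w) ^ (α - 1)))).2]
      congr 1
      ext y
      simp only [hΦ]
      split_ifs
      · rw [max_eq_left hx0]
      · simp
    have hew : ∫ u, Ψ w u * e u ∂lam x
        = (x - w) ^ (α - 1) * ∫ y, (w - y) ^ (-α) * e y ∂lam w := by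
      rw [← integral_const_mul, integral_Ioc_eq_integral_Ioo (x := 0) (y := w),
        ← Iio_inter_Ioc hw.2,
        ← Measure.restrict_restrict measurableSet_Iio, ← integral_indicator measurableSet_Iio]
      congr 1
      ext u
      simp only [hΨ, indicator, mem_Iio]
      split_ifs with h
      · rw [abs_of_nonneg (mul_nonneg hx0 (Real.rpow_nonneg (by linarith) _))]
        ring
      · simp
    rw [l1, hew, hMe w hw]
  simp only
  rw [e1, hsw _ hΦi, e2, ← hsw _ hΨi, ← integral_const_mul]
  refine integral_congr_ae ?_
  have hne : ∀ᵐ u ∂lam x, u ≠ x := Measure.ae_ne _ x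
  filter_upwards [ae_restrict_mem measurableSet_Ioc, hne] with u hu hux
  rw [integral_mul_const, (hΨs u ⟨hu.1, lt_of_le_of_ne hu.2 hux⟩).2]

theorem integral_mul_dual {α : ℝ} (hα : 0 < α) (hα1 : α < 1) {b B : ℝ} {M e : ℝ → ℝ}
    (hMm : Measurable M) (hM : Integrable M (lam b)) (hem : Measurable e)
    (hB : ∀ x ∈ Ioc 0 b, |e x| ≤ B)
    (hMe : ∀ w ∈ Ioc 0 b, ∫ y, M y ∂lam w = ∫ y, (w - y) ^ (-α) * e y ∂lam w) :
    ∫ y, M y * ∫ x, aker α x y * e x ∂lam b ∂lam b = betaConst α * ∫ x, e x ^ 2 ∂lam b := by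
  have he := integrable_of_bounded hem hB
  have hi := integrable_aker_mul hα hMm hM
  have hi' := integrable_prod_mul_fst hem hB hi
  have h1 : ∫ y, M y * ∫ x, aker α x y * e x ∂lam b ∂lam b
      = ∫ x, (∫ y, aker α x y * M y ∂lam b) * e x ∂lam b := by
    have h2 := (integral_prod_symm _ hi').symm.trans (integral_prod _ hi')
    simp only at h2
    simp_rw [integral_mul_const] at h2
    rw [← h2]
    congr 1
    ext y
    rw [← integral_const_mul]
    congr 1
    ext x
    ring
  have hJ : Integrable (fun x => ∫ y, aker α x y * M y ∂lam b) (lam b) := hi.integral_prod_left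
  have h0 : ∀ᵐ x ∂lam b, (∫ y, aker α x y * M y ∂lam b) - betaConst α * e x = 0 := by
    refine ae_eq_zero_of_forall_integral_eq_zero (hJ.sub (he.const_mul _)) fun x hx => ?_
    have hsub : Ioc 0 x ⊆ Ioc 0 b := Ioc_subset_Ioc_right hx.2
    have hex : Integrable e (lam x) := IntegrableOn.mono_set he hsub
    have hMx : Integrable M (lam x) := IntegrableOn.mono_set hM hsub
    have hJx : Integrable (fun w => ∫ y, aker α w y * M y ∂lam b) (lam x) :=
      IntegrableOn.mono_set hJ hsub
    have h4 := integral_abel hα hα1 hMm hMx hem hex fun w hw => hMe w ⟨hw.1, hw.2.trans hx.2⟩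
    have h5 : ∫ w, ∫ y, aker α w y * M y ∂lam b ∂lam x
        = ∫ w, ∫ y, aker α w y * M y ∂lam x ∂lam x := by
      refine setIntegral_congr_fun measurableSet_Ioc fun w hw => ?_
      refine (setIntegral_eq_of_subset_of_forall_sdiff_eq_zero measurableSet_Ioc hsub
        fun z hz => ?_).trans rfl
      have : ¬ z < w := fun h => hz.2 ⟨hz.1.1, by linarith [hw.2]⟩
      simp [aker, this]
    rw [integral_sub hJx (hex.const_mul _), integral_const_mul, h5, h4, sub_self]
  rw [h1, ← integral_const_mul]
  refine integral_congr_ae ?_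
  filter_upwards [h0] with x hx
  rw [sub_eq_zero.1 hx]
  ring

section

theorem measurable_marchaud {α b : ℝ} {e : ℝ → ℝ} (he : Measurable e) :
    Measurable (marchaud α b e) := by
  have h : Measurable (Function.uncurry fun x y => ker α x y * (e x - e y)) :=
    (measurable_ker α).mul ((he.comp measurable_fst).sub (he.comp measurable_snd))
  have h1 : Measurable fun x => ∫ y, ker α x y * (e x - e y) ∂lam b :=
    (h.stronglyMeasurable.integral_prod_right (ν := lam b)).measurable
  unfold marchaud
  exact ((measurable_id.pow_const _).mul he).add (h1.const_mul α)

/-! ### Meshes and cells -/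

/-- The (zero-based) index of the cell `(t k, t (k+1)]` containing `x`. -/
noncomputable def cellIdx (t : ℕ → ℝ) (n : ℕ) (x : ℝ) : ℕ :=
  ((Finset.range n).filter fun k => t (k + 1) < x).card

/-- Left endpoint of the cell of `x`. -/
noncomputable def cellL (t : ℕ → ℝ) (n : ℕ) (x : ℝ) : ℝ := t (cellIdx t n x)

/-- Right endpoint of the cell of `x`. -/
noncomputable def cellR (t : ℕ → ℝ) (n : ℕ) (x : ℝ) : ℝ := t (cellIdx t n x + 1)

variable {t : ℕ → ℝ} {n : ℕ}

theorem measurable_cellIdx (t : ℕ → ℝ) (n : ℕ) : Measurable (cellIdx t n) := by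
  have h : cellIdx t n = fun x => ∑ k ∈ Finset.range n, if t (k + 1) < x then 1 else 0 := by
    ext x
    rw [cellIdx, Finset.card_filter]
  rw [h]
  exact Finset.measurable_sum _ fun k _ =>
    Measurable.ite measurableSet_Ioi measurable_const measurable_const

theorem measurable_comp_cellIdx {β : Type*} [MeasurableSpace β] (F : ℕ → β) (t : ℕ → ℝ) (n : ℕ) :
    Measurable fun x => F (cellIdx t n x) :=
  (measurable_from_nat (f := F)).comp (measurable_cellIdx t n)

theorem measurable_cellL (t : ℕ → ℝ) (n : ℕ) : Measurable (cellL t n) :=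
  measurable_comp_cellIdx t t n

theorem measurable_cellR (t : ℕ → ℝ) (n : ℕ) : Measurable (cellR t n) :=
  measurable_comp_cellIdx (fun k => t (k + 1)) t n

theorem cellIdx_eq (ht : StrictMono t) {k : ℕ} (hk : k < n) {x : ℝ}
    (hx : x ∈ Ioc (t k) (t (k + 1))) : cellIdx t n x = k := by
  have : (Finset.range n).filter (fun j => t (j + 1) < x) = Finset.range k := by
    ext j
    simp only [Finset.mem_filter, Finset.mem_range]
    refine ⟨fun h => ?_, fun h => ⟨h.trans hk, ?_⟩⟩
    · have := ht.lt_iff_lt.1 (h.2.trans_le hx.2)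
      omega
    · exact (ht.monotone (by omega : j + 1 ≤ k)).trans_lt hx.1
  rw [cellIdx, this, Finset.card_range]

theorem exists_cell (h0 : t 0 = 0) {x : ℝ} (hx : x ∈ Ioc 0 (t n)) :
    ∃ k < n, x ∈ Ioc (t k) (t (k + 1)) := by
  classical
  have hex : ∃ k, x ≤ t k := ⟨n, hx.2⟩
  have hspec := Nat.find_spec hex
  have hle := Nat.find_min' hex hx.2
  obtain ⟨j, hj⟩ : ∃ j, Nat.find hex = j + 1 := by
    refine Nat.exists_eq_succ_of_ne_zero fun h => ?_
    rw [h, h0] at hspec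
    linarith [hx.1]
  have hmin := Nat.find_min hex (m := j) (by omega)
  rw [hj] at hspec hle
  exact ⟨j, by omega, lt_of_not_ge hmin, hspec⟩

theorem cellIdx_lt (ht : StrictMono t) (h0 : t 0 = 0) {x : ℝ} (hx : x ∈ Ioc 0 (t n)) :
    cellIdx t n x < n := by
  obtain ⟨k, hk, hxk⟩ := exists_cell h0 hx
  rwa [cellIdx_eq ht hk hxk]

theorem mem_cell (ht : StrictMono t) (h0 : t 0 = 0) {x : ℝ} (hx : x ∈ Ioc 0 (t n)) :
    x ∈ Ioc (cellL t n x) (cellR t n x) := by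
  obtain ⟨k, hk, hxk⟩ := exists_cell h0 hx
  rwa [cellL, cellR, cellIdx_eq ht hk hxk]

theorem cellL_nonneg (ht : StrictMono t) (h0 : t 0 = 0) (x : ℝ) : 0 ≤ cellL t n x := by
  rw [← h0]
  exact ht.monotone (Nat.zero_le _)

theorem cellR_le (ht : StrictMono t) (h0 : t 0 = 0) {x : ℝ} (hx : x ∈ Ioc 0 (t n)) :
    cellR t n x ≤ t n :=
  ht.monotone (cellIdx_lt ht h0 hx)

theorem le_cellL_iff (ht : StrictMono t) (h0 : t 0 = 0) {x y : ℝ} (hx : x ∈ Ioc 0 (t n))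
    (hy : y ∈ Ioc 0 (t n)) : y ≤ cellL t n x ↔ cellR t n y < x := by
  have hx' := mem_cell ht h0 hx
  have hy' := mem_cell ht h0 hy
  constructor
  · intro h
    have : cellIdx t n y < cellIdx t n x := ht.lt_iff_lt.1 (hy'.1.trans_le h)
    exact (ht.monotone (by omega : cellIdx t n y + 1 ≤ cellIdx t n x)).trans_lt hx'.1
  · intro h
    have : cellIdx t n y + 1 < cellIdx t n x + 1 := ht.lt_iff_lt.1 (h.trans_le hx'.2)
    exact hy'.2.trans (ht.monotone (by omega : cellIdx t n y + 1 ≤ cellIdx t n x))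

theorem cellIdx_eq_of_cellL_lt (ht : StrictMono t) (h0 : t 0 = 0) {x y : ℝ}
    (hx : x ∈ Ioc 0 (t n)) (h : cellL t n x < y) (hyx : y ≤ x) :
    cellIdx t n y = cellIdx t n x :=
  cellIdx_eq ht (cellIdx_lt ht h0 hx) ⟨h, hyx.trans (mem_cell ht h0 hx).2⟩

theorem ae_ne_cellR (ht : StrictMono t) (h0 : t 0 = 0) :
    ∀ᵐ x ∂lam (t n), x < cellR t n x := by
  have h : ∀ᵐ x ∂lam (t n), ∀ k, x ≠ t k := by
    rw [ae_all_iff]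
    exact fun k => Measure.ae_ne _ _
  filter_upwards [h, ae_restrict_mem measurableSet_Ioc] with x hx hxm
  exact lt_of_le_of_ne (mem_cell ht h0 hxm).2 (hx _)

theorem integrable_of_cells (ht : StrictMono t) (h0 : t 0 = 0) {f : ℝ → ℝ}
    (h : ∀ k < n, IntegrableOn f (Ioc (t k) (t (k + 1)))) : Integrable f (lam (t n)) := by
  have := IntervalIntegrable.trans_iterate (a := t) (n := n) (f := f) (μ := volume) fun k hk =>
    (intervalIntegrable_iff_integrableOn_Ioc_of_le (ht.monotone k.le_succ)).2 (h k hk)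
  rw [h0] at this
  exact (intervalIntegrable_iff_integrableOn_Ioc_of_le (by
    rw [← h0]; exact ht.monotone (Nat.zero_le n))).1 this

theorem cell_subset (ht : StrictMono t) (h0 : t 0 = 0) {k : ℕ} (hk : k < n) :
    Ioc (t k) (t (k + 1)) ⊆ Ioc 0 (t n) := by
  refine Ioc_subset_Ioc ?_ (ht.monotone hk)
  rw [← h0]
  exact ht.monotone (Nat.zero_le k)

theorem integral_eq_sum_cells (ht : StrictMono t) (h0 : t 0 = 0) {f : ℝ → ℝ}
    (hf : Integrable f (lam (t n))) :
    ∫ x, f x ∂lam (t n) = ∑ k ∈ Finset.range n, ∫ x in Ioc (t k) (t (k + 1)), f x := by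
  have h := intervalIntegral.sum_integral_adjacent_intervals (a := t) (n := n) (f := f)
    (μ := volume) fun k hk =>
      (intervalIntegrable_iff_integrableOn_Ioc_of_le (ht.monotone k.le_succ)).2
        (IntegrableOn.mono_set hf (cell_subset ht h0 hk))
  rw [h0, intervalIntegral.integral_of_le (by
    rw [← h0]; exact ht.monotone (Nat.zero_le n))] at h
  rw [← h]
  exact Finset.sum_congr rfl fun k _ => intervalIntegral.integral_of_le (ht.monotone k.le_succ)

theorem integral_cellL_rpow (ht : StrictMono t) (h0 : t 0 = 0) (F : ℕ → ℝ) {γ : ℝ}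
    (hγ : -1 < γ) :
    Integrable (fun x => F (cellIdx t n x) * (x - cellL t n x) ^ γ) (lam (t n)) ∧
      ∫ x, F (cellIdx t n x) * (x - cellL t n x) ^ γ ∂lam (t n)
        = ∑ k ∈ Finset.range n, F k * ((t (k + 1) - t k) ^ (γ + 1) / (γ + 1)) := by
  have hc : ∀ k < n, EqOn (fun x => F k * (x - t k) ^ γ)
      (fun x => F (cellIdx t n x) * (x - cellL t n x) ^ γ) (Ioc (t k) (t (k + 1))) := by
    intro k hk x hx
    simp only [cellL]
    rw [cellIdx_eq ht hk hx]
  have hi : Integrable (fun x => F (cellIdx t n x) * (x - cellL t n x) ^ γ) (lam (t n)) := by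
    refine integrable_of_cells ht h0 fun k hk => ?_
    exact IntegrableOn.congr_fun
      ((integrableOn_sub_left_rpow (ht.monotone k.le_succ) hγ).const_mul (F k))
      (hc k hk) measurableSet_Ioc
  refine ⟨hi, ?_⟩
  rw [integral_eq_sum_cells ht h0 hi]
  refine Finset.sum_congr rfl fun k hk => ?_
  rw [← setIntegral_congr_fun measurableSet_Ioc (hc k (Finset.mem_range.1 hk)),
    integral_const_mul, integral_sub_left_rpow (ht.monotone k.le_succ) hγ]

theorem integral_cellR_rpow (ht : StrictMono t) (h0 : t 0 = 0) (F : ℕ → ℝ) {γ : ℝ}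
    (hγ : -1 < γ) :
    Integrable (fun x => F (cellIdx t n x) * (cellR t n x - x) ^ γ) (lam (t n)) ∧
      ∫ x, F (cellIdx t n x) * (cellR t n x - x) ^ γ ∂lam (t n)
        = ∑ k ∈ Finset.range n, F k * ((t (k + 1) - t k) ^ (γ + 1) / (γ + 1)) := by
  have hc : ∀ k < n, EqOn (fun x => F k * (t (k + 1) - x) ^ γ)
      (fun x => F (cellIdx t n x) * (cellR t n x - x) ^ γ) (Ioc (t k) (t (k + 1))) := by
    intro k hk x hx
    simp only [cellR]
    rw [cellIdx_eq ht hk hx]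
  have hi : Integrable (fun x => F (cellIdx t n x) * (cellR t n x - x) ^ γ) (lam (t n)) := by
    refine integrable_of_cells ht h0 fun k hk => ?_
    exact IntegrableOn.congr_fun
      ((integrableOn_sub_right_rpow (ht.monotone k.le_succ) hγ).const_mul (F k))
      (hc k hk) measurableSet_Ioc
  refine ⟨hi, ?_⟩
  rw [integral_eq_sum_cells ht h0 hi]
  refine Finset.sum_congr rfl fun k hk => ?_
  rw [← setIntegral_congr_fun measurableSet_Ioc (hc k (Finset.mem_range.1 hk)),
    integral_const_mul, integral_sub_right_rpow (ht.monotone k.le_succ) hγ]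

end

section

variable {t : ℕ → ℝ} {n : ℕ} {α : ℝ}

/-- The part of the hypersingular kernel coupling different cells. -/
noncomputable def kerOff (t : ℕ → ℝ) (n : ℕ) (α x y : ℝ) : ℝ :=
  if y ≤ cellL t n x then ker α x y else 0

/-- The kernel `(x - y)^(-α)` restricted to pairs in the same cell. -/
noncomputable def kerIn (t : ℕ → ℝ) (n : ℕ) (α x y : ℝ) : ℝ :=
  if cellL t n x < y then aker (1 - α) x y else 0

theorem kerOff_nonneg (x y : ℝ) : 0 ≤ kerOff t n α x y := by
  unfold kerOff
  split_ifs
  · exact ker_nonneg _ _ _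
  · exact le_rfl

theorem kerOff_le_ker (x y : ℝ) : kerOff t n α x y ≤ ker α x y := by
  unfold kerOff
  split_ifs
  · exact le_rfl
  · exact ker_nonneg _ _ _

theorem kerIn_nonneg (x y : ℝ) : 0 ≤ kerIn t n α x y := by
  unfold kerIn
  split_ifs
  · exact aker_nonneg _ _ _
  · exact le_rfl

theorem measurable_kerOff (t : ℕ → ℝ) (n : ℕ) (α : ℝ) :
    Measurable (Function.uncurry (kerOff t n α)) :=
  Measurable.ite (measurableSet_le measurable_snd ((measurable_cellL t n).comp measurable_fst))
    (measurable_ker α) measurable_const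

theorem measurable_kerIn (t : ℕ → ℝ) (n : ℕ) (α : ℝ) :
    Measurable (Function.uncurry (kerIn t n α)) :=
  Measurable.ite (measurableSet_lt ((measurable_cellL t n).comp measurable_fst) measurable_snd)
    (measurable_aker (1 - α)) measurable_const

theorem ker_mul_sub (α x y : ℝ) : ker α x y * (x - y) = aker (1 - α) x y := by
  unfold ker aker
  split_ifs with h
  · have hxy : 0 < x - y := by linarith
    nth_rewrite 2 [← Real.rpow_one (x - y)]
    rw [← Real.rpow_add hxy]
    congr 1
    ring
  · simp

theorem integral_of_eqOn_indicator {b : ℝ} {s : Set ℝ} (hs : MeasurableSet s)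
    (hsb : s ⊆ Ioc 0 b) {f g : ℝ → ℝ} (hg : IntegrableOn g s)
    (hfg : ∀ y ∈ Ioc 0 b, f y = s.indicator g y) :
    Integrable f (lam b) ∧ ∫ y, f y ∂lam b = ∫ y in s, g y := by
  have hc : s.indicator g =ᵐ[lam b] f := by
    filter_upwards [ae_restrict_mem measurableSet_Ioc] with y hy using (hfg y hy).symm
  have hr : (lam b).restrict s = volume.restrict s := by
    rw [Measure.restrict_restrict hs, inter_eq_left.2 hsb]
  constructor
  · refine Integrable.congr ?_ hc
    rw [integrable_indicator_iff hs, IntegrableOn, hr]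
    exact hg
  · rw [← integral_congr_ae hc, integral_indicator hs, hr]

theorem ae_kerOff_fst (hα : 0 < α) (ht : StrictMono t) (h0 : t 0 = 0) :
    ∀ᵐ x ∂lam (t n), Integrable (kerOff t n α x) (lam (t n)) ∧
      ∫ y, kerOff t n α x y ∂lam (t n) ≤ (x - cellL t n x) ^ (-α) / α := by
  filter_upwards [ae_restrict_mem measurableSet_Ioc] with x hx
  have hx' := mem_cell ht h0 hx
  have hL := cellL_nonneg (n := n) ht h0 x
  have h := integral_of_eqOn_indicator (b := t n) (s := Ioc 0 (cellL t n x))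
    (f := kerOff t n α x) (g := fun y => (x - y) ^ (-1 - α)) measurableSet_Ioc
    (Ioc_subset_Ioc_right (hx'.1.le.trans hx.2)) (integrableOn_sub_rpow_of_lt hx'.1) (by
      intro y hy
      by_cases h : y ≤ cellL t n x
      · rw [indicator_of_mem (show y ∈ Ioc 0 (cellL t n x) from ⟨hy.1, h⟩), kerOff,
          if_pos h, ker, if_pos (h.trans_lt hx'.1)]
      · rw [indicator_of_notMem (fun h' => h h'.2), kerOff, if_neg h])
  refine ⟨h.1, h.2.le.trans ?_⟩
  rw [integral_sub_rpow_of_lt hL hx'.1 (by linarith)]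
  rw [show (-1 - α + 1) = -α by ring, sub_zero, div_neg, ← neg_div, neg_sub]
  gcongr
  have := Real.rpow_nonneg hx.1.le (-α)
  linarith

theorem ae_kerOff_snd (hα : 0 < α) (ht : StrictMono t) (h0 : t 0 = 0) :
    ∀ᵐ y ∂lam (t n), Integrable (fun x => kerOff t n α x y) (lam (t n)) ∧
      ∫ x, kerOff t n α x y ∂lam (t n) ≤ (cellR t n y - y) ^ (-α) / α := by
  filter_upwards [ae_restrict_mem measurableSet_Ioc, ae_ne_cellR ht h0] with y hy hyR
  have h := integral_of_eqOn_indicator (b := t n) (s := Ioc (cellR t n y) (t n))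
    (f := fun x => kerOff t n α x y) (g := fun x => (x - y) ^ (-1 - α)) measurableSet_Ioc
    (Ioc_subset_Ioc_left (hy.1.le.trans hyR.le)) (integrableOn_rpow_sub_of_lt hyR) (by
      intro x hx
      by_cases h : y ≤ cellL t n x
      · have h' := (le_cellL_iff ht h0 hx hy).1 h
        rw [indicator_of_mem (show x ∈ Ioc (cellR t n y) (t n) from ⟨h', hx.2⟩), kerOff,
          if_pos h, ker, if_pos (hyR.trans h')]
      · rw [indicator_of_notMem (fun h' => h ((le_cellL_iff ht h0 hx hy).2 h'.1)), kerOff,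
          if_neg h])
  refine ⟨h.1, h.2.le.trans ?_⟩
  rw [integral_rpow_sub_of_lt (cellR_le ht h0 hy) hyR (by linarith)]
  rw [show (-1 - α + 1) = -α by ring, div_neg, ← neg_div, neg_sub]
  gcongr
  have := Real.rpow_nonneg (by linarith [hy.2] : 0 ≤ t n - y) (-α)
  linarith

theorem ae_kerIn_fst (hα1 : α < 1) (ht : StrictMono t) (h0 : t 0 = 0) :
    ∀ᵐ x ∂lam (t n), Integrable (kerIn t n α x) (lam (t n)) ∧
      ∫ y, kerIn t n α x y ∂lam (t n) ≤ (x - cellL t n x) ^ (1 - α) / (1 - α) := by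
  filter_upwards [ae_restrict_mem measurableSet_Ioc] with x hx
  have hx' := mem_cell ht h0 hx
  have hL := cellL_nonneg (n := n) ht h0 x
  have h := integral_of_eqOn_indicator (b := t n) (s := Ioo (cellL t n x) x)
    (f := kerIn t n α x) (g := fun y => (x - y) ^ (-α)) measurableSet_Ioo
    (fun y hy => ⟨hL.trans_lt hy.1, hy.2.le.trans hx.2⟩)
    ((integrableOn_sub_right_rpow hx'.1.le (by linarith)).mono_set Ioo_subset_Ioc_self) (by
      intro y hy
      unfold kerIn aker
      by_cases h : cellL t n x < y
      · by_cases h' : y < x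
        · rw [indicator_of_mem (show y ∈ Ioo (cellL t n x) x from ⟨h, h'⟩), if_pos h, if_pos h']
          congr 1
          ring
        · rw [indicator_of_notMem (fun h'' => h' h''.2), if_pos h, if_neg h']
      · rw [indicator_of_notMem (fun h' => h h'.1), if_neg h])
  refine ⟨h.1, h.2.le.trans ?_⟩
  rw [← integral_Ioc_eq_integral_Ioo, integral_sub_right_rpow hx'.1.le (by linarith)]
  rw [show -α + 1 = 1 - α by ring]

/-- Splitting a bound for the hypersingular kernel into the coupling between cells and the
contribution of a single cell. -/
theorem ker_mul_le {x y F O Λ : ℝ} (hO : F ≤ O)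
    (hI : cellL t n x < y → y < x → F ≤ (x - y) * Λ) :
    ker α x y * F ≤ kerOff t n α x y * O + kerIn t n α x y * Λ := by
  by_cases h : y ≤ cellL t n x
  · rw [kerOff, kerIn, if_pos h, if_neg h.not_gt, zero_mul, add_zero]
    exact mul_le_mul_of_nonneg_left hO (ker_nonneg _ _ _)
  · rw [kerOff, kerIn, if_neg h, if_pos (lt_of_not_ge h), zero_mul, zero_add, ← ker_mul_sub,
      mul_assoc]
    by_cases hyx : y < x
    · exact mul_le_mul_of_nonneg_left (hI (lt_of_not_ge h) hyx) (ker_nonneg _ _ _)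
    · simp [ker, hyx]

/-- Bounded measurable functions with an in-cell increment bound. -/
structure CellRegular (t : ℕ → ℝ) (n : ℕ) (σ B Λ : ℝ) (f : ℝ → ℝ) : Prop where
  meas : Measurable f
  bdd : ∀ x ∈ Ioc 0 (t n), |f x| ≤ B
  incr : ∀ x ∈ Ioc 0 (t n), ∀ y, cellL t n x < y → y < x →
    |f x - f y| ≤ (x - y) * (Λ * (x - cellL t n x) ^ (σ - 1))

theorem CellRegular.sub {σ B B' Λ Λ' : ℝ} {f g : ℝ → ℝ} (hf : CellRegular t n σ B Λ f)
    (hg : CellRegular t n σ B' Λ' g) :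
    CellRegular t n σ (B + B') (Λ + Λ') (fun x => f x - g x) where
  meas := hf.meas.sub hg.meas
  bdd x hx := (abs_sub _ _).trans (add_le_add (hf.bdd x hx) (hg.bdd x hx))
  incr x hx y h1 h2 := by
    have e : f x - g x - (f y - g y) = (f x - f y) - (g x - g y) := by ring
    rw [e]
    refine (abs_sub _ _).trans ((add_le_add (hf.incr x hx y h1 h2)
      (hg.incr x hx y h1 h2)).trans (le_of_eq ?_))
    ring

theorem CellRegular.mul (h0 : t 0 = 0) (ht : StrictMono t) {σ B B' Λ Λ' : ℝ} {f g : ℝ → ℝ}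
    (hf : CellRegular t n σ B Λ f) (hg : CellRegular t n σ B' Λ' g) :
    CellRegular t n σ (B * B') (B * Λ' + B' * Λ) (fun x => f x * g x) where
  meas := hf.meas.mul hg.meas
  bdd x hx := by
    rw [abs_mul]
    exact mul_le_mul (hf.bdd x hx) (hg.bdd x hx) (abs_nonneg _)
      ((abs_nonneg _).trans (hf.bdd x hx))
  incr x hx y h1 h2 := by
    have hy : y ∈ Ioc 0 (t n) :=
      ⟨(cellL_nonneg ht h0 x).trans_lt h1, h2.le.trans hx.2⟩
    have e : f x * g x - f y * g y = f x * (g x - g y) + g y * (f x - f y) := by ring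
    rw [e]
    refine (abs_add_le _ _).trans ?_
    rw [abs_mul, abs_mul]
    have b1 := mul_le_mul (hf.bdd x hx) (hg.incr x hx y h1 h2) (abs_nonneg _)
      ((abs_nonneg _).trans (hf.bdd x hx))
    have b2 := mul_le_mul (hg.bdd y hy) (hf.incr x hx y h1 h2) (abs_nonneg _)
      ((abs_nonneg _).trans (hg.bdd y hy))
    refine (add_le_add b1 b2).trans (le_of_eq ?_)
    ring

theorem integrable_cellL_rpow (ht : StrictMono t) (h0 : t 0 = 0) (c : ℝ) {γ : ℝ}
    (hγ : -1 < γ) : Integrable (fun x => c * (x - cellL t n x) ^ γ) (lam (t n)) :=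
  (integral_cellL_rpow ht h0 (fun _ => c) hγ).1

theorem CellRegular.integrable_ker (hα : 0 < α) (hα1 : α < 1) (ht : StrictMono t)
    (h0 : t 0 = 0) {σ : ℝ} (hσ : 0 < σ) {B Λ : ℝ} (hΛ : 0 ≤ Λ)
    {f : ℝ → ℝ} (hf : CellRegular t n σ B Λ f) :
    Integrable (fun p : ℝ × ℝ => ker α p.1 p.2 * (f p.1 - f p.2))
      ((lam (t n)).prod (lam (t n))) := by
  have i1 : Integrable (fun p : ℝ × ℝ => kerOff t n α p.1 p.2 * (2 * B))
      ((lam (t n)).prod (lam (t n))) := by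
    refine integrable_kernel_fst (f := fun _ => 2 * B) (measurable_kerOff t n α) kerOff_nonneg
      (ae_kerOff_fst hα ht h0) measurable_const ?_
    have := integrable_cellL_rpow (n := n) ht h0 (|2 * B| / α) (by linarith : -1 < -α)
    refine this.congr (Eventually.of_forall fun x => ?_)
    ring
  have i2 : Integrable (fun p : ℝ × ℝ => kerIn t n α p.1 p.2 *
      (Λ * (p.1 - cellL t n p.1) ^ (σ - 1))) ((lam (t n)).prod (lam (t n))) := by
    refine integrable_kernel_fst (f := fun x => Λ * (x - cellL t n x) ^ (σ - 1))
      (measurable_kerIn t n α) kerIn_nonneg (ae_kerIn_fst hα1 ht h0)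
      (((measurable_id.sub (measurable_cellL t n)).pow_const _).const_mul _) ?_
    have := integrable_cellL_rpow (n := n) ht h0 (Λ / (1 - α)) (by linarith : -1 < σ - α)
    refine this.congr ?_
    filter_upwards [ae_restrict_mem measurableSet_Ioc] with x hx
    have hx' : 0 < x - cellL t n x := by linarith [(mem_cell ht h0 hx).1]
    have : 0 ≤ (x - cellL t n x) ^ (σ - 1) := Real.rpow_nonneg hx'.le _
    rw [abs_of_nonneg (by positivity), show σ - α = (σ - 1) + (1 - α) by ring,
      Real.rpow_add hx']
    ring
  refine (i1.add i2).mono' ?_ ?_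
  · exact ((measurable_ker α).mul ((hf.meas.comp measurable_fst).sub
      (hf.meas.comp measurable_snd))).aestronglyMeasurable
  · filter_upwards [ae_prod_mem (t n)] with p hp
    rw [Real.norm_eq_abs, abs_mul, abs_of_nonneg (ker_nonneg _ _ _)]
    refine ker_mul_le ?_ (hf.incr p.1 hp.1 p.2)
    refine (abs_sub _ _).trans ?_
    linarith [hf.bdd _ hp.1, hf.bdd _ hp.2]

end

/-! ### An inverse estimate for polynomials -/

theorem exists_coeff_lower_bound (p : ℕ) : ∃ m : ℝ, 0 < m ∧ ∀ c : Fin (p + 1) → ℝ,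
    m * ‖c‖ ^ 2 ≤ ∫ x in (1 / 2 : ℝ)..1, (∑ i, c i * x ^ (i : ℕ)) ^ 2 := by
  set Φ : (Fin (p + 1) → ℝ) → ℝ :=
    fun c => ∫ x in (1 / 2 : ℝ)..1, (∑ i, c i * x ^ (i : ℕ)) ^ 2 with hΦ
  have hcont : Continuous Φ := by
    refine intervalIntegral.continuous_parametric_intervalIntegral_of_continuous' ?_ _ _
    unfold Function.uncurry
    fun_prop
  have hpos : ∀ c ∈ Metric.sphere (0 : Fin (p + 1) → ℝ) 1, 0 < Φ c := by
    intro c hc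
    have hc0 : c ≠ 0 := by
      rintro rfl
      simp at hc
    obtain ⟨j, hj⟩ := Function.ne_iff.1 hc0
    set q : Polynomial ℝ := ∑ i : Fin (p + 1), Polynomial.monomial (i : ℕ) (c i) with hq
    have hqj : q.coeff j = c j := by
      simp [hq, Polynomial.finsetSum_coeff, Polynomial.coeff_monomial, Fin.val_inj]
    have hq0 : q ≠ 0 := by
      intro h
      rw [h, Polynomial.coeff_zero] at hqj
      exact hj hqj.symm
    have heval : ∀ x, q.eval x = ∑ i, c i * x ^ (i : ℕ) := by
      intro x
      simp [hq, Polynomial.eval_finsetSum]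
    obtain ⟨z, hz, hzq⟩ : ∃ z ∈ Icc (1 / 2 : ℝ) 1, q.eval z ≠ 0 := by
      by_contra! h
      exact hq0 (q.eq_zero_of_infinite_isRoot
        ((Icc_infinite (by norm_num)).mono fun z hz => h z hz))
    refine intervalIntegral.integral_pos (by norm_num) (by fun_prop)
      (fun _ _ => sq_nonneg _) ⟨z, hz, ?_⟩
    rw [← heval]
    positivity
  obtain ⟨c₀, hc₀, hmin⟩ := (isCompact_sphere (0 : Fin (p + 1) → ℝ) 1).exists_isMinOn
    (NormedSpace.sphere_nonempty.2 zero_le_one) hcont.continuousOn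
  refine ⟨Φ c₀, hpos _ hc₀, fun c => ?_⟩
  by_cases hc : c = 0
  · subst hc
    simp
  have hn : 0 < ‖c‖ := norm_pos_iff.2 hc
  have h1 : Φ c₀ ≤ Φ (‖c‖⁻¹ • c) := hmin (by simp [norm_smul, hn.ne'])
  have h2 : Φ (‖c‖⁻¹ • c) = (‖c‖⁻¹) ^ 2 * Φ c := by
    simp only [hΦ]
    rw [← intervalIntegral.integral_const_mul]
    congr 1
    ext x
    rw [← mul_pow, Finset.mul_sum]
    simp [mul_assoc]
  rw [h2] at h1
  calc Φ c₀ * ‖c‖ ^ 2 ≤ (‖c‖⁻¹ ^ 2 * Φ c) * ‖c‖ ^ 2 := by gcongr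
    _ = Φ c := by field_simp

theorem exists_inverse_estimate (p : ℕ) : ∃ K : ℝ, 0 < K ∧ ∀ q : Polynomial ℝ, q.degree ≤ p →
    ∀ a τ : ℝ, 0 < τ → ∃ L : ℝ, 0 ≤ L ∧
      (∀ x ∈ Icc a (a + τ), ∀ y ∈ Icc a (a + τ), |q.eval x - q.eval y| ≤ L * |x - y|) ∧
      ∀ c : ℝ, L ^ 2 * τ ^ 3 ≤ K * ∫ x in Ioc (a + τ / 2) (a + τ), (q.eval x - c) ^ 2 := by
  obtain ⟨m, hm, hm'⟩ := exists_coeff_lower_bound p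
  refine ⟨(((p : ℝ) + 1) * p) ^ 2 / m + 1, by positivity, fun q hq a τ hτ => ?_⟩
  set g : Polynomial ℝ := q.comp (Polynomial.C a + Polynomial.C τ * Polynomial.X) with hg
  have hgq : ∀ s, g.eval s = q.eval (a + τ * s) := by
    intro s
    simp [hg]
  have hdeg : g.natDegree < p + 1 := by
    have h1 : g.natDegree ≤ q.natDegree * 1 := by
      refine Polynomial.natDegree_comp_le.trans (Nat.mul_le_mul_left _ ?_)
      compute_degree
    have h2 := Polynomial.natDegree_le_of_degree_le hq
    omega
  have hsum : ∀ s, g.eval s = ∑ i : Fin (p + 1), g.coeff i * s ^ (i : ℕ) := by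
    intro s
    rw [Polynomial.eval_eq_sum_range' hdeg, Finset.sum_range]
  set L' : ℝ := ∑ i : Fin (p + 1), |g.coeff i| * (i : ℕ) with hL'
  have hL0 : 0 ≤ L' := Finset.sum_nonneg fun i _ => by positivity
  refine ⟨L' / τ, by positivity, ?_, ?_⟩
  · intro x hx y hy
    have hxs : q.eval x = g.eval ((x - a) / τ) := by
      rw [hgq]; congr 1; field_simp; ring
    have hys : q.eval y = g.eval ((y - a) / τ) := by
      rw [hgq]; congr 1; field_simp; ring
    have hu : |(x - a) / τ| ≤ 1 := by
      rw [abs_le]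
      constructor
      · have : 0 ≤ (x - a) / τ := div_nonneg (by linarith [hx.1]) hτ.le
        linarith
      · rw [div_le_one hτ]; linarith [hx.2]
    have hw : |(y - a) / τ| ≤ 1 := by
      rw [abs_le]
      constructor
      · have : 0 ≤ (y - a) / τ := div_nonneg (by linarith [hy.1]) hτ.le
        linarith
      · rw [div_le_one hτ]; linarith [hy.2]
    have hd : |(x - a) / τ - (y - a) / τ| = |x - y| / τ := by
      rw [← sub_div, abs_div, abs_of_pos hτ]
      congr 2
      ring
    rw [hxs, hys, hsum, hsum, ← Finset.sum_sub_distrib]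
    refine (Finset.abs_sum_le_sum_abs _ _).trans ?_
    rw [div_mul_eq_mul_div, mul_div_assoc, ← hd, hL', Finset.sum_mul]
    refine Finset.sum_le_sum fun i _ => ?_
    rw [← mul_sub, abs_mul, mul_assoc]
    refine mul_le_mul_of_nonneg_left ?_ (abs_nonneg _)
    refine (abs_pow_sub_pow_le _ _ _).trans ?_
    rw [mul_comm ((i : ℕ) : ℝ)]
    refine mul_le_of_le_one_right (by positivity) ?_
    exact pow_le_one₀ (by positivity) (max_le hu hw)
  · intro c
    set d : Fin (p + 1) → ℝ := fun i => (g - Polynomial.C c).coeff i with hd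
    have hdsum : ∀ s, g.eval s - c = ∑ i : Fin (p + 1), d i * s ^ (i : ℕ) := by
      intro s
      have hdeg' : (g - Polynomial.C c).natDegree < p + 1 := by
        rwa [Polynomial.natDegree_sub_C]
      rw [← Finset.sum_range (fun i => (g - Polynomial.C c).coeff i * s ^ i),
        ← Polynomial.eval_eq_sum_range' hdeg']
      simp
    have hLd : L' ≤ ((p : ℝ) + 1) * p * ‖d‖ := by
      have : ∀ i ∈ (Finset.univ : Finset (Fin (p + 1))), |g.coeff i| * (i : ℕ) ≤ p * ‖d‖ := by
        intro i _
        by_cases hi : (i : ℕ) = 0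
        · rw [hi]
          simp only [Nat.cast_zero, mul_zero]
          positivity
        · have h1 : |g.coeff i| ≤ ‖d‖ := by
            have h3 : d i = g.coeff i := by
              simp only [hd, Polynomial.coeff_sub, Polynomial.coeff_C, if_neg hi, sub_zero]
            rw [← h3]
            exact norm_le_pi_norm d i
          have h2 : ((i : ℕ) : ℝ) ≤ p := by
            have := i.2
            exact_mod_cast (by omega : (i : ℕ) ≤ p)
          rw [mul_comm]
          gcongr
      have := Finset.sum_le_sum this
      rw [Finset.sum_const, Finset.card_univ, Fintype.card_fin, nsmul_eq_mul] at this
      refine this.trans (le_of_eq ?_)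
      push_cast
      ring
    have hcov : ∫ x in Ioc (a + τ / 2) (a + τ), (q.eval x - c) ^ 2
        = τ * ∫ s in (1 / 2 : ℝ)..1, (∑ i : Fin (p + 1), d i * s ^ (i : ℕ)) ^ 2 := by
      have h := intervalIntegral.integral_comp_add_mul (a := (1 / 2 : ℝ)) (b := 1)
        (fun x => (q.eval x - c) ^ 2) hτ.ne' a
      rw [← intervalIntegral.integral_of_le (by linarith)]
      have e1 : (fun s => (∑ i : Fin (p + 1), d i * s ^ (i : ℕ)) ^ 2)
          = fun s => (q.eval (a + τ * s) - c) ^ 2 := by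
        ext s
        rw [← hdsum, hgq]
      rw [e1, h, smul_eq_mul, ← mul_assoc, mul_inv_cancel₀ hτ.ne', one_mul, mul_one]
      congr 1
      ring
    have hmd := hm' d
    rw [hcov]
    set I := ∫ s in (1 / 2 : ℝ)..1, (∑ i : Fin (p + 1), d i * s ^ (i : ℕ)) ^ 2 with hI
    have hI0 : 0 ≤ I := le_trans (by positivity) hmd
    have hL2 : L' ^ 2 ≤ (((p : ℝ) + 1) * p) ^ 2 / m * I := by
      calc L' ^ 2 ≤ (((p : ℝ) + 1) * p * ‖d‖) ^ 2 := by gcongr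
        _ = (((p : ℝ) + 1) * p) ^ 2 / m * (m * ‖d‖ ^ 2) := by field_simp
        _ ≤ _ := by gcongr
    have : (L' / τ) ^ 2 * τ ^ 3 = L' ^ 2 * τ := by field_simp
    rw [this]
    nlinarith [mul_nonneg hI0 hτ.le]

section

variable {t : ℕ → ℝ} {n : ℕ} {α : ℝ}

/-! ### The energy estimate -/

/-- The energy identity obtained by testing with `θ`. -/
theorem energy_identity (hα : 0 < α) (hα1 : α < 1) (ht : StrictMono t) (h0 : t 0 = 0)
    {σ : ℝ} (hσ : 0 < σ) {B B' Λ Λ' : ℝ} (hB : 0 ≤ B) (hB' : 0 ≤ B')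
    (hΛ : 0 ≤ Λ) (hΛ' : 0 ≤ Λ') {θ η : ℝ → ℝ} (hθ : CellRegular t n σ B Λ θ)
    (hη : CellRegular t n σ B' Λ' η)
    (horth : ∫ x, marchaud α (t n) (fun x => θ x - η x) x * θ x ∂lam (t n) = 0) :
    (∫ x, x ^ (-α) * θ x ^ 2 ∂lam (t n)) + (∫ x, (t n - x) ^ (-α) * θ x ^ 2 ∂lam (t n))
      + α * ∫ p : ℝ × ℝ, ker α p.1 p.2 * (θ p.1 - θ p.2) ^ 2 ∂((lam (t n)).prod (lam (t n)))
      = 2 * (∫ x, (t n - x) ^ (-α) * (η x * θ x) ∂lam (t n))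
        - 2 * α * ∫ p : ℝ × ℝ, ker α p.1 p.2 * (θ p.1 - θ p.2) * η p.2
            ∂((lam (t n)).prod (lam (t n))) := by
  have hθθ := hθ.mul h0 ht hθ
  have hηθ := hη.mul h0 ht hθ
  have he := hθ.sub hη
  have iθ := hθ.integrable_ker hα hα1 ht h0 hσ hΛ
  have iη := hη.integrable_ker hα hα1 ht h0 hσ hΛ'
  have ie := he.integrable_ker hα hα1 ht h0 hσ (by positivity)
  have iθθ := hθθ.integrable_ker hα hα1 ht h0 hσ (by positivity)
  have iηθ := hηθ.integrable_ker hα hα1 ht h0 hσ (by positivity)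
  have iθ1 := integrable_prod_mul_fst hθ.meas hθ.bdd iθ
  have iθ2 := integrable_prod_mul_snd hθ.meas hθ.bdd iθ
  have iη1 := integrable_prod_mul_fst hθ.meas hθ.bdd iη
  have iθη := integrable_prod_mul_snd hη.meas hη.bdd iθ
  have hm := integral_marchaud_mul hα1 he.meas he.bdd ie hθ.meas hθ.bdd
  rw [horth] at hm
  have ha := integrable_rpow_neg hα1 (t n)
  have hb := integrable_sub_rpow_neg hα1 (t n)
  have aθθ := integrable_bdd_mul hθθ.meas hθθ.bdd ha
  have aηθ := integrable_bdd_mul hηθ.meas hηθ.bdd ha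
  have bθθ := integrable_bdd_mul hθθ.meas hθθ.bdd hb
  have bηθ := integrable_bdd_mul hηθ.meas hηθ.bdd hb
  have m1 : ∫ x, x ^ (-α) * (θ x - η x) * θ x ∂lam (t n)
      = (∫ x, x ^ (-α) * (θ x * θ x) ∂lam (t n)) - ∫ x, x ^ (-α) * (η x * θ x) ∂lam (t n) := by
    rw [← integral_sub aθθ aηθ]
    congr 1
    ext x
    ring
  have m2 : ∫ p : ℝ × ℝ, ker α p.1 p.2 * (θ p.1 - η p.1 - (θ p.2 - η p.2)) * θ p.1
        ∂((lam (t n)).prod (lam (t n)))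
      = (∫ p : ℝ × ℝ, ker α p.1 p.2 * (θ p.1 - θ p.2) * θ p.1 ∂((lam (t n)).prod (lam (t n))))
        - ∫ p : ℝ × ℝ, ker α p.1 p.2 * (η p.1 - η p.2) * θ p.1
          ∂((lam (t n)).prod (lam (t n))) := by
    rw [← integral_sub iθ1 iη1]
    congr 1
    ext p
    ring
  have m3 : ∫ p : ℝ × ℝ, ker α p.1 p.2 * (θ p.1 - θ p.2) ^ 2 ∂((lam (t n)).prod (lam (t n)))
      = 2 * (∫ p : ℝ × ℝ, ker α p.1 p.2 * (θ p.1 - θ p.2) * θ p.1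
          ∂((lam (t n)).prod (lam (t n))))
        - ∫ p : ℝ × ℝ, ker α p.1 p.2 * (θ p.1 * θ p.1 - θ p.2 * θ p.2)
          ∂((lam (t n)).prod (lam (t n))) := by
    rw [← integral_const_mul, ← integral_sub (iθ1.const_mul 2) iθθ]
    congr 1
    ext p
    ring
  have m4 : ∫ p : ℝ × ℝ, ker α p.1 p.2 * (η p.1 - η p.2) * θ p.1 ∂((lam (t n)).prod (lam (t n)))
      = (∫ p : ℝ × ℝ, ker α p.1 p.2 * (η p.1 * θ p.1 - η p.2 * θ p.2)
          ∂((lam (t n)).prod (lam (t n))))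
        - ∫ p : ℝ × ℝ, ker α p.1 p.2 * (θ p.1 - θ p.2) * η p.2
          ∂((lam (t n)).prod (lam (t n))) := by
    rw [← integral_sub iηθ iθη]
    congr 1
    ext p
    ring
  have tele : ∀ g : ℝ → ℝ, Integrable (fun x => x ^ (-α) * g x) (lam (t n)) →
      Integrable (fun x => (t n - x) ^ (-α) * g x) (lam (t n)) →
      ∫ x, g x * ((t n - x) ^ (-α) - x ^ (-α)) ∂lam (t n)
        = (∫ x, (t n - x) ^ (-α) * g x ∂lam (t n)) - ∫ x, x ^ (-α) * g x ∂lam (t n) := by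
    intro g ga gb
    rw [← integral_sub gb ga]
    congr 1
    ext x
    ring
  have t1 := integral_ker_mul_sub hα hα1 hθθ.meas hθθ.bdd iθθ
  have t2 := integral_ker_mul_sub hα hα1 hηθ.meas hηθ.bdd iηθ
  rw [tele _ aθθ bθθ, eq_div_iff hα.ne'] at t1
  rw [tele _ aηθ bηθ, eq_div_iff hα.ne'] at t2
  simp only [← pow_two] at *
  rw [m1, m2, m4] at hm
  rw [m3]
  linarith

/-- Piecewise polynomial with piece `Q k` on the cell of index `k`. -/
noncomputable def pwPoly (t : ℕ → ℝ) (n : ℕ) (Q : ℕ → Polynomial ℝ) (x : ℝ) : ℝ :=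
  (Q (cellIdx t n x)).eval x

theorem measurable_pwPoly (t : ℕ → ℝ) (n : ℕ) (Q : ℕ → Polynomial ℝ) :
    Measurable (pwPoly t n Q) := by
  have h : Measurable fun q : ℕ × ℝ => (Q q.1).eval q.2 :=
    measurable_from_prod_countable_right fun k => (Q k).continuous.measurable
  exact h.comp ((measurable_cellIdx t n).prodMk measurable_id)

/-- Cellwise Lipschitz constants for a piecewise polynomial. -/
def CellLipschitz (t : ℕ → ℝ) (n : ℕ) (L : ℕ → ℝ) (f : ℝ → ℝ) : Prop :=
  ∀ x ∈ Ioc 0 (t n), ∀ y, cellL t n x < y → y < x → |f x - f y| ≤ (x - y) * L (cellIdx t n x)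

theorem exists_cellLipschitz (p : ℕ) : ∃ K : ℝ, 0 < K ∧ ∀ (α : ℝ) (t : ℕ → ℝ) (n : ℕ)
    (Q : ℕ → Polynomial ℝ), 0 < α → StrictMono t → t 0 = 0 → (∀ k, (Q k).degree ≤ p) →
    ∃ L : ℕ → ℝ, (∀ k, 0 ≤ L k) ∧ CellLipschitz t n L (pwPoly t n Q) ∧
      (Integrable (fun q : ℝ × ℝ => ker α q.1 q.2 * (pwPoly t n Q q.1 - pwPoly t n Q q.2) ^ 2)
        ((lam (t n)).prod (lam (t n))) →
      ∑ k ∈ Finset.range n, L k ^ 2 * (t (k + 1) - t k) ^ (3 - α) ≤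
        K * ∫ q : ℝ × ℝ, ker α q.1 q.2 * (pwPoly t n Q q.1 - pwPoly t n Q q.2) ^ 2
          ∂((lam (t n)).prod (lam (t n)))) := by
  obtain ⟨K, hK, hinv⟩ := exists_inverse_estimate p
  refine ⟨2 * K, by positivity, fun α t n Q hα ht h0 hQ => ?_⟩
  have hτ : ∀ k, 0 < t (k + 1) - t k := fun k => sub_pos.2 (ht k.lt_succ_self)
  choose L hL0 hLip hLK using fun k => hinv (Q k) (hQ k) (t k) (t (k + 1) - t k) (hτ k)
  refine ⟨L, hL0, ?_, fun hi => ?_⟩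
  · intro x hx y h1 h2
    have hm := mem_cell ht h0 hx
    rw [pwPoly, pwPoly, cellIdx_eq_of_cellL_lt ht h0 hx h1 h2.le]
    have e : t (cellIdx t n x) + (t (cellIdx t n x + 1) - t (cellIdx t n x))
      = cellR t n x := by rw [cellR]; ring
    have := hLip (cellIdx t n x) x (by rw [e]; exact ⟨hm.1.le, hm.2⟩) y
      (by rw [e]; exact ⟨h1.le, h2.le.trans hm.2⟩)
    rwa [abs_of_pos (sub_pos.2 h2), mul_comm] at this
  · set θ := pwPoly t n Q with hθ
    rw [integral_prod_symm _ hi, integral_eq_sum_cells ht h0 hi.integral_prod_right,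
      Finset.mul_sum]
    refine Finset.sum_le_sum fun k hk => ?_
    have hkn := Finset.mem_range.1 hk
    set τ := t (k + 1) - t k with hτk
    have hτ0 : 0 < τ := hτ k
    set G : ℝ → ℝ := fun y => ∫ x, ker α x y * (θ x - θ y) ^ 2 ∂lam (t n) with hG
    have hGi : IntegrableOn G (Ioc (t k) (t (k + 1))) :=
      IntegrableOn.mono_set hi.integral_prod_right (cell_subset ht h0 hkn)
    have hG0 : ∀ y, 0 ≤ G y := fun y =>
      integral_nonneg fun x => mul_nonneg (ker_nonneg _ _ _) (sq_nonneg _)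
    have hs2 : Ioc (t k + τ / 2) (t k + τ) ⊆ Ioc (t k) (t (k + 1)) :=
      Ioc_subset_Ioc (by linarith) (by linarith)
    have hs1 : Ioc (t k) (t k + τ / 2) ⊆ Ioc (t k) (t (k + 1)) :=
      Ioc_subset_Ioc_right (by linarith)
    have key : ∀ᵐ y ∂(volume.restrict (Ioc (t k) (t k + τ / 2))),
        τ ^ (-1 - α) * (L k ^ 2 * τ ^ 3 / K) ≤ G y := by
      have h1 := hi.prod_left_ae
      have h2 := ae_restrict_of_ae_restrict_of_subset
        (hs1.trans (cell_subset ht h0 hkn)) h1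
      filter_upwards [h2, ae_restrict_mem measurableSet_Ioc] with y hy hym
      have h3 : ∫ x in Ioc (t k + τ / 2) (t k + τ), ker α x y * (θ x - θ y) ^ 2 ≤ G y := by
        refine setIntegral_mono_set hy (Eventually.of_forall fun x =>
          mul_nonneg (ker_nonneg _ _ _) (sq_nonneg _)) ?_
        exact (hs2.trans (cell_subset ht h0 hkn)).eventuallyLE
      refine le_trans ?_ h3
      have h4 : ∫ x in Ioc (t k + τ / 2) (t k + τ), τ ^ (-1 - α) * ((Q k).eval x - θ y) ^ 2
          ≤ ∫ x in Ioc (t k + τ / 2) (t k + τ), ker α x y * (θ x - θ y) ^ 2 := by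
        refine setIntegral_mono_on ?_ (IntegrableOn.mono_set (t := Ioc 0 (t n)) hy
          (hs2.trans (cell_subset ht h0 hkn))) measurableSet_Ioc fun x hx => ?_
        · exact Continuous.integrableOn_Ioc (by fun_prop)
        · have hyx : y < x := hym.2.trans_lt hx.1
          have hxk : θ x = (Q k).eval x := by rw [hθ, pwPoly, cellIdx_eq ht hkn (hs2 hx)]
          rw [hxk, ker, if_pos hyx]
          refine mul_le_mul_of_nonneg_right ?_ (sq_nonneg _)
          exact Real.rpow_le_rpow_of_nonpos (sub_pos.2 hyx) (by linarith [hx.2, hym.1])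
            (by linarith)
      refine le_trans ?_ h4
      rw [integral_const_mul]
      gcongr
      rw [div_le_iff₀' hK]
      exact hLK k (θ y)
    have h5 : ∫ y in Ioc (t k) (t k + τ / 2), G y ≤ ∫ y in Ioc (t k) (t (k + 1)), G y :=
      setIntegral_mono_set hGi (Eventually.of_forall hG0) hs1.eventuallyLE
    have h6 : ∫ y in Ioc (t k) (t k + τ / 2), τ ^ (-1 - α) * (L k ^ 2 * τ ^ 3 / K)
        ≤ ∫ y in Ioc (t k) (t k + τ / 2), G y :=
      integral_mono_ae (integrable_const _) (hGi.mono_set hs1) key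
    rw [setIntegral_const, smul_eq_mul, Measure.real, Real.volume_Ioc,
      ENNReal.toReal_ofReal (by linarith)] at h6
    have h7 : τ ^ (3 - α) = τ * τ ^ (-1 - α) * τ ^ 3 := by
      rw [← Real.rpow_natCast, ← Real.rpow_one_add' hτ0.le (by linarith), ← Real.rpow_add hτ0]
      congr 1
      push_cast
      ring
    calc L k ^ 2 * τ ^ (3 - α)
        = 2 * K * ((t k + τ / 2 - t k) * (τ ^ (-1 - α) * (L k ^ 2 * τ ^ 3 / K))) := by
          rw [h7]; field_simp; ring
      _ ≤ 2 * K * ∫ y in Ioc (t k) (t (k + 1)), G y := by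
          gcongr
          exact h6.trans h5

end

section

variable {t : ℕ → ℝ} {n : ℕ} {α σ : ℝ}

/-- A function of size `ε k` on the cell of index `k`, with a weighted increment bound of the
corresponding scale. -/
structure CellSmall (t : ℕ → ℝ) (n : ℕ) (σ : ℝ) (ε : ℕ → ℝ) (η : ℝ → ℝ) : Prop where
  meas : Measurable η
  nonneg : ∀ k, 0 ≤ ε k
  bdd : ∀ x ∈ Ioc 0 (t n), |η x| ≤ ε (cellIdx t n x)
  incr : ∀ x ∈ Ioc 0 (t n), ∀ y, cellL t n x < y → y < x →
    |η x - η y| ≤ (x - y) * (ε (cellIdx t n x) *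
      (cellR t n x - cellL t n x) ^ (-σ) * (x - cellL t n x) ^ (σ - 1))

/-- The weighted sum of squares controlling the error. -/
noncomputable def cellSum (t : ℕ → ℝ) (n : ℕ) (α : ℝ) (ε : ℕ → ℝ) : ℝ :=
  ∑ k ∈ Finset.range n, ε k ^ 2 * (t (k + 1) - t k) ^ (1 - α)

theorem cellSum_nonneg (ht : StrictMono t) (ε : ℕ → ℝ) : 0 ≤ cellSum t n α ε :=
  Finset.sum_nonneg fun k _ => mul_nonneg (sq_nonneg _)
    (Real.rpow_nonneg (sub_nonneg.2 (ht.monotone k.le_succ)) _)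

theorem le_sum_cells (ht : StrictMono t) (h0 : t 0 = 0) {F : ℕ → ℝ} (hF : ∀ k, 0 ≤ F k)
    {x : ℝ} (hx : x ∈ Ioc 0 (t n)) : F (cellIdx t n x) ≤ ∑ k ∈ Finset.range n, F k :=
  Finset.single_le_sum (f := F) (fun k _ => hF k) (Finset.mem_range.2 (cellIdx_lt ht h0 hx))

theorem CellSmall.cellRegular (ht : StrictMono t) (h0 : t 0 = 0) {ε : ℕ → ℝ} {η : ℝ → ℝ}
    (hη : CellSmall t n σ ε η) : ∃ B Λ : ℝ, 0 ≤ B ∧ 0 ≤ Λ ∧ CellRegular t n σ B Λ η := by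
  have hF : ∀ k, 0 ≤ ε k * (t (k + 1) - t k) ^ (-σ) := fun k =>
    mul_nonneg (hη.nonneg k) (Real.rpow_nonneg (sub_nonneg.2 (ht.monotone k.le_succ)) _)
  refine ⟨∑ k ∈ Finset.range n, ε k, ∑ k ∈ Finset.range n, ε k * (t (k + 1) - t k) ^ (-σ),
    Finset.sum_nonneg fun k _ => hη.nonneg k, Finset.sum_nonneg fun k _ => hF k, hη.meas,
    fun x hx => (hη.bdd x hx).trans (le_sum_cells ht h0 hη.nonneg hx), fun x hx y h1 h2 => ?_⟩
  refine (hη.incr x hx y h1 h2).trans (mul_le_mul_of_nonneg_left ?_ (sub_pos.2 h2).le)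
  exact mul_le_mul_of_nonneg_right (le_sum_cells ht h0 hF hx)
    (Real.rpow_nonneg (by linarith) _)

theorem cellRegular_pwPoly (hσ1 : σ < 1) (ht : StrictMono t) (h0 : t 0 = 0)
    {Q : ℕ → Polynomial ℝ} {L : ℕ → ℝ} (hL0 : ∀ k, 0 ≤ L k)
    (hL : CellLipschitz t n L (pwPoly t n Q)) :
    ∃ B Λ : ℝ, 0 ≤ B ∧ 0 ≤ Λ ∧ CellRegular t n σ B Λ (pwPoly t n Q) := by
  have hτ : ∀ k, 0 ≤ t (k + 1) - t k := fun k => sub_nonneg.2 (ht.monotone k.le_succ)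
  have hB : ∀ k, ∃ B, 0 ≤ B ∧ ∀ x ∈ Icc (t k) (t (k + 1)), |(Q k).eval x| ≤ B := by
    intro k
    obtain ⟨B, hB⟩ := (isCompact_Icc (a := t k) (b := t (k + 1))).exists_bound_of_continuousOn
      (f := fun x => (Q k).eval x) (by fun_prop)
    exact ⟨|B|, abs_nonneg _, fun x hx => (hB x hx).trans (le_abs_self _)⟩
  choose B hB0 hB using hB
  have hF : ∀ k, 0 ≤ L k * (t (k + 1) - t k) ^ (1 - σ) := fun k =>
    mul_nonneg (hL0 k) (Real.rpow_nonneg (hτ k) _)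
  refine ⟨∑ k ∈ Finset.range n, B k, ∑ k ∈ Finset.range n, L k * (t (k + 1) - t k) ^ (1 - σ),
    Finset.sum_nonneg fun k _ => hB0 k, Finset.sum_nonneg fun k _ => hF k,
    measurable_pwPoly t n Q, fun x hx => ?_, fun x hx y h1 h2 => ?_⟩
  · have hm := mem_cell ht h0 hx
    exact (hB _ x ⟨hm.1.le, hm.2⟩).trans (le_sum_cells ht h0 hB0 hx)
  · have hm := mem_cell ht h0 hx
    have hw : 0 < x - cellL t n x := by linarith
    refine (hL x hx y h1 h2).trans (mul_le_mul_of_nonneg_left ?_ (sub_pos.2 h2).le)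
    refine le_trans ?_ (mul_le_mul_of_nonneg_right (le_sum_cells ht h0 hF hx)
      (Real.rpow_nonneg hw.le _))
    rw [mul_assoc]
    refine le_mul_of_one_le_right (hL0 _) ?_
    calc (1 : ℝ) = (x - cellL t n x) ^ (1 - σ) * (x - cellL t n x) ^ (σ - 1) := by
          rw [← Real.rpow_add hw]; simp
      _ ≤ _ := by
          refine mul_le_mul_of_nonneg_right ?_ (Real.rpow_nonneg hw.le _)
          refine Real.rpow_le_rpow hw.le ?_ (by linarith)
          exact sub_le_sub_right hm.2 _

theorem CellSmall.sq_le {ε : ℕ → ℝ} {η : ℝ → ℝ} (hη : CellSmall t n σ ε η) {x : ℝ}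
    (hx : x ∈ Ioc 0 (t n)) : η x ^ 2 ≤ ε (cellIdx t n x) ^ 2 := by
  rw [← sq_abs]
  exact pow_le_pow_left₀ (abs_nonneg _) (hη.bdd x hx) 2

theorem integral_mul_sq_le_cellSum (hα1 : α < 1) (ht : StrictMono t) (h0 : t 0 = 0)
    {ε : ℕ → ℝ} {η w : ℝ → ℝ} (hη : CellSmall t n σ ε η) (hw : Measurable w)
    (hw0 : ∀ᵐ x ∂lam (t n), 0 ≤ w x)
    (hwe : (∀ᵐ x ∂lam (t n), w x ≤ (x - cellL t n x) ^ (-α)) ∨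
      ∀ᵐ x ∂lam (t n), w x ≤ (cellR t n x - x) ^ (-α)) :
    Integrable (fun x => w x * η x ^ 2) (lam (t n)) ∧
      ∫ x, w x * η x ^ 2 ∂lam (t n) ≤ cellSum t n α ε / (1 - α) := by
  obtain ⟨W, hWw, hWi, hWe⟩ : ∃ W : ℝ → ℝ, (∀ᵐ x ∂lam (t n), w x ≤ W x) ∧
      Integrable (fun x => ε (cellIdx t n x) ^ 2 * W x) (lam (t n)) ∧
      ∫ x, ε (cellIdx t n x) ^ 2 * W x ∂lam (t n)
        = ∑ k ∈ Finset.range n, ε k ^ 2 * ((t (k + 1) - t k) ^ (-α + 1) / (-α + 1)) := by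
    rcases hwe with h | h
    · exact ⟨_, h, integral_cellL_rpow ht h0 (fun k => ε k ^ 2) (by linarith)⟩
    · exact ⟨_, h, integral_cellR_rpow ht h0 (fun k => ε k ^ 2) (by linarith)⟩
  have hle : ∀ᵐ x ∂lam (t n), w x * η x ^ 2 ≤ ε (cellIdx t n x) ^ 2 * W x := by
    filter_upwards [hw0, hWw, ae_restrict_mem measurableSet_Ioc] with x h1 h2 hx
    rw [mul_comm]
    exact mul_le_mul (hη.sq_le hx) h2 h1 (sq_nonneg _)
  have hi : Integrable (fun x => w x * η x ^ 2) (lam (t n)) := by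
    refine hWi.mono' (hw.mul (hη.meas.pow_const 2)).aestronglyMeasurable ?_
    filter_upwards [hle, hw0] with x h1 h2
    rwa [Real.norm_eq_abs, abs_of_nonneg (by positivity)]
  refine ⟨hi, (integral_mono_ae hi hWi hle).trans (le_of_eq ?_)⟩
  rw [hWe, cellSum, Finset.sum_div]
  refine Finset.sum_congr rfl fun k _ => ?_
  rw [show -α + 1 = 1 - α by ring, mul_div_assoc]

theorem ae_sub_rpow_le (hα : 0 < α) (ht : StrictMono t) (h0 : t 0 = 0) :
    ∀ᵐ x ∂lam (t n), (t n - x) ^ (-α) ≤ (cellR t n x - x) ^ (-α) := by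
  filter_upwards [ae_ne_cellR ht h0, ae_restrict_mem measurableSet_Ioc] with x h1 hx
  exact Real.rpow_le_rpow_of_nonpos (sub_pos.2 h1)
    (sub_le_sub_right (cellR_le ht h0 hx) _) (by linarith)

theorem ae_rpow_le (hα : 0 < α) (ht : StrictMono t) (h0 : t 0 = 0) :
    ∀ᵐ x ∂lam (t n), x ^ (-α) ≤ (x - cellL t n x) ^ (-α) := by
  filter_upwards [ae_restrict_mem measurableSet_Ioc] with x hx
  exact Real.rpow_le_rpow_of_nonpos (sub_pos.2 (mem_cell ht h0 hx).1)
    (sub_le_self _ (cellL_nonneg ht h0 x)) (by linarith)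

theorem integral_kerOff_sq_snd_le (hα : 0 < α) (hα1 : α < 1) (ht : StrictMono t) (h0 : t 0 = 0)
    {ε : ℕ → ℝ} {η : ℝ → ℝ} (hη : CellSmall t n σ ε η) :
    Integrable (fun p : ℝ × ℝ => kerOff t n α p.1 p.2 * η p.2 ^ 2)
      ((lam (t n)).prod (lam (t n))) ∧
    ∫ p : ℝ × ℝ, kerOff t n α p.1 p.2 * η p.2 ^ 2 ∂((lam (t n)).prod (lam (t n)))
      ≤ cellSum t n α ε / (1 - α) / α := by
  have h1 := integral_mul_sq_le_cellSum (w := fun x => (cellR t n x - x) ^ (-α)) hα1 ht h0 hη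
    (((measurable_cellR t n).sub measurable_id).pow_const _) (by
      filter_upwards [ae_ne_cellR ht h0] with x hx using Real.rpow_nonneg (by linarith) _)
    (Or.inr (Eventually.of_forall fun x => le_rfl))
  have e : (fun y => η y ^ 2 * ((cellR t n y - y) ^ (-α) / α))
      = fun y => (cellR t n y - y) ^ (-α) * η y ^ 2 / α := by
    ext y; ring
  have h2 := integral_kernel_snd_le (f := fun y => η y ^ 2) (measurable_kerOff t n α)
    kerOff_nonneg (ae_kerOff_snd hα ht h0) (hη.meas.pow_const 2) (fun _ => sq_nonneg _)
    (by rw [e]; exact h1.1.div_const α)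
  refine ⟨h2.1, h2.2.trans ?_⟩
  rw [e, integral_div]
  gcongr
  exact h1.2

theorem integral_kerOff_sq_fst_le (hα : 0 < α) (hα1 : α < 1) (ht : StrictMono t) (h0 : t 0 = 0)
    {ε : ℕ → ℝ} {η : ℝ → ℝ} (hη : CellSmall t n σ ε η) :
    Integrable (fun p : ℝ × ℝ => kerOff t n α p.1 p.2 * η p.1 ^ 2)
      ((lam (t n)).prod (lam (t n))) ∧
    ∫ p : ℝ × ℝ, kerOff t n α p.1 p.2 * η p.1 ^ 2 ∂((lam (t n)).prod (lam (t n)))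
      ≤ cellSum t n α ε / (1 - α) / α := by
  have h1 := integral_mul_sq_le_cellSum (w := fun x => (x - cellL t n x) ^ (-α)) hα1 ht h0 hη
    ((measurable_id.sub (measurable_cellL t n)).pow_const _) (by
      filter_upwards [ae_restrict_mem measurableSet_Ioc] with x hx using
        Real.rpow_nonneg (sub_pos.2 (mem_cell ht h0 hx).1).le _)
    (Or.inl (Eventually.of_forall fun x => le_rfl))
  have e : (fun y => η y ^ 2 * ((y - cellL t n y) ^ (-α) / α))
      = fun y => (y - cellL t n y) ^ (-α) * η y ^ 2 / α := by
    ext y; ring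
  have h2 := integral_kernel_fst_le (f := fun y => η y ^ 2) (measurable_kerOff t n α)
    kerOff_nonneg (ae_kerOff_fst hα ht h0) (hη.meas.pow_const 2) (fun _ => sq_nonneg _)
    (by rw [e]; exact h1.1.div_const α)
  refine ⟨h2.1, h2.2.trans ?_⟩
  rw [e, integral_div]
  gcongr
  exact h1.2

theorem integral_kerIn_cell_le (hα1 : α < 1) (ht : StrictMono t) (h0 : t 0 = 0)
    {F : ℕ → ℝ} (hF : ∀ k, 0 ≤ F k) :
    Integrable (fun p : ℝ × ℝ => kerIn t n α p.1 p.2 * F (cellIdx t n p.1))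
      ((lam (t n)).prod (lam (t n))) ∧
    ∫ p : ℝ × ℝ, kerIn t n α p.1 p.2 * F (cellIdx t n p.1) ∂((lam (t n)).prod (lam (t n)))
      ≤ (∑ k ∈ Finset.range n, F k * (t (k + 1) - t k) ^ (2 - α)) / (1 - α) := by
  have h1 := integral_cellL_rpow (n := n) ht h0 F (by linarith : -1 < 1 - α)
  have e : (fun x => F (cellIdx t n x) * ((x - cellL t n x) ^ (1 - α) / (1 - α)))
      = fun x => F (cellIdx t n x) * (x - cellL t n x) ^ (1 - α) / (1 - α) := by
    ext y; ring
  have h2 := integral_kernel_fst_le (f := fun x => F (cellIdx t n x)) (measurable_kerIn t n α)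
    kerIn_nonneg (ae_kerIn_fst hα1 ht h0) (measurable_comp_cellIdx F t n) (fun _ => hF _)
    (by rw [e]; exact h1.1.div_const _)
  refine ⟨h2.1, h2.2.trans ?_⟩
  have hα' : 0 < 1 - α := by linarith
  rw [e, integral_div, h1.2]
  gcongr with k hk
  · exact hF k
  · rw [show 1 - α + 1 = 2 - α by ring]
    exact div_le_self (Real.rpow_nonneg (sub_nonneg.2 (ht.monotone k.le_succ)) _) (by linarith)

end

section

variable {t : ℕ → ℝ} {n : ℕ} {α σ : ℝ}

theorem integral_le_add_add {X : Type*} [MeasurableSpace X] {μ : Measure X} {F f g h : X → ℝ}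
    (hF : Integrable F μ) (hf : Integrable f μ) (hg : Integrable g μ) (hh : Integrable h μ)
    (hle : ∀ᵐ x ∂μ, F x ≤ f x + g x + h x) :
    ∫ x, F x ∂μ ≤ (∫ x, f x ∂μ) + (∫ x, g x ∂μ) + ∫ x, h x ∂μ := by
  have hfg : Integrable (fun x => f x + g x) μ := hf.add hg
  rw [← integral_add hf hg, ← integral_add hfg hh]
  exact integral_mono_ae hF (hfg.add hh) hle

theorem CellRegular.integrable_ker_sq (hα : 0 < α) (hα1 : α < 1) (ht : StrictMono t)
    (h0 : t 0 = 0) (hσ : 0 < σ) {B Λ : ℝ} (hΛ : 0 ≤ Λ) {f : ℝ → ℝ}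
    (hf : CellRegular t n σ B Λ f) :
    Integrable (fun p : ℝ × ℝ => ker α p.1 p.2 * (f p.1 - f p.2) ^ 2)
      ((lam (t n)).prod (lam (t n))) := by
  have i := hf.integrable_ker hα hα1 ht h0 hσ hΛ
  have h : Integrable (fun p : ℝ × ℝ => ker α p.1 p.2 * (f p.1 - f p.2) * f p.1
      - ker α p.1 p.2 * (f p.1 - f p.2) * f p.2) ((lam (t n)).prod (lam (t n))) :=
    (integrable_prod_mul_fst hf.meas hf.bdd i).sub (integrable_prod_mul_snd hf.meas hf.bdd i)
  refine h.congr (Eventually.of_forall fun p => ?_)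
  ring

theorem exists_energy_bound (hα : 0 < α) (hα1 : α < 1) (hσ : 0 < σ) (hσ1 : σ < 1) (p : ℕ) :
    ∃ C : ℝ, 0 < C ∧ ∀ (t : ℕ → ℝ) (n : ℕ) (Q : ℕ → Polynomial ℝ) (ε : ℕ → ℝ) (η : ℝ → ℝ),
      StrictMono t → t 0 = 0 → (∀ k, (Q k).degree ≤ p) → CellSmall t n σ ε η →
      ∫ x, marchaud α (t n) (fun x => pwPoly t n Q x - η x) x * pwPoly t n Q x ∂lam (t n) = 0 →
      ∃ L : ℕ → ℝ, (∀ k, 0 ≤ L k) ∧ CellLipschitz t n L (pwPoly t n Q) ∧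
        ∫ x, x ^ (-α) * pwPoly t n Q x ^ 2 ∂lam (t n) ≤ C * cellSum t n α ε ∧
        ∫ q : ℝ × ℝ, ker α q.1 q.2 * (pwPoly t n Q q.1 - pwPoly t n Q q.2) ^ 2
          ∂((lam (t n)).prod (lam (t n))) ≤ C * cellSum t n α ε ∧
        ∑ k ∈ Finset.range n, L k ^ 2 * (t (k + 1) - t k) ^ (3 - α) ≤ C * cellSum t n α ε := by
  obtain ⟨K, hK, hLip⟩ := exists_cellLipschitz p
  have hα' : 0 < 1 - α := by linarith
  set δ : ℝ := (1 - α) / (8 * K) with hδ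
  have hδ0 : 0 < δ := by positivity
  set C₁ : ℝ := 3 / (1 - α) + α / (2 * δ * (1 - α)) with hC₁
  have hC₁0 : 0 < C₁ := by positivity
  refine ⟨C₁ * (1 + 4 / α + K * (4 / α)), by positivity,
    fun t n Q ε η ht h0 hQ hη horth => ?_⟩
  obtain ⟨L, hL0, hL, hLsum⟩ := hLip α t n Q hα ht h0 hQ
  obtain ⟨B, Λ, hB, hΛ, hθ⟩ := cellRegular_pwPoly hσ1 ht h0 hL0 hL
  obtain ⟨B', Λ', hB', hΛ', hη'⟩ := hη.cellRegular ht h0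
  have hid := energy_identity hα hα1 ht h0 hσ hB hB' hΛ hΛ' hθ hη' horth
  have hG := hθ.integrable_ker_sq hα hα1 ht h0 hσ hΛ
  have hLs := hLsum hG
  have iθ := hθ.integrable_ker hα hα1 ht h0 hσ hΛ
  have iH := integrable_prod_mul_snd hη.meas hη'.bdd iθ
  set θ := pwPoly t n Q with hθd
  set S := cellSum t n α ε with hS
  have hS0 : 0 ≤ S := cellSum_nonneg ht ε
  set G := ∫ q : ℝ × ℝ, ker α q.1 q.2 * (θ q.1 - θ q.2) ^ 2 ∂((lam (t n)).prod (lam (t n)))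
    with hGd
  set I₁ := ∫ x, x ^ (-α) * θ x ^ 2 ∂lam (t n) with hI₁
  set J₁ := ∫ x, (t n - x) ^ (-α) * θ x ^ 2 ∂lam (t n) with hJ₁
  have hI₁0 : 0 ≤ I₁ := setIntegral_nonneg measurableSet_Ioc fun x hx =>
    mul_nonneg (Real.rpow_nonneg hx.1.le _) (sq_nonneg _)
  have hG0 : 0 ≤ G := integral_nonneg fun q => mul_nonneg (ker_nonneg _ _ _) (sq_nonneg _)
  -- boundary term
  have hJ2 := integral_mul_sq_le_cellSum (w := fun x => (t n - x) ^ (-α)) hα1 ht h0 hη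
    (by fun_prop) (by
      filter_upwards [ae_restrict_mem measurableSet_Ioc] with x hx using
        Real.rpow_nonneg (sub_nonneg.2 hx.2) _) (Or.inr (ae_sub_rpow_le hα ht h0))
  have hb := integrable_sub_rpow_neg hα1 (t n)
  have hJ1i : Integrable (fun x => (t n - x) ^ (-α) * θ x ^ 2) (lam (t n)) := by
    have h := hθ.mul h0 ht hθ
    simpa only [← pow_two] using integrable_bdd_mul h.meas h.bdd hb
  have hηθ := hη'.mul h0 ht hθ
  have hJ' : 2 * (∫ x, (t n - x) ^ (-α) * (η x * θ x) ∂lam (t n)) ≤ J₁ + S / (1 - α) := by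
    refine le_trans ?_ (add_le_add_right hJ2.2 J₁)
    rw [hJ₁, ← integral_const_mul, ← integral_add hJ1i hJ2.1]
    refine setIntegral_mono_on ((integrable_bdd_mul hηθ.meas hηθ.bdd hb).const_mul 2)
      (hJ1i.add hJ2.1) measurableSet_Ioc fun x hx => ?_
    have := Real.rpow_nonneg (sub_nonneg.2 hx.2) (-α)
    nlinarith [mul_nonneg this (sq_nonneg (η x - θ x))]
  -- interior term
  have hoff := integral_kerOff_sq_snd_le hα hα1 ht h0 hη
  have hin := integral_kerIn_cell_le (n := n) (F := fun k => L k * ε k) hα1 ht h0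
    fun k => mul_nonneg (hL0 k) (hη.nonneg k)
  have hH : -(∫ q : ℝ × ℝ, ker α q.1 q.2 * (θ q.1 - θ q.2) * η q.2
        ∂((lam (t n)).prod (lam (t n)))) ≤ S / (1 - α) / α
      + (∑ k ∈ Finset.range n, L k * ε k * (t (k + 1) - t k) ^ (2 - α)) / (1 - α)
      + 1 / 4 * G := by
    refine le_trans ?_ (add_le_add_left (add_le_add hoff.2 hin.2) _)
    rw [hGd, ← integral_const_mul, ← integral_neg]
    refine integral_le_add_add iH.neg hoff.1 hin.1 (hG.const_mul _) ?_
    filter_upwards [ae_prod_mem (t n)] with q hq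
    have := ker_mul_le (t := t) (n := n) (α := α) (x := q.1) (y := q.2)
      (F := -((θ q.1 - θ q.2) * η q.2) - 1 / 4 * (θ q.1 - θ q.2) ^ 2) (O := η q.2 ^ 2)
      (Λ := L (cellIdx t n q.1) * ε (cellIdx t n q.1))
      (by nlinarith [sq_nonneg ((θ q.1 - θ q.2) + 2 * η q.2)]) (by
        intro h1 h2
        have a1 := hL q.1 hq.1 q.2 h1 h2
        have a2 := hη.bdd q.2 hq.2
        rw [cellIdx_eq_of_cellL_lt ht h0 hq.1 h1 h2.le] at a2
        have a3 : -((θ q.1 - θ q.2) * η q.2) ≤ |θ q.1 - θ q.2| * |η q.2| := by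
          rw [← abs_mul]; exact neg_le_abs _
        have a4 := mul_le_mul a1 a2 (abs_nonneg _)
          (mul_nonneg (sub_pos.2 h2).le (hL0 _))
        have a5 := a3.trans a4
        rw [mul_assoc] at a5
        linarith [sq_nonneg (θ q.1 - θ q.2)])
    linarith
  have hLε : ∑ k ∈ Finset.range n, L k * ε k * (t (k + 1) - t k) ^ (2 - α)
      ≤ δ * (K * G) + S / (4 * δ) := by
    refine le_trans ?_ (add_le_add_left (mul_le_mul_of_nonneg_left hLs hδ0.le) _)
    rw [hS, cellSum, Finset.mul_sum, Finset.sum_div, ← Finset.sum_add_distrib]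
    refine Finset.sum_le_sum fun k _ => ?_
    have hτ : 0 < t (k + 1) - t k := sub_pos.2 (ht k.lt_succ_self)
    set τ := t (k + 1) - t k
    have e1 : τ ^ (2 - α) = τ * τ ^ (1 - α) := by
      rw [← Real.rpow_one_add' hτ.le (by linarith)]; congr 1; ring
    have e2 : τ ^ (3 - α) = τ ^ 2 * τ ^ (1 - α) := by
      rw [← Real.rpow_natCast, ← Real.rpow_add hτ]; congr 1; push_cast; ring
    rw [e1, e2]
    have h1 : L k * ε k * τ ≤ δ * (L k ^ 2 * τ ^ 2) + ε k ^ 2 / (4 * δ) := by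
      have : δ * (L k ^ 2 * τ ^ 2) + ε k ^ 2 / (4 * δ) - L k * ε k * τ
          = (2 * δ * (L k * τ) - ε k) ^ 2 / (4 * δ) := by
        field_simp
        ring
      have h' : 0 ≤ (2 * δ * (L k * τ) - ε k) ^ 2 / (4 * δ) := by positivity
      linarith
    have := mul_le_mul_of_nonneg_right h1 (Real.rpow_nonneg hτ.le (1 - α))
    refine le_trans (le_of_eq ?_) (this.trans (le_of_eq ?_)) <;> ring
  have hfin : I₁ + α / 4 * G ≤ C₁ * S := by
    have h1 : 2 * α * -(∫ q : ℝ × ℝ, ker α q.1 q.2 * (θ q.1 - θ q.2) * η q.2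
        ∂((lam (t n)).prod (lam (t n)))) ≤ 2 * α * (S / (1 - α) / α
        + (δ * (K * G) + S / (4 * δ)) / (1 - α) + 1 / 4 * G) := by
      refine mul_le_mul_of_nonneg_left (hH.trans ?_) (by positivity)
      gcongr
    have h2 : 2 * α * (S / (1 - α) / α + (δ * (K * G) + S / (4 * δ)) / (1 - α) + 1 / 4 * G)
        = (2 / (1 - α) + α / (2 * δ * (1 - α))) * S + 2 * α * (δ * K / (1 - α)) * G
          + α / 2 * G := by
      field_simp
      ring
    have h3 : δ * K / (1 - α) = 1 / 8 := by
      rw [hδ]; field_simp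
    rw [h3] at h2
    have h4 : C₁ * S = S / (1 - α) + (2 / (1 - α) + α / (2 * δ * (1 - α))) * S := by
      rw [hC₁]; ring
    linarith
  have hGS : G ≤ 4 / α * (C₁ * S) := by
    have : α / 4 * G ≤ C₁ * S := by linarith
    calc G = 4 / α * (α / 4 * G) := by field_simp
      _ ≤ _ := by gcongr
  have hCS : 0 ≤ C₁ * S := by positivity
  have hCα : 0 ≤ 4 / α * (C₁ * S) := by positivity
  have hexp : C₁ * (1 + 4 / α + K * (4 / α)) * S
      = C₁ * S + 4 / α * (C₁ * S) + K * (4 / α * (C₁ * S)) := by ring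
  have hKG : K * G ≤ K * (4 / α * (C₁ * S)) := by gcongr
  have hKn : 0 ≤ K * (4 / α * (C₁ * S)) := by positivity
  have hαG : 0 ≤ α / 4 * G := by positivity
  rw [hexp]
  exact ⟨L, hL0, hL, by linarith, by linarith, by linarith⟩

end

section

variable {t : ℕ → ℝ} {n : ℕ} {α : ℝ}

/-! ### The remainder of the dual function -/

/-- The kernel `(x - L)^(α-1)` for `x` to the right of the cell `(L, R]` of `y`. -/
noncomputable def coarseKer (t : ℕ → ℝ) (n : ℕ) (α x y : ℝ) : ℝ :=
  if cellR t n y < x then (x - cellL t n y) ^ (α - 1) else 0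

/-- The Abel kernel minus its piecewise constant approximation. -/
noncomputable def dualKer (t : ℕ → ℝ) (n : ℕ) (α x y : ℝ) : ℝ :=
  max (aker α x y - coarseKer t n α x y) 0

theorem measurable_coarseKer (t : ℕ → ℝ) (n : ℕ) (α : ℝ) :
    Measurable (Function.uncurry (coarseKer t n α)) :=
  Measurable.ite (measurableSet_lt ((measurable_cellR t n).comp measurable_snd) measurable_fst)
    ((measurable_fst.sub ((measurable_cellL t n).comp measurable_snd)).pow_const _)
    measurable_const

theorem measurable_dualKer (t : ℕ → ℝ) (n : ℕ) (α : ℝ) :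
    Measurable (Function.uncurry (dualKer t n α)) :=
  ((measurable_aker α).sub (measurable_coarseKer t n α)).max measurable_const

theorem dualKer_nonneg (x y : ℝ) : 0 ≤ dualKer t n α x y := le_max_right _ _

theorem dualKer_eq (hα1 : α < 1) (ht : StrictMono t) (h0 : t 0 = 0) (x : ℝ) {y : ℝ}
    (hy : y ∈ Ioc 0 (t n)) : dualKer t n α x y = aker α x y - coarseKer t n α x y := by
  refine max_eq_left (sub_nonneg.2 ?_)
  have hm := mem_cell ht h0 hy
  unfold coarseKer aker
  split_ifs with h1 h2 h2
  · exact Real.rpow_le_rpow_of_nonpos (by linarith) (by linarith [hm.1]) (by linarith)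
  · exact absurd (hm.2.trans_lt h1) h2
  · exact Real.rpow_nonneg (by linarith) _
  · exact le_rfl

theorem coarseKer_nonneg (ht : StrictMono t) (h0 : t 0 = 0) (x : ℝ) {y : ℝ}
    (hy : y ∈ Ioc 0 (t n)) : 0 ≤ coarseKer t n α x y := by
  have hm := mem_cell ht h0 hy
  unfold coarseKer
  split_ifs
  · exact Real.rpow_nonneg (by linarith [hm.1, hm.2]) _
  · exact le_rfl

theorem coarseKer_slice (hα : 0 < α) (ht : StrictMono t) (h0 : t 0 = 0) {y : ℝ}
    (hy : y ∈ Ioc 0 (t n)) :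
    Integrable (fun x => coarseKer t n α x y) (lam (t n)) ∧
      ∫ x, coarseKer t n α x y ∂lam (t n)
        = ((t n - cellL t n y) ^ α - (cellR t n y - cellL t n y) ^ α) / α := by
  have hm := mem_cell ht h0 hy
  have hLR : cellL t n y < cellR t n y := hm.1.trans_le hm.2
  have h := slice_fst (b := t n) (y := cellR t n y)
    ((cellL_nonneg ht h0 y).trans hLR.le)
    (integrableOn_rpow_sub_of_lt (γ := α - 1) hLR)
  refine ⟨h.1, h.2.trans ?_⟩
  rw [integral_rpow_sub_of_lt (cellR_le ht h0 hy) hLR (by linarith), sub_add_cancel]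

theorem dualKer_slice (hα : 0 < α) (hα1 : α < 1) (ht : StrictMono t) (h0 : t 0 = 0) {h : ℝ}
    (hh : ∀ k < n, t (k + 1) - t k ≤ h) {y : ℝ} (hy : y ∈ Ioc 0 (t n)) :
    Integrable (fun x => dualKer t n α x y) (lam (t n)) ∧
      ∫ x, dualKer t n α x y ∂lam (t n) ≤ h ^ α / α := by
  have h1 := aker_slice_fst hα hy
  have h2 := coarseKer_slice hα ht h0 hy
  have hm := mem_cell ht h0 hy
  have hR := cellR_le ht h0 hy
  have e : (fun x => dualKer t n α x y) = fun x => aker α x y - coarseKer t n α x y := by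
    ext x
    exact dualKer_eq hα1 ht h0 x hy
  rw [e]
  refine ⟨h1.1.sub h2.1, ?_⟩
  rw [integral_sub h1.1 h2.1, h1.2, h2.2, ← sub_div]
  gcongr
  have a1 : (t n - y) ^ α ≤ (t n - cellL t n y) ^ α :=
    Real.rpow_le_rpow (by linarith [hy.2]) (by linarith [hm.1]) hα.le
  have a2 : (cellR t n y - cellL t n y) ^ α ≤ h ^ α :=
    Real.rpow_le_rpow (by linarith [hm.1, hm.2]) (hh _ (cellIdx_lt ht h0 hy)) hα.le
  linarith

theorem integral_aker_cell_le (hα : 0 < α) (hα1 : α < 1) {a b x : ℝ} (hax : a < x) :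
    IntegrableOn (fun y => aker α x y * (y - a) ^ (-α)) (Ioc a b) ∧
      ∫ y in Ioc a b, aker α x y * (y - a) ^ (-α) ≤ betaConst α := by
  have e : (fun y => aker α x y * (y - a) ^ (-α))
      = (Iio x).indicator fun y => (x - y) ^ (α - 1) * (y - a) ^ (-α) := by
    ext y
    simp [aker, indicator]
  have hs : Iio x ∩ Ioc a b ⊆ Ioc a x := fun y hy => ⟨hy.2.1, hy.1.le⟩
  have hi := integrableOn_beta hα hα1 hax
  rw [e, integral_indicator measurableSet_Iio, IntegrableOn,
    integrable_indicator_iff measurableSet_Iio, IntegrableOn,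
    Measure.restrict_restrict measurableSet_Iio]
  refine ⟨hi.mono_set hs, ?_⟩
  rw [← integral_beta hax]
  refine setIntegral_mono_set hi ?_ hs.eventuallyLE
  filter_upwards [ae_restrict_mem measurableSet_Ioc] with y hy
  exact mul_nonneg (Real.rpow_nonneg (by linarith [hy.2]) _)
    (Real.rpow_nonneg (by linarith [hy.1]) _)

theorem rpow_sub_rpow_le (hα : 0 < α) {a b : ℝ} (ha : 0 < a) (hab : a ≤ b) :
    a ^ (α - 1) - b ^ (α - 1) ≤ a ^ (α - 2) * (b - a) := by
  have hb : 0 < b := ha.trans_le hab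
  have h1 : a / b ≤ (a / b) ^ (1 - α) := by
    conv_lhs => rw [← Real.rpow_one (a / b)]
    exact Real.rpow_le_rpow_of_exponent_ge (by positivity) ((div_le_one hb).2 hab)
      (by linarith)
  have h2 : b ^ (α - 1) = a ^ (α - 1) * (a / b) ^ (1 - α) := by
    rw [Real.div_rpow ha.le hb.le, ← mul_div_assoc, ← Real.rpow_add ha, eq_div_iff
      (by positivity), ← Real.rpow_add hb]
    simp
  have h3 : a ^ (α - 1) = a ^ (α - 2) * a := by
    rw [← Real.rpow_add_one ha.ne']
    congr 1
    ring
  have h4 : 0 < a ^ (α - 2) := by positivity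
  calc a ^ (α - 1) - b ^ (α - 1) = a ^ (α - 1) * (1 - (a / b) ^ (1 - α)) := by rw [h2]; ring
    _ ≤ a ^ (α - 1) * (1 - a / b) := by gcongr
    _ = a ^ (α - 2) * (a / b) * (b - a) := by rw [h3]; field_simp
    _ ≤ a ^ (α - 2) * 1 * (b - a) := by
        have : a / b ≤ 1 := (div_le_one hb).2 hab
        have : 0 ≤ b - a := by linarith
        gcongr
    _ = _ := by ring

/-- Bound for the contribution of a cell at distance `i` to the weighted mass of `dualKer`. -/
noncomputable def dualCellBound (α : ℝ) (i : ℕ) : ℝ :=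
  (if i ≤ 1 then betaConst α else 0) + ((i - 1 : ℕ) : ℝ) ^ (α - 2) / (1 - α)

theorem summable_dualCellBound (hα1 : α < 1) : Summable (dualCellBound α) := by
  refine Summable.add ?_ (Summable.div_const ?_ _)
  · refine summable_of_ne_finset_zero (s := Finset.range 2) fun i hi => if_neg ?_
    have := Finset.mem_range.not.1 hi
    omega
  · rw [← summable_nat_add_iff 1]
    simpa using Real.summable_nat_rpow.2 (by linarith : α - 2 < -1)

theorem dualCellBound_nonneg (hα : 0 < α) (hα1 : α < 1) (i : ℕ) : 0 ≤ dualCellBound α i := by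
  have := one_le_betaConst hα hα1
  have h2 : 0 < 1 - α := by linarith
  unfold dualCellBound
  split_ifs <;> positivity

theorem sub_le_of_step_mono (hstep : Monotone fun k => t (k + 1) - t k) {k : ℕ} (m : ℕ) :
    (m : ℝ) * (t (k + 1) - t k) ≤ t (k + 1 + m) - t (k + 1) := by
  induction m with
  | zero => simp
  | succ m ih =>
    have := hstep (by omega : k ≤ k + 1 + m)
    simp only at this
    push_cast
    rw [← add_assoc]
    linarith

theorem dualKer_cell_le (hα : 0 < α) (hα1 : α < 1) (ht : StrictMono t) (h0 : t 0 = 0)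
    (hstep : Monotone fun k => t (k + 1) - t k) {x : ℝ} (hx : x ∈ Ioc 0 (t n)) {k : ℕ}
    (hk : k < n) :
    IntegrableOn (fun y => dualKer t n α x y * |y - cellL t n y| ^ (-α))
        (Ioc (t k) (t (k + 1))) ∧
      ∫ y in Ioc (t k) (t (k + 1)), dualKer t n α x y * |y - cellL t n y| ^ (-α)
        ≤ if k ≤ cellIdx t n x then dualCellBound α (cellIdx t n x - k) else 0 := by
  set j := cellIdx t n x with hj
  have hxm := mem_cell ht h0 hx
  rw [cellL, cellR, ← hj] at hxm
  have hβ := one_le_betaConst hα hα1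
  have hα' : 0 < 1 - α := by linarith
  have hmeas : Measurable fun y => dualKer t n α x y * |y - cellL t n y| ^ (-α) :=
    ((measurable_dualKer t n α).comp (measurable_const.prodMk measurable_id)).mul
      ((measurable_id.sub (measurable_cellL t n)).abs.pow_const _)
  have hw : ∀ y ∈ Ioc (t k) (t (k + 1)), |y - cellL t n y| = y - t k := fun y hy => by
    rw [cellL, cellIdx_eq ht hk hy, abs_of_pos (sub_pos.2 hy.1)]
  have hR : ∀ y ∈ Ioc (t k) (t (k + 1)), cellR t n y = t (k + 1) := fun y hy => by
    rw [cellR, cellIdx_eq ht hk hy]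
  have hL : ∀ y ∈ Ioc (t k) (t (k + 1)), cellL t n y = t k := fun y hy => by
    rw [cellL, cellIdx_eq ht hk hy]
  split_ifs with hkj
  · have hax : t k < x := (ht.monotone hkj).trans_lt hxm.1
    have hbeta := integral_aker_cell_le (b := t (k + 1)) hα hα1 hax
    have hle : ∀ y ∈ Ioc (t k) (t (k + 1)), dualKer t n α x y * |y - cellL t n y| ^ (-α)
        ≤ aker α x y * (y - t k) ^ (-α) := by
      intro y hy
      rw [hw y hy]
      refine mul_le_mul_of_nonneg_right ?_ (Real.rpow_nonneg (sub_pos.2 hy.1).le _)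
      rw [dualKer_eq hα1 ht h0 x (cell_subset ht h0 hk hy)]
      exact sub_le_self _ (coarseKer_nonneg ht h0 x (cell_subset ht h0 hk hy))
    have hi : IntegrableOn (fun y => dualKer t n α x y * |y - cellL t n y| ^ (-α))
        (Ioc (t k) (t (k + 1))) := by
      refine Integrable.mono' hbeta.1 hmeas.aestronglyMeasurable ?_
      filter_upwards [ae_restrict_mem measurableSet_Ioc] with y hy
      rw [Real.norm_eq_abs, abs_of_nonneg (mul_nonneg (dualKer_nonneg _ _)
        (Real.rpow_nonneg (abs_nonneg _) _))]
      exact hle y hy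
    refine ⟨hi, ?_⟩
    by_cases hd : j - k ≤ 1
    · rw [dualCellBound, if_pos hd]
      refine ((setIntegral_mono_on hi hbeta.1 measurableSet_Ioc hle).trans hbeta.2).trans ?_
      have : 0 ≤ ((j - k - 1 : ℕ) : ℝ) ^ (α - 2) / (1 - α) := by positivity
      linarith
    · rw [dualCellBound, if_neg hd, zero_add]
      obtain ⟨m, hm⟩ : ∃ m, j = k + 1 + (m + 1) := ⟨j - k - 2, by omega⟩
      have e1 : j - k - 1 = m + 1 := by omega
      rw [e1]
      set τ := t (k + 1) - t k with hτ
      have hτ0 : 0 < τ := sub_pos.2 (ht k.lt_succ_self)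
      have hgap : ((m + 1 : ℕ) : ℝ) * τ ≤ x - t (k + 1) := by
        have := sub_le_of_step_mono hstep (k := k) (m + 1)
        rw [← hm] at this
        linarith [hxm.1]
      have hgap0 : 0 < ((m + 1 : ℕ) : ℝ) * τ := by positivity
      have hle2 : ∀ y ∈ Ioc (t k) (t (k + 1)), dualKer t n α x y * |y - cellL t n y| ^ (-α)
          ≤ ((m + 1 : ℕ) : ℝ) ^ (α - 2) * τ ^ (α - 1) * (y - t k) ^ (-α) := by
        intro y hy
        rw [hw y hy]
        refine mul_le_mul_of_nonneg_right ?_ (Real.rpow_nonneg (sub_pos.2 hy.1).le _)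
        have hyx : y < x := by linarith [hy.2]
        rw [dualKer_eq hα1 ht h0 x (cell_subset ht h0 hk hy), aker, if_pos hyx, coarseKer,
          hR y hy, hL y hy, if_pos (by linarith)]
        refine (rpow_sub_rpow_le hα (sub_pos.2 hyx) (by linarith [hy.1])).trans ?_
        have a1 : (x - y) ^ (α - 2) ≤ (((m + 1 : ℕ) : ℝ) * τ) ^ (α - 2) :=
          Real.rpow_le_rpow_of_nonpos hgap0 (by linarith [hy.2]) (by linarith)
        have a2 : x - t k - (x - y) ≤ τ := by linarith [hy.2]
        have a3 : 0 ≤ x - t k - (x - y) := by linarith [hy.1]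
        calc (x - y) ^ (α - 2) * (x - t k - (x - y))
            ≤ (((m + 1 : ℕ) : ℝ) * τ) ^ (α - 2) * τ := by gcongr
          _ = _ := by
            rw [Real.mul_rpow (by positivity) hτ0.le, mul_assoc, ← Real.rpow_add_one hτ0.ne']
            congr 2
            ring
      have hi2 := (integrableOn_sub_left_rpow (a := t k) (b := t (k + 1)) (γ := -α)
        (ht.monotone k.le_succ) (by linarith)).const_mul
          (((m + 1 : ℕ) : ℝ) ^ (α - 2) * τ ^ (α - 1))
      refine (setIntegral_mono_on hi hi2 measurableSet_Ioc hle2).trans (le_of_eq ?_)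
      rw [integral_const_mul, integral_sub_left_rpow (ht.monotone k.le_succ) (by linarith),
        ← hτ, mul_assoc, ← mul_div_assoc, ← Real.rpow_add hτ0, show α - 1 + (-α + 1) = 0 by ring,
        Real.rpow_zero, show -α + 1 = 1 - α by ring, mul_one_div]
  · have hz : EqOn (fun y => dualKer t n α x y * |y - cellL t n y| ^ (-α)) (fun _ => 0)
        (Ioc (t k) (t (k + 1))) := by
      intro y hy
      have h1 : t (j + 1) ≤ t k := ht.monotone (by omega)
      have h2 : ¬ y < x := by linarith [hy.1, hxm.2]
      have h3 : ¬ t (k + 1) < x := by linarith [hy.1, hy.2, hxm.2]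
      simp only
      rw [dualKer_eq hα1 ht h0 x (cell_subset ht h0 hk hy), aker, if_neg h2, coarseKer,
        hR y hy, if_neg h3, sub_zero, zero_mul]
    refine ⟨(integrableOn_zero).congr_fun hz.symm measurableSet_Ioc, ?_⟩
    rw [setIntegral_congr_fun measurableSet_Ioc hz]
    simp

theorem integral_dualKer_weight_le (hα : 0 < α) (hα1 : α < 1) (ht : StrictMono t) (h0 : t 0 = 0)
    (hstep : Monotone fun k => t (k + 1) - t k) {x : ℝ} (hx : x ∈ Ioc 0 (t n)) :
    Integrable (fun y => dualKer t n α x y * |y - cellL t n y| ^ (-α)) (lam (t n)) ∧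
      ∫ y, dualKer t n α x y * |y - cellL t n y| ^ (-α) ∂lam (t n)
        ≤ ∑' i, dualCellBound α i := by
  have hc := fun k (hk : k < n) => dualKer_cell_le hα hα1 ht h0 hstep hx hk
  have hi := integrable_of_cells ht h0 fun k hk => (hc k hk).1
  refine ⟨hi, ?_⟩
  rw [integral_eq_sum_cells ht h0 hi]
  refine (Finset.sum_le_sum fun k hk => (hc k (Finset.mem_range.1 hk)).2).trans ?_
  set j := cellIdx t n x with hj
  have hjn : j < n := cellIdx_lt ht h0 hx
  have hsub : Finset.range (j + 1) ⊆ Finset.range n := Finset.range_subset_range.2 hjn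
  rw [← Finset.sum_subset hsub fun k _ hk => if_neg (by
    have := Finset.mem_range.not.1 hk; omega)]
  rw [Finset.sum_congr rfl fun k hk => if_pos (by
    have := Finset.mem_range.1 hk; omega)]
  rw [Finset.sum_congr rfl fun k _ => by
    rw [show j - k = j + 1 - 1 - k by omega]]
  rw [Finset.sum_range_reflect]
  exact (summable_dualCellBound hα1).sum_le_tsum _ fun i _ => dualCellBound_nonneg hα hα1 i

end

section

variable {t : ℕ → ℝ} {n : ℕ} {α : ℝ}

/-- The remainder of the dual function: the Abel integral of `e` minus a piecewise constant. -/
noncomputable def dualFun (t : ℕ → ℝ) (n : ℕ) (α : ℝ) (e : ℝ → ℝ) (y : ℝ) : ℝ :=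
  ∫ x, dualKer t n α x y * e x ∂lam (t n)

theorem measurable_dualFun {e : ℝ → ℝ} (he : Measurable e) : Measurable (dualFun t n α e) := by
  have h : Measurable (Function.uncurry fun x y => dualKer t n α x y * e x) :=
    (measurable_dualKer t n α).mul (he.comp measurable_fst)
  exact (h.stronglyMeasurable.integral_prod_left (μ := lam (t n))).measurable

theorem abs_dualFun_le (hα : 0 < α) (hα1 : α < 1) (ht : StrictMono t) (h0 : t 0 = 0) {h : ℝ}
    (hh : ∀ k < n, t (k + 1) - t k ≤ h) {e : ℝ → ℝ} {B : ℝ} (hB0 : 0 ≤ B)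
    (hB : ∀ x ∈ Ioc 0 (t n), |e x| ≤ B) {y : ℝ} (hy : y ∈ Ioc 0 (t n)) :
    |dualFun t n α e y| ≤ h ^ α / α * B := by
  have hs := dualKer_slice hα hα1 ht h0 hh hy
  have h1 : ‖dualFun t n α e y‖ ≤ ∫ x, dualKer t n α x y * B ∂lam (t n) := by
    refine norm_integral_le_of_norm_le (hs.1.mul_const B) ?_
    filter_upwards [ae_restrict_mem measurableSet_Ioc] with x hx
    rw [norm_mul, Real.norm_of_nonneg (dualKer_nonneg x y)]
    exact mul_le_mul_of_nonneg_left (hB x hx) (dualKer_nonneg x y)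
  rw [integral_mul_const] at h1
  exact h1.trans (mul_le_mul_of_nonneg_right hs.2 hB0)

theorem exists_dualFun_eq (hα : 0 < α) (hα1 : α < 1) (ht : StrictMono t) (h0 : t 0 = 0)
    {e : ℝ → ℝ} (he : Measurable e) {B : ℝ} (hB : ∀ x ∈ Ioc 0 (t n), |e x| ≤ B) :
    ∃ c : ℕ → ℝ, ∀ y ∈ Ioc 0 (t n),
      ∫ x, aker α x y * e x ∂lam (t n) = dualFun t n α e y + c (cellIdx t n y) := by
  refine ⟨fun k => ∫ x, (if t (k + 1) < x then (x - t k) ^ (α - 1) else 0) * e x ∂lam (t n),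
    fun y hy => ?_⟩
  have h1 := integrable_bdd_mul he hB (aker_slice_fst hα hy).1
  have h2 := integrable_bdd_mul he hB (coarseKer_slice hα ht h0 hy).1
  have e1 : dualFun t n α e y = ∫ x, (aker α x y * e x - coarseKer t n α x y * e x) ∂lam (t n) := by
    unfold dualFun
    congr 1
    ext x
    rw [dualKer_eq hα1 ht h0 x hy]
    ring
  rw [e1, integral_sub h1 h2]
  exact (sub_add_cancel _ _).symm

theorem integral_dualFun_sq_le (hα : 0 < α) (hα1 : α < 1) (ht : StrictMono t) (h0 : t 0 = 0)
    (hstep : Monotone fun k => t (k + 1) - t k) {h : ℝ} (hh0 : 0 < h)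
    (hh : ∀ k < n, t (k + 1) - t k ≤ h) {e : ℝ → ℝ} (he : Measurable e) {B : ℝ}
    (hB : ∀ x ∈ Ioc 0 (t n), |e x| ≤ B) :
    Integrable (fun y => (y - cellL t n y) ^ (-α) * dualFun t n α e y ^ 2) (lam (t n)) ∧
      ∫ y, (y - cellL t n y) ^ (-α) * dualFun t n α e y ^ 2 ∂lam (t n)
        ≤ h ^ α / α * (∑' i, dualCellBound α i) * ∫ x, e x ^ 2 ∂lam (t n) := by
  set K := ∑' i, dualCellBound α i with hK
  have he2 : Integrable (fun x => e x ^ 2) (lam (t n)) :=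
    integrable_of_bounded (B := B ^ 2) (he.pow_const 2) fun x hx => by
      rw [abs_pow]
      exact pow_le_pow_left₀ (abs_nonneg _) (hB x hx) 2
  have hmW : Measurable fun y => |y - cellL t n y| ^ (-α) :=
    ((measurable_id.sub (measurable_cellL t n)).abs).pow_const _
  have key := integral_kernel_fst_le (μ := lam (t n)) (ν := lam (t n))
    (κ := fun x y => dualKer t n α x y * |y - cellL t n y| ^ (-α)) (m := fun _ => K)
    (f := fun x => e x ^ 2)
    ((measurable_dualKer t n α).mul (hmW.comp measurable_snd))
    (fun x y => mul_nonneg (dualKer_nonneg x y) (Real.rpow_nonneg (abs_nonneg _) _)) (by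
      filter_upwards [ae_restrict_mem measurableSet_Ioc] with x hx using
        integral_dualKer_weight_le hα hα1 ht h0 hstep hx)
    (he.pow_const 2) (fun x => sq_nonneg _) (he2.mul_const K)
  have hm : 0 < h ^ α / α := by positivity
  have hdom : Integrable (fun y => h ^ α / α *
      ∫ x, dualKer t n α x y * |y - cellL t n y| ^ (-α) * e x ^ 2 ∂lam (t n)) (lam (t n)) :=
    key.1.integral_prod_right.const_mul _
  have hle : ∀ᵐ y ∂lam (t n), (y - cellL t n y) ^ (-α) * dualFun t n α e y ^ 2 ≤
      h ^ α / α * ∫ x, dualKer t n α x y * |y - cellL t n y| ^ (-α) * e x ^ 2 ∂lam (t n) := by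
    filter_upwards [ae_restrict_mem measurableSet_Ioc] with y hy
    have hs := dualKer_slice hα hα1 ht h0 hh hy
    have hcs := sq_integral_mul_le hm (fun x => dualKer_nonneg x y) hs.1 hs.2
      (integrable_bdd_mul he hB hs.1)
      (integrable_bdd_mul (he.pow_const 2) (B := B ^ 2) (fun x hx => by
        rw [abs_pow]
        exact pow_le_pow_left₀ (abs_nonneg _) (hB x hx) 2) hs.1)
    have hw : 0 < y - cellL t n y := sub_pos.2 (mem_cell ht h0 hy).1
    rw [abs_of_pos hw]
    have e1 : ∀ x, dualKer t n α x y * (y - cellL t n y) ^ (-α) * e x ^ 2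
        = (y - cellL t n y) ^ (-α) * (dualKer t n α x y * e x ^ 2) := fun x => by ring
    simp only [e1]
    rw [integral_const_mul, mul_left_comm]
    exact mul_le_mul_of_nonneg_left hcs (Real.rpow_nonneg hw.le _)
  have hi : Integrable (fun y => (y - cellL t n y) ^ (-α) * dualFun t n α e y ^ 2)
      (lam (t n)) := by
    refine hdom.mono' ((((measurable_id.sub (measurable_cellL t n)).pow_const _).mul
      ((measurable_dualFun he).pow_const 2)).aestronglyMeasurable) ?_
    filter_upwards [hle, ae_restrict_mem measurableSet_Ioc] with y hy hm
    rwa [Real.norm_of_nonneg]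
    exact mul_nonneg (Real.rpow_nonneg (sub_pos.2 (mem_cell ht h0 hm).1).le _) (sq_nonneg _)
  refine ⟨hi, (integral_mono_ae hi hdom hle).trans ?_⟩
  rw [integral_const_mul, mul_assoc]
  refine mul_le_mul_of_nonneg_left ?_ hm.le
  have := key.2
  rw [integral_prod_symm _ key.1, integral_mul_const, mul_comm _ K] at this
  exact this

end

section

variable {t : ℕ → ℝ} {n : ℕ} {α σ : ℝ}

theorem mul_le_weighted_sq {l : ℝ} (hl : 0 < l) (a b : ℝ) :
    a * b ≤ l * a ^ 2 + b ^ 2 / (4 * l) := by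
  rw [← sub_nonneg]
  have : l * a ^ 2 + b ^ 2 / (4 * l) - a * b = (2 * l * a - b) ^ 2 / (4 * l) := by
    field_simp
    ring
  rw [this]
  positivity

/-- Testing the Marchaud derivative of `e` with an arbitrary function, against a weighted norm. -/
theorem integral_marchaud_mul_le (hα : 0 < α) (hα1 : α < 1) (ht : StrictMono t) (h0 : t 0 = 0)
    {e ζ Λ : ℝ → ℝ} {B B' l : ℝ} (hl : 0 < l) (he : Measurable e)
    (hB : ∀ x ∈ Ioc 0 (t n), |e x| ≤ B)
    (hi : Integrable (fun p : ℝ × ℝ => ker α p.1 p.2 * (e p.1 - e p.2))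
      ((lam (t n)).prod (lam (t n))))
    (hi2 : Integrable (fun p : ℝ × ℝ => kerOff t n α p.1 p.2 * (e p.1 - e p.2) ^ 2)
      ((lam (t n)).prod (lam (t n))))
    (hΛm : Measurable Λ) (hΛ0 : ∀ x, 0 ≤ Λ x)
    (hΛ : ∀ x ∈ Ioc 0 (t n), ∀ y, cellL t n x < y → y < x → |e x - e y| ≤ (x - y) * Λ x)
    (hΛi : Integrable (fun x => Λ x ^ 2 * (x - cellL t n x) ^ (2 - α)) (lam (t n)))
    (hζ : Measurable ζ) (hζB : ∀ x ∈ Ioc 0 (t n), |ζ x| ≤ B')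
    (hζi : Integrable (fun x => (x - cellL t n x) ^ (-α) * ζ x ^ 2) (lam (t n))) :
    ∫ x, marchaud α (t n) e x * ζ x ∂lam (t n) ≤
      l * ((∫ x, x ^ (-α) * e x ^ 2 ∂lam (t n))
        + (∫ p : ℝ × ℝ, kerOff t n α p.1 p.2 * (e p.1 - e p.2) ^ 2
            ∂((lam (t n)).prod (lam (t n))))
        + (∫ x, Λ x ^ 2 * (x - cellL t n x) ^ (2 - α) ∂lam (t n)) / (1 - α))
      + (∫ x, (x - cellL t n x) ^ (-α) * ζ x ^ 2 ∂lam (t n)) / (l * (1 - α)) := by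
  have h1α : 0 < 1 - α := by linarith
  set A := ∫ x, (x - cellL t n x) ^ (-α) * ζ x ^ 2 ∂lam (t n) with hA
  set E₁ := ∫ x, x ^ (-α) * e x ^ 2 ∂lam (t n) with hE₁
  set E₂ := ∫ p : ℝ × ℝ, kerOff t n α p.1 p.2 * (e p.1 - e p.2) ^ 2
    ∂((lam (t n)).prod (lam (t n))) with hE₂
  set E₃ := ∫ x, Λ x ^ 2 * (x - cellL t n x) ^ (2 - α) ∂lam (t n) with hE₃
  have hw : ∀ᵐ x ∂lam (t n), 0 < x - cellL t n x := by
    filter_upwards [ae_restrict_mem measurableSet_Ioc] with x hx using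
      sub_pos.2 (mem_cell ht h0 hx).1
  have hA0 : 0 ≤ A := by
    refine integral_nonneg_of_ae ?_
    filter_upwards [hw] with x hx
    positivity
  have hE₂0 : 0 ≤ E₂ := integral_nonneg fun p => mul_nonneg (kerOff_nonneg _ _) (sq_nonneg _)
  have hE₃0 : 0 ≤ E₃ := by
    refine integral_nonneg_of_ae ?_
    filter_upwards [hw] with x hx
    positivity
  rw [integral_marchaud_mul hα1 he hB hi hζ hζB]
  -- the boundary term
  have hwe := integrable_bdd_mul he hB (integrable_rpow_neg hα1 (t n))
  have hwe2 : Integrable (fun x => x ^ (-α) * e x ^ 2) (lam (t n)) := by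
    simpa only [mul_assoc, ← sq] using integrable_bdd_mul he hB hwe
  have b1 : ∫ x, x ^ (-α) * e x * ζ x ∂lam (t n) ≤ l * E₁ + A / (4 * l) := by
    rw [hE₁, hA, ← integral_const_mul, ← integral_div, ← integral_add (hwe2.const_mul l)
      (hζi.div_const _)]
    refine integral_mono_ae (integrable_bdd_mul hζ hζB hwe)
      ((hwe2.const_mul l).add (hζi.div_const _)) ?_
    filter_upwards [ae_rpow_le hα ht h0, ae_restrict_mem measurableSet_Ioc] with x hx hxm
    have hx0 : 0 ≤ x ^ (-α) := Real.rpow_nonneg hxm.1.le _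
    calc x ^ (-α) * e x * ζ x = x ^ (-α) * (e x * ζ x) := by ring
      _ ≤ x ^ (-α) * (l * e x ^ 2 + ζ x ^ 2 / (4 * l)) :=
          mul_le_mul_of_nonneg_left (mul_le_weighted_sq hl _ _) hx0
      _ = l * (x ^ (-α) * e x ^ 2) + x ^ (-α) * (ζ x ^ 2 / (4 * l)) := by ring
      _ ≤ l * (x ^ (-α) * e x ^ 2) + (x - cellL t n x) ^ (-α) * (ζ x ^ 2 / (4 * l)) := by
          gcongr
      _ = _ := by ring
  -- the far interactions
  have hζi' : Integrable (fun x => ζ x ^ 2 * ((x - cellL t n x) ^ (-α) / α)) (lam (t n)) := by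
    refine (hζi.div_const α).congr (Eventually.of_forall fun x => ?_)
    simp only
    ring
  have k1 := integral_kernel_fst_le (measurable_kerOff t n α) kerOff_nonneg
    (ae_kerOff_fst hα ht h0) (f := fun x => ζ x ^ 2) (hζ.pow_const 2) (fun x => sq_nonneg _) hζi'
  have k1' : ∫ p : ℝ × ℝ, kerOff t n α p.1 p.2 * ζ p.1 ^ 2 ∂((lam (t n)).prod (lam (t n)))
      ≤ A / α := by
    refine k1.2.trans (le_of_eq ?_)
    rw [hA, ← integral_div]
    congr 1
    ext x
    ring
  -- the interactions inside a cell
  have hpt : ∀ᵐ x ∂lam (t n), Λ x * |ζ x| * ((x - cellL t n x) ^ (1 - α) / (1 - α)) ≤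
      l / (1 - α) * (Λ x ^ 2 * (x - cellL t n x) ^ (2 - α))
        + 1 / (4 * l * (1 - α)) * ((x - cellL t n x) ^ (-α) * ζ x ^ 2) := by
    filter_upwards [hw] with x hx
    set w := x - cellL t n x
    have e1 : w ^ (1 - α) = w * w ^ (-α) := by
      rw [← Real.rpow_one_add' hx.le (by linarith)]; rfl
    have e2 : w ^ (2 - α) = w ^ 2 * w ^ (-α) := by
      rw [← Real.rpow_natCast, ← Real.rpow_add hx]; norm_num; rfl
    have h4 := mul_le_weighted_sq hl (Λ x * w) |ζ x|
    rw [sq_abs] at h4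
    have h5 : 0 ≤ w ^ (-α) / (1 - α) := by positivity
    have h6 := mul_le_mul_of_nonneg_left h4 h5
    rw [e1, e2]
    calc Λ x * |ζ x| * (w * w ^ (-α) / (1 - α)) = w ^ (-α) / (1 - α) * (Λ x * w * |ζ x|) := by
          ring
      _ ≤ _ := h6
      _ = _ := by field_simp
  have hdomI := (hΛi.const_mul (l / (1 - α))).add (hζi.const_mul (1 / (4 * l * (1 - α))))
  have hI : Integrable (fun x => Λ x * |ζ x| * ((x - cellL t n x) ^ (1 - α) / (1 - α)))
      (lam (t n)) := by
    refine hdomI.mono' ((hΛm.mul hζ.abs).mul (((measurable_id.sub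
      (measurable_cellL t n)).pow_const _).div_const _)).aestronglyMeasurable ?_
    filter_upwards [hpt, hw] with x hx hwx
    rw [Real.norm_of_nonneg]
    · exact hx
    · have := hΛ0 x
      positivity
  have k2 := integral_kernel_fst_le (measurable_kerIn t n α) kerIn_nonneg
    (ae_kerIn_fst hα1 ht h0) (f := fun x => Λ x * |ζ x|) (hΛm.mul hζ.abs)
    (fun x => mul_nonneg (hΛ0 x) (abs_nonneg _)) hI
  have k2' : ∫ p : ℝ × ℝ, kerIn t n α p.1 p.2 * (Λ p.1 * |ζ p.1|)
      ∂((lam (t n)).prod (lam (t n))) ≤ l / (1 - α) * E₃ + 1 / (4 * l * (1 - α)) * A := by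
    refine k2.2.trans ((integral_mono_ae hI hdomI hpt).trans (le_of_eq ?_))
    rw [hE₃, hA, ← integral_const_mul, ← integral_const_mul,
      ← integral_add (hΛi.const_mul _) (hζi.const_mul _)]
    rfl
  have b2 : ∫ p : ℝ × ℝ, ker α p.1 p.2 * (e p.1 - e p.2) * ζ p.1 ∂((lam (t n)).prod (lam (t n)))
      ≤ l * E₂ + A / α / (4 * l) + (l / (1 - α) * E₃ + 1 / (4 * l * (1 - α)) * A) := by
    refine (integral_le_add_add (integrable_prod_mul_fst hζ hζB hi) (hi2.const_mul l)
      (k1.1.div_const (4 * l)) k2.1 ?_).trans ?_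
    · filter_upwards [ae_prod_mem (t n)] with p hp
      rw [mul_assoc]
      refine (ker_mul_le (t := t) (n := n) (mul_le_weighted_sq hl (e p.1 - e p.2) (ζ p.1))
        (Λ := Λ p.1 * |ζ p.1|) fun h1 h2 => ?_).trans (le_of_eq (by ring))
      calc (e p.1 - e p.2) * ζ p.1 ≤ |e p.1 - e p.2| * |ζ p.1| := by
            rw [← abs_mul]; exact le_abs_self _
        _ ≤ (p.1 - p.2) * Λ p.1 * |ζ p.1| :=
            mul_le_mul_of_nonneg_right (hΛ _ hp.1 _ h1 h2) (abs_nonneg _)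
        _ = _ := by ring
    · rw [integral_const_mul, integral_div]
      gcongr
  have b3 := mul_le_mul_of_nonneg_left b2 hα.le
  have g1 : α * (l * E₂) ≤ l * E₂ := mul_le_of_le_one_left (by positivity) hα1.le
  have g2 : α * (A / α / (4 * l)) = A / (4 * l) := by field_simp
  have g3 : α * (l / (1 - α) * E₃) ≤ l / (1 - α) * E₃ :=
    mul_le_of_le_one_left (by positivity) hα1.le
  have g4 : α * (1 / (4 * l * (1 - α)) * A) ≤ A / (4 * l * (1 - α)) := by
    rw [one_div_mul_eq_div]
    exact mul_le_of_le_one_left (by positivity) hα1.le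
  have g5 : A / (4 * l) ≤ A / (4 * l * (1 - α)) := by
    refine div_le_div_of_nonneg_left hA0 (by positivity) ?_
    exact mul_le_of_le_one_right (by positivity) (by linarith)
  have g6 : A / (4 * l * (1 - α)) + A / (4 * l * (1 - α)) + A / (4 * l * (1 - α))
      ≤ A / (l * (1 - α)) := by
    have : A / (l * (1 - α)) = 4 * (A / (4 * l * (1 - α))) := by field_simp
    rw [this]
    have : 0 ≤ A / (4 * l * (1 - α)) := by positivity
    linarith
  have g7 : l * (E₁ + E₂ + E₃ / (1 - α)) = l * E₁ + l * E₂ + l / (1 - α) * E₃ := by ring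
  rw [g7]
  linarith

end

section

variable {t : ℕ → ℝ} {n : ℕ} {α σ : ℝ}

/-- Duality: the `L²` norm of `e` is obtained by testing with the remainder of the dual function. -/
theorem integral_sq_le_dual (hα : 0 < α) (hα1 : α < 1) (ht : StrictMono t) (h0 : t 0 = 0)
    {h : ℝ} (hh : ∀ k < n, t (k + 1) - t k ≤ h) {e : ℝ → ℝ} {B : ℝ} (hB0 : 0 ≤ B)
    (he : Measurable e) (hB : ∀ x ∈ Ioc 0 (t n), |e x| ≤ B)
    (hi : Integrable (fun p : ℝ × ℝ => ker α p.1 p.2 * (e p.1 - e p.2))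
      ((lam (t n)).prod (lam (t n))))
    (horth : ∀ c : ℕ → ℝ,
      ∫ x, marchaud α (t n) e x * c (cellIdx t n x) ∂lam (t n) = 0) :
    ∫ x, e x ^ 2 ∂lam (t n) ≤ ∫ x, marchaud α (t n) e x * dualFun t n α e x ∂lam (t n) := by
  obtain ⟨c, hc⟩ := exists_dualFun_eq hα hα1 ht h0 he hB
  have hM := integrable_marchaud hα1 he hB hi
  have h1 := integral_mul_dual hα hα1 (measurable_marchaud he) hM he hB fun w hw =>
    integral_marchaud hα hα1 he hB hi hw.2
  have i1 : Integrable (fun x => marchaud α (t n) e x * dualFun t n α e x) (lam (t n)) :=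
    integrable_bdd_mul (measurable_dualFun he)
      (fun x hx => abs_dualFun_le hα hα1 ht h0 hh hB0 hB hx) hM
  have i2 : Integrable (fun x => marchaud α (t n) e x * c (cellIdx t n x)) (lam (t n)) :=
    integrable_bdd_mul (measurable_comp_cellIdx c t n)
      (fun x hx => le_sum_cells ht h0 (F := fun k => |c k|) (fun k => abs_nonneg _) hx) hM
  have h2 : ∫ y, marchaud α (t n) e y * ∫ x, aker α x y * e x ∂lam (t n) ∂lam (t n)
      = ∫ y, marchaud α (t n) e y * dualFun t n α e y ∂lam (t n) := by
    rw [← add_zero (∫ y, marchaud α (t n) e y * dualFun t n α e y ∂lam (t n)), ← horth c,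
      ← integral_add i1 i2]
    refine integral_congr_ae ?_
    filter_upwards [ae_restrict_mem measurableSet_Ioc] with y hy
    rw [hc y hy, mul_add]
  rw [← h2, h1]
  exact le_mul_of_one_le_left (integral_nonneg fun x => sq_nonneg _) (one_le_betaConst hα hα1)

/-- Slope bound inside a cell for the difference of a piecewise polynomial and a small function. -/
noncomputable def cellSlope (t : ℕ → ℝ) (n : ℕ) (σ : ℝ) (L ε : ℕ → ℝ) (x : ℝ) : ℝ :=
  L (cellIdx t n x) + ε (cellIdx t n x) * (cellR t n x - cellL t n x) ^ (-σ) *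
    |x - cellL t n x| ^ (σ - 1)

theorem measurable_cellSlope (L ε : ℕ → ℝ) : Measurable (cellSlope t n σ L ε) :=
  (measurable_comp_cellIdx L t n).add (((measurable_comp_cellIdx ε t n).mul
    (((measurable_cellR t n).sub (measurable_cellL t n)).pow_const _)).mul
    ((measurable_id.sub (measurable_cellL t n)).abs.pow_const _))

theorem cellSlope_nonneg (ht : StrictMono t) {L ε : ℕ → ℝ} (hL : ∀ k, 0 ≤ L k)
    (hε : ∀ k, 0 ≤ ε k) (x : ℝ) : 0 ≤ cellSlope t n σ L ε x := by
  have h1 : 0 ≤ cellR t n x - cellL t n x := sub_nonneg.2 (ht.monotone (Nat.le_succ _))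
  have := hL (cellIdx t n x)
  have := hε (cellIdx t n x)
  unfold cellSlope
  positivity

theorem integral_cellSlope_sq_le (hα1 : α < 1) (hσ : 0 < σ) (ht : StrictMono t) (h0 : t 0 = 0)
    (L ε : ℕ → ℝ) :
    Integrable (fun x => cellSlope t n σ L ε x ^ 2 * (x - cellL t n x) ^ (2 - α)) (lam (t n)) ∧
      ∫ x, cellSlope t n σ L ε x ^ 2 * (x - cellL t n x) ^ (2 - α) ∂lam (t n) ≤
        2 * ∑ k ∈ Finset.range n, L k ^ 2 * (t (k + 1) - t k) ^ (3 - α)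
          + 2 / (2 * σ + 1 - α) * cellSum t n α ε := by
  have a1 := integral_cellL_rpow (n := n) ht h0 (fun k => 2 * L k ^ 2)
    (by linarith : -1 < 2 - α)
  have a2 := integral_cellL_rpow (n := n) ht h0
    (fun k => 2 * (ε k * (t (k + 1) - t k) ^ (-σ)) ^ 2) (by linarith : -1 < 2 * σ - α)
  have hd := a1.1.add a2.1
  have hpt : ∀ᵐ x ∂lam (t n), cellSlope t n σ L ε x ^ 2 * (x - cellL t n x) ^ (2 - α) ≤
      2 * L (cellIdx t n x) ^ 2 * (x - cellL t n x) ^ (2 - α)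
      + 2 * (ε (cellIdx t n x) * (t (cellIdx t n x + 1) - t (cellIdx t n x)) ^ (-σ)) ^ 2
        * (x - cellL t n x) ^ (2 * σ - α) := by
    filter_upwards [ae_restrict_mem measurableSet_Ioc] with x hx
    have hw : 0 < x - cellL t n x := sub_pos.2 (mem_cell ht h0 hx).1
    unfold cellSlope cellR
    rw [abs_of_pos hw]
    change (L (cellIdx t n x) + ε (cellIdx t n x) *
      (t (cellIdx t n x + 1) - t (cellIdx t n x)) ^ (-σ) * _) ^ 2 * _ ≤ _
    set w := x - cellL t n x
    set G := ε (cellIdx t n x) * (t (cellIdx t n x + 1) - t (cellIdx t n x)) ^ (-σ)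
    set M := L (cellIdx t n x)
    have e1 : w ^ (2 * σ - α) = (w ^ (σ - 1)) ^ 2 * w ^ (2 - α) := by
      rw [← Real.rpow_natCast, ← Real.rpow_mul hw.le, ← Real.rpow_add hw]
      congr 1
      push_cast
      ring
    have e2 : 0 ≤ w ^ (2 - α) := by positivity
    rw [e1]
    calc (M + G * w ^ (σ - 1)) ^ 2 * w ^ (2 - α)
        ≤ (2 * (M ^ 2 + (G * w ^ (σ - 1)) ^ 2)) * w ^ (2 - α) := by
          gcongr
          exact add_sq_le
      _ = _ := by ring
  have hi : Integrable (fun x => cellSlope t n σ L ε x ^ 2 * (x - cellL t n x) ^ (2 - α))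
      (lam (t n)) := by
    refine hd.mono' (((measurable_cellSlope L ε).pow_const 2).mul ((measurable_id.sub
      (measurable_cellL t n)).pow_const _)).aestronglyMeasurable ?_
    filter_upwards [hpt, ae_restrict_mem measurableSet_Ioc] with x hx hm
    rw [Real.norm_of_nonneg]
    · exact hx
    · exact mul_nonneg (sq_nonneg _) (Real.rpow_nonneg (sub_pos.2 (mem_cell ht h0 hm).1).le _)
  refine ⟨hi, (integral_mono_ae hi hd hpt).trans ?_⟩
  simp only [Pi.add_apply]
  rw [integral_add a1.1 a2.1, a1.2, a2.2, cellSum, Finset.mul_sum, Finset.mul_sum,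
    ← Finset.sum_add_distrib, ← Finset.sum_add_distrib]
  refine Finset.sum_le_sum fun k _ => ?_
  have hτ : 0 < t (k + 1) - t k := sub_pos.2 (ht k.lt_succ_self)
  set τ := t (k + 1) - t k
  have e1 : (2 : ℝ) - α + 1 = 3 - α := by ring
  have e2 : (ε k * τ ^ (-σ)) ^ 2 * τ ^ (2 * σ - α + 1) = ε k ^ 2 * τ ^ (1 - α) := by
    rw [mul_pow, ← Real.rpow_natCast (τ ^ (-σ)), ← Real.rpow_mul hτ.le, mul_assoc,
      ← Real.rpow_add hτ]
    congr 2
    push_cast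
    ring
  have e3 : 2 * (ε k * τ ^ (-σ)) ^ 2 * (τ ^ (2 * σ - α + 1) / (2 * σ - α + 1))
      = 2 / (2 * σ + 1 - α) * (ε k ^ 2 * τ ^ (1 - α)) := by
    rw [← e2, show 2 * σ + 1 - α = 2 * σ - α + 1 by ring]
    ring
  rw [e1, e3]
  have : τ ^ (3 - α) / (3 - α) ≤ τ ^ (3 - α) := div_le_self (by positivity) (by linarith)
  have : 2 * L k ^ 2 * (τ ^ (3 - α) / (3 - α)) ≤ 2 * L k ^ 2 * τ ^ (3 - α) := by gcongr
  linarith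

/-- The `L²` error estimate on a mesh with nondecreasing steps. -/
theorem exists_integral_sq_le (hα : 0 < α) (hα1 : α < 1) (hσ : 0 < σ) (hσ1 : σ < 1) (p : ℕ) :
    ∃ C : ℝ, 0 < C ∧ ∀ (t : ℕ → ℝ) (n : ℕ) (h : ℝ) (Q : ℕ → Polynomial ℝ) (ε : ℕ → ℝ)
      (η : ℝ → ℝ), StrictMono t → t 0 = 0 → (Monotone fun k => t (k + 1) - t k) → 0 < h →
      (∀ k < n, t (k + 1) - t k ≤ h) → (∀ k, (Q k).degree ≤ p) → CellSmall t n σ ε η →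
      (∀ Y : ℕ → Polynomial ℝ, (∀ k, (Y k).degree ≤ p) →
        ∫ x, marchaud α (t n) (fun x => pwPoly t n Q x - η x) x * pwPoly t n Y x ∂lam (t n) = 0) →
      ∫ x, (pwPoly t n Q x - η x) ^ 2 ∂lam (t n) ≤ C * h ^ α * cellSum t n α ε := by
  obtain ⟨C₀, hC₀, hen⟩ := exists_energy_bound hα hα1 hσ hσ1 p
  have h1α : 0 < 1 - α := by linarith
  have h2σ : 0 < 2 * σ + 1 - α := by linarith
  set K := ∑' i, dualCellBound α i with hK
  have hK0 : 0 ≤ K := tsum_nonneg fun i => dualCellBound_nonneg hα hα1 i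
  set C₁ := (2 * C₀ + 2 / (1 - α)) + (2 * C₀ + 8 / (1 - α) / α)
    + (2 * C₀ + 2 / (2 * σ + 1 - α)) / (1 - α) with hC₁
  have hC₁0 : 0 < C₁ := by positivity
  set C₂ := (K + 1) / (α * (1 - α)) with hC₂
  have hC₂0 : 0 < C₂ := by positivity
  refine ⟨4 * C₁ * C₂, by positivity, ?_⟩
  intro t n h Q ε η ht h0 hstep hh0 hh hQ hη horth
  obtain ⟨L, hL0, hL, hen1, hen2, hen3⟩ := hen t n Q ε η ht h0 hQ hη (horth Q hQ)
  set S := cellSum t n α ε with hS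
  have hS0 : 0 ≤ S := cellSum_nonneg ht ε
  obtain ⟨B, Λ, hB, hΛ, hθr⟩ := cellRegular_pwPoly (σ := σ) hσ1 ht h0 hL0 hL
  obtain ⟨B', Λ', hB', hΛ', hηr⟩ := hη.cellRegular ht h0
  set θ := pwPoly t n Q with hθ
  have her := hθr.sub hηr
  set e : ℝ → ℝ := fun x => θ x - η x with he
  have hi := her.integrable_ker hα hα1 ht h0 hσ (by positivity)
  have hiθ := hθr.integrable_ker_sq hα hα1 ht h0 hσ hΛ
  have hie := her.integrable_ker_sq hα hα1 ht h0 hσ (by positivity)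
  have hi2 : Integrable (fun p : ℝ × ℝ => kerOff t n α p.1 p.2 * (e p.1 - e p.2) ^ 2)
      ((lam (t n)).prod (lam (t n))) := by
    refine hie.mono' ((measurable_kerOff t n α).mul (((her.meas.comp measurable_fst).sub
      (her.meas.comp measurable_snd)).pow_const 2)).aestronglyMeasurable
      (Eventually.of_forall fun q => ?_)
    rw [Real.norm_of_nonneg (mul_nonneg (kerOff_nonneg _ _) (sq_nonneg _))]
    exact mul_le_mul_of_nonneg_right (kerOff_le_ker _ _) (sq_nonneg _)
  have hsl := integral_cellSlope_sq_le (n := n) hα1 hσ ht h0 L ε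
  have hBe : ∀ x ∈ Ioc 0 (t n), |e x| ≤ B + B' := her.bdd
  have hζ := integral_dualFun_sq_le hα hα1 ht h0 hstep hh0 hh her.meas hBe
  -- the three parts of the energy of `e`
  have E₁ : ∫ x, x ^ (-α) * e x ^ 2 ∂lam (t n) ≤ (2 * C₀ + 2 / (1 - α)) * S := by
    have sqi : ∀ {f : ℝ → ℝ} {D : ℝ}, Measurable f → (∀ x ∈ Ioc 0 (t n), |f x| ≤ D) →
        Integrable (fun x => x ^ (-α) * f x ^ 2) (lam (t n)) := fun {f D} hf hD => by
      simpa only [mul_assoc, ← sq] using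
        integrable_bdd_mul hf hD (integrable_bdd_mul hf hD (integrable_rpow_neg hα1 (t n)))
    have i1 := sqi hθr.meas hθr.bdd
    have hx := integral_mul_sq_le_cellSum hα1 ht h0 hη (w := fun x => x ^ (-α))
      (measurable_id.pow_const (-α)) (by
      filter_upwards [ae_restrict_mem measurableSet_Ioc] with x hx using
        Real.rpow_nonneg hx.1.le _) (Or.inl (ae_rpow_le hα ht h0))
    have hle : ∫ x, x ^ (-α) * e x ^ 2 ∂lam (t n)
        ≤ ∫ x, (2 * (x ^ (-α) * θ x ^ 2) + 2 * (x ^ (-α) * η x ^ 2)) ∂lam (t n) := by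
      refine integral_mono_ae (sqi her.meas her.bdd)
        ((i1.const_mul 2).add (hx.1.const_mul 2)) ?_
      filter_upwards [ae_restrict_mem measurableSet_Ioc] with x hx
      have : 0 ≤ x ^ (-α) := Real.rpow_nonneg hx.1.le _
      have h3 : e x ^ 2 ≤ 2 * θ x ^ 2 + 2 * η x ^ 2 := by
        simp only [he]
        nlinarith [sq_nonneg (θ x + η x)]
      calc x ^ (-α) * e x ^ 2 ≤ x ^ (-α) * (2 * θ x ^ 2 + 2 * η x ^ 2) := by gcongr
        _ = _ := by ring
    rw [integral_add (i1.const_mul 2) (hx.1.const_mul 2), integral_const_mul,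
      integral_const_mul] at hle
    have h5 : (2 * C₀ + 2 / (1 - α)) * S = 2 * (C₀ * S) + 2 * (S / (1 - α)) := by ring
    rw [h5]
    linarith [hx.2]
  have E₂ : ∫ q : ℝ × ℝ, kerOff t n α q.1 q.2 * (e q.1 - e q.2) ^ 2
      ∂((lam (t n)).prod (lam (t n))) ≤ (2 * C₀ + 8 / (1 - α) / α) * S := by
    have h1 := integral_kerOff_sq_fst_le hα hα1 ht h0 hη
    have h2 := integral_kerOff_sq_snd_le hα hα1 ht h0 hη
    have hle := integral_le_add_add hi2 (hiθ.const_mul 2) (h1.1.const_mul 4) (h2.1.const_mul 4)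
      (Eventually.of_forall fun q => by
        have h3 : (e q.1 - e q.2) ^ 2
            ≤ 2 * (θ q.1 - θ q.2) ^ 2 + 4 * η q.1 ^ 2 + 4 * η q.2 ^ 2 := by
          simp only [he]
          nlinarith [sq_nonneg (θ q.1 - θ q.2 + (η q.1 - η q.2)), sq_nonneg (η q.1 + η q.2)]
        have h4 := mul_le_mul_of_nonneg_left h3 (kerOff_nonneg (t := t) (n := n) (α := α) q.1 q.2)
        have h5 := mul_le_mul_of_nonneg_right (kerOff_le_ker (t := t) (n := n) (α := α) q.1 q.2)
          (sq_nonneg (θ q.1 - θ q.2))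
        linarith)
    rw [integral_const_mul, integral_const_mul, integral_const_mul] at hle
    have h5 : (2 * C₀ + 8 / (1 - α) / α) * S
        = 2 * (C₀ * S) + 4 * (S / (1 - α) / α) + 4 * (S / (1 - α) / α) := by ring
    rw [h5]
    linarith [h1.2, h2.2]
  have E₃ : ∫ x, cellSlope t n σ L ε x ^ 2 * (x - cellL t n x) ^ (2 - α) ∂lam (t n)
      ≤ (2 * C₀ + 2 / (2 * σ + 1 - α)) * S := by
    refine hsl.2.trans ?_
    rw [add_mul, mul_assoc 2 C₀]
    gcongr
  set I := ∫ x, e x ^ 2 ∂lam (t n) with hI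
  have hI0 : 0 ≤ I := integral_nonneg fun x => sq_nonneg _
  have hl : 0 < 2 * C₂ * h ^ α := by positivity
  have hdual := integral_sq_le_dual hα hα1 ht h0 hh (by positivity : 0 ≤ B + B') her.meas hBe hi
    fun c => by
      have := horth (fun k => Polynomial.C (c k)) fun k => Polynomial.degree_C_le.trans (by simp)
      simpa [pwPoly] using this
  have hmain := hdual.trans (integral_marchaud_mul_le hα hα1 ht h0 hl her.meas hBe hi hi2
    (measurable_cellSlope L ε) (cellSlope_nonneg ht hL0 hη.nonneg) (fun x hx y h1 h2 => by
      have hw : 0 < x - cellL t n x := sub_pos.2 (mem_cell ht h0 hx).1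
      have e1 : θ x - η x - (θ y - η y) = (θ x - θ y) - (η x - η y) := by ring
      rw [e1, cellSlope, abs_of_pos hw, mul_add]
      exact (abs_sub _ _).trans (add_le_add (hL x hx y h1 h2) (hη.incr x hx y h1 h2)))
    hsl.1 (measurable_dualFun her.meas)
    (fun x hx => abs_dualFun_le hα hα1 ht h0 hh (by positivity : 0 ≤ B + B') hBe hx) hζ.1)
  have hsum : (∫ x, x ^ (-α) * e x ^ 2 ∂lam (t n))
      + (∫ q : ℝ × ℝ, kerOff t n α q.1 q.2 * (e q.1 - e q.2) ^ 2 ∂((lam (t n)).prod (lam (t n))))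
      + (∫ x, cellSlope t n σ L ε x ^ 2 * (x - cellL t n x) ^ (2 - α) ∂lam (t n)) / (1 - α)
      ≤ C₁ * S := by
    have h5 : C₁ * S = (2 * C₀ + 2 / (1 - α)) * S + (2 * C₀ + 8 / (1 - α) / α) * S
      + (2 * C₀ + 2 / (2 * σ + 1 - α)) * S / (1 - α) := by rw [hC₁]; ring
    rw [h5]
    gcongr
  have hA : (∫ x, (x - cellL t n x) ^ (-α) * dualFun t n α e x ^ 2 ∂lam (t n))
      / (2 * C₂ * h ^ α * (1 - α)) ≤ I / 2 := by
    have hA2 : ∫ x, (x - cellL t n x) ^ (-α) * dualFun t n α e x ^ 2 ∂lam (t n)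
        ≤ h ^ α / α * (K + 1) * I := by
      refine hζ.2.trans ?_
      gcongr
      linarith
    refine (div_le_div_of_nonneg_right hA2 (by positivity)).trans (le_of_eq ?_)
    rw [hC₂]
    field_simp
  have hfin : I ≤ 2 * C₂ * h ^ α * (C₁ * S) + I / 2 :=
    hmain.trans (add_le_add (mul_le_mul_of_nonneg_left hsum hl.le) hA)
  linarith

end

section

variable {t : ℕ → ℝ} {n : ℕ} {α σ : ℝ}

/-! ### Piecewise polynomial approximation of functions with an initial singularity -/

theorem exists_antiderivative {p : ℕ} {q : Polynomial ℝ} (hq : q.degree ≤ p) (a c : ℝ) :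
    ∃ P : Polynomial ℝ, P.degree ≤ (p + 1 : ℕ) ∧ P.derivative = q ∧ P.eval a = c := by
  set P₀ : Polynomial ℝ := ∑ i ∈ Finset.range (p + 1),
    Polynomial.C (q.coeff i / ((i : ℝ) + 1)) * Polynomial.X ^ (i + 1) with hP₀
  have hd : P₀.derivative = q := by
    rw [q.as_sum_range' (p + 1) (Nat.lt_succ_of_le (Polynomial.natDegree_le_of_degree_le hq)),
      hP₀, Polynomial.derivative_sum]
    refine Finset.sum_congr rfl fun i _ => ?_
    rw [Polynomial.derivative_C_mul_X_pow, Nat.add_sub_cancel, Polynomial.C_mul_X_pow_eq_monomial]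
    congr 1
    have : (i : ℝ) + 1 ≠ 0 := by positivity
    push_cast
    field_simp
  refine ⟨P₀ + Polynomial.C (c - P₀.eval a), ?_, by simp [hd], by simp⟩
  refine (Polynomial.degree_add_le _ _).trans (max_le ?_
    (Polynomial.degree_C_le.trans (by exact_mod_cast Nat.zero_le _)))
  refine (Polynomial.degree_sum_le _ _).trans (Finset.sup_le fun i hi => ?_)
  refine (Polynomial.degree_C_mul_X_pow_le _ _).trans ?_
  have := Finset.mem_range.1 hi
  exact_mod_cast (by omega : i + 1 ≤ p + 1)

theorem exists_taylor_approx {a b M : ℝ} (hab : a ≤ b) (p : ℕ) : ∀ g : ℕ → ℝ → ℝ,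
    (∀ l ≤ p, ∀ x ∈ Icc a b, HasDerivWithinAt (g l) (g (l + 1) x) (Icc a b) x) →
    (∀ x ∈ Icc a b, |g (p + 1) x| ≤ M) →
    ∃ P : Polynomial ℝ, P.degree ≤ p ∧
      (∀ x ∈ Icc a b, |g 0 x - P.eval x| ≤ M * (b - a) ^ (p + 1)) ∧
      ∀ x ∈ Icc a b, ∀ y ∈ Icc a b,
        |(g 0 x - P.eval x) - (g 0 y - P.eval y)| ≤ M * (b - a) ^ p * |x - y| := by
  have bdd_of_lip : ∀ {f : ℝ → ℝ} {m : ℕ}, 0 ≤ M → f a = 0 →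
      (∀ x ∈ Icc a b, ∀ y ∈ Icc a b, |f x - f y| ≤ M * (b - a) ^ m * |x - y|) →
      ∀ x ∈ Icc a b, |f x| ≤ M * (b - a) ^ (m + 1) := by
    intro f m hM hfa hf x hx
    have h := hf x hx a (left_mem_Icc.2 hab)
    rw [hfa, sub_zero, abs_of_nonneg (sub_nonneg.2 hx.1)] at h
    refine h.trans ?_
    rw [pow_succ, ← mul_assoc]
    have := sub_nonneg.2 hab
    gcongr
    exact hx.2
  induction p with
  | zero =>
    intro g hg hM
    have hM0 : 0 ≤ M := (abs_nonneg _).trans (hM a (left_mem_Icc.2 hab))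
    have hlip : ∀ x ∈ Icc a b, ∀ y ∈ Icc a b,
        |(g 0 x - (Polynomial.C (g 0 a)).eval x) - (g 0 y - (Polynomial.C (g 0 a)).eval y)|
          ≤ M * (b - a) ^ 0 * |x - y| := by
      intro x hx y hy
      have := (convex_Icc a b).norm_image_sub_le_of_norm_hasDerivWithin_le (hg 0 le_rfl)
        hM hy hx
      simpa using this
    exact ⟨Polynomial.C (g 0 a), Polynomial.degree_C_le, bdd_of_lip hM0 (by simp) hlip, hlip⟩
  | succ p ih =>
    intro g hg hM
    have hM0 : 0 ≤ M := (abs_nonneg _).trans (hM a (left_mem_Icc.2 hab))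
    obtain ⟨q, hq, hq1, -⟩ := ih (fun l => g (l + 1))
      (fun l hl x hx => hg (l + 1) (by omega) x hx) hM
    obtain ⟨P, hP, hPd, hPa⟩ := exists_antiderivative hq a (g 0 a)
    have hlip : ∀ x ∈ Icc a b, ∀ y ∈ Icc a b,
        |(g 0 x - P.eval x) - (g 0 y - P.eval y)| ≤ M * (b - a) ^ (p + 1) * |x - y| := by
      intro x hx y hy
      refine (convex_Icc a b).norm_image_sub_le_of_norm_hasDerivWithin_le
        (f := fun x => g 0 x - P.eval x) (f' := fun x => g 1 x - q.eval x)
        (fun z hz => ?_) hq1 hy hx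
      have := (hg 0 (by omega) z hz).sub (P.hasDerivAt z).hasDerivWithinAt
      rwa [hPd] at this
    exact ⟨P, hP, bdd_of_lip hM0 (by rw [hPa, sub_self]) hlip, hlip⟩

theorem rpow_sub_rpow_le_mul {x y : ℝ} (hσ1 : σ < 1) (hy : 0 < y) (hyx : y ≤ x) :
    x ^ σ - y ^ σ ≤ (x - y) * x ^ (σ - 1) := by
  have hx : 0 < x := hy.trans_le hyx
  have h1 : x ^ (σ - 1) ≤ y ^ (σ - 1) := Real.rpow_le_rpow_of_nonpos hy hyx (by linarith)
  have h2 : x * x ^ (σ - 1) = x ^ σ := by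
    rw [Real.rpow_sub_one hx.ne']
    field_simp
  have h3 : y * y ^ (σ - 1) = y ^ σ := by
    rw [Real.rpow_sub_one hy.ne']
    field_simp
  rw [← h2, ← h3]
  nlinarith

/-- Increments of a function whose derivative has an integrable power singularity. -/
theorem abs_sub_le_of_singular_deriv (hσ : 0 < σ) (hσ1 : σ < 1) {T C₀ : ℝ} (hC₀ : 0 ≤ C₀)
    {v v' : ℝ → ℝ}
    (hv : ∀ x ∈ Ioc 0 T, HasDerivWithinAt v (v' x) (Ioc 0 T) x)
    (hv' : ∀ x ∈ Ioc 0 T, |v' x| ≤ C₀ * (1 + x ^ (σ - 1))) {x y : ℝ} (hy : 0 < y) (hyx : y ≤ x)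
    (hx : x ≤ T) : |v x - v y| ≤ (x - y) * (C₀ * (T ^ (1 - σ) + 1 / σ) * x ^ (σ - 1)) := by
  have hx0 : 0 < x := hy.trans_le hyx
  have hT : 0 < T := hx0.trans_le hx
  have hsub : Icc y x ⊆ Ioc 0 T := fun s hs => ⟨hy.trans_le hs.1, hs.2.trans hx⟩
  have hBd : ∀ s ∈ Icc y x, HasDerivAt (fun s => C₀ * ((s - y) + (s ^ σ - y ^ σ) / σ))
      (C₀ * (1 + s ^ (σ - 1))) s := by
    intro s hs
    have h1 : HasDerivAt (fun s : ℝ => s ^ σ) (σ * s ^ (σ - 1)) s :=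
      Real.hasDerivAt_rpow_const (Or.inl (hsub hs).1.ne')
    have h2 := (((hasDerivAt_id s).sub_const y).add
      ((h1.sub_const (y ^ σ)).div_const σ)).const_mul C₀
    rw [mul_div_cancel_left₀ _ hσ.ne'] at h2
    exact h2
  have key := image_norm_le_of_norm_deriv_right_le_deriv_boundary' (a := y) (b := x)
    (f := fun s => v s - v y) (f' := v')
    (B := fun s => C₀ * ((s - y) + (s ^ σ - y ^ σ) / σ)) (B' := fun s => C₀ * (1 + s ^ (σ - 1)))
    (fun s hs => (((hv s (hsub hs)).continuousWithinAt.mono hsub).sub continuousWithinAt_const))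
    (fun s hs => by
      have hsT : s < T := hs.2.trans_le hx
      have hs0 : 0 < s := hy.trans_le hs.1
      exact (((hv s ⟨hs0, hsT.le⟩).hasDerivAt (Ioc_mem_nhds hs0 hsT)).sub_const _).hasDerivWithinAt)
    (by simp) (fun s hs => (hBd s hs).continuousAt.continuousWithinAt)
    (fun s hs => (hBd s (Ico_subset_Icc_self hs)).hasDerivWithinAt)
    (fun s hs => hv' s (hsub (Ico_subset_Icc_self hs))) (right_mem_Icc.2 hyx)
  refine key.trans ?_
  have h1 := rpow_sub_rpow_le_mul hσ1 hy hyx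
  have h2 : 1 ≤ T ^ (1 - σ) * x ^ (σ - 1) := by
    rw [show σ - 1 = -(1 - σ) by ring, Real.rpow_neg hx0.le, ← div_eq_mul_inv,
      one_le_div (by positivity)]
    exact Real.rpow_le_rpow hx0.le hx (by linarith)
  have hxy : 0 ≤ x - y := by linarith
  calc C₀ * ((x - y) + (x ^ σ - y ^ σ) / σ)
      ≤ C₀ * ((x - y) * (T ^ (1 - σ) * x ^ (σ - 1)) + ((x - y) * x ^ (σ - 1)) / σ) := by
        gcongr
        exact le_mul_of_one_le_right hxy h2
    _ = _ := by ring

/-- Bound for the cellwise approximation error. -/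
noncomputable def approxBound (t : ℕ → ℝ) (σ : ℝ) (p : ℕ) (C : ℝ) (k : ℕ) : ℝ :=
  C * (t (k + 1) - t k) ^ (p + 1) * t (k + 1) ^ (σ - (p + 1 : ℕ))

theorem exists_cellSmall_approx (hσ : 0 < σ) (hσ1 : σ < 1) (p : ℕ) {T C₀ ρ : ℝ} (hT : 0 < T)
    (hC₀ : 0 < C₀) (hρ : 0 < ρ) :
    ∃ C : ℝ, 0 < C ∧ ∀ (t : ℕ → ℝ) (n : ℕ) (v w : ℝ → ℝ) (g : ℕ → ℝ → ℝ),
      StrictMono t → t 0 = 0 → t n ≤ T → (∀ k, 1 ≤ k → t (k + 1) ≤ ρ * t k) →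
      Measurable w → (∀ x ∈ Ioc 0 T, w x = v x) → g 0 = v →
      (∀ x ∈ Ioc 0 T, |v x - v 0| ≤ C₀ * x ^ σ) →
      (∀ l ≤ p, ∀ x ∈ Ioc 0 T, HasDerivWithinAt (g l) (g (l + 1) x) (Ioc 0 T) x) →
      (∀ x ∈ Ioc 0 T, ∀ l ≤ p + 1, |g l x| ≤ C₀ * (1 + x ^ (σ - (l : ℝ)))) →
      ∃ P : ℕ → Polynomial ℝ, (∀ k, (P k).degree ≤ p) ∧
        CellSmall t n σ (approxBound t σ p C) fun x => w x - pwPoly t n P x := by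
  have hpσ : 0 < ((p + 1 : ℕ) : ℝ) - σ := by
    push_cast
    have : (0 : ℝ) ≤ p := by positivity
    linarith
  set C₁ := C₀ * (T ^ (((p + 1 : ℕ) : ℝ) - σ) + ρ ^ (((p + 1 : ℕ) : ℝ) - σ)) with hC₁
  set C₂ := C₀ * (T ^ (1 - σ) + 1 / σ) with hC₂
  have hC₁0 : 0 < C₁ := by positivity
  have hC₂0 : 0 < C₂ := by positivity
  set C := C₁ + C₂ + C₀ with hC
  have hC0 : 0 < C := by positivity
  refine ⟨C, hC0, ?_⟩
  intro t n v w g ht h0 htn hρt hw hwv hg0 hv0 hg hgb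
  have htp : ∀ k, 0 < t (k + 1) := fun k => h0 ▸ ht k.succ_pos
  have htnn : ∀ k, 0 ≤ t k := fun k => h0 ▸ ht.monotone k.zero_le
  have hτ : ∀ k, 0 < t (k + 1) - t k := fun k => sub_pos.2 (ht k.lt_succ_self)
  -- the polynomials on the cells away from the singularity
  have hP : ∀ k, ∃ P : Polynomial ℝ, P.degree ≤ p ∧ (k = 0 → P = Polynomial.C (v 0)) ∧
      (1 ≤ k → k < n → ∀ x ∈ Icc (t k) (t (k + 1)), |v x - P.eval x| ≤ approxBound t σ p C k ∧
        ∀ y ∈ Icc (t k) (t (k + 1)), |(v x - P.eval x) - (v y - P.eval y)|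
          ≤ approxBound t σ p C k / (t (k + 1) - t k) * |x - y|) := by
    intro k
    rcases Nat.eq_zero_or_pos k with rfl | hk
    · exact ⟨Polynomial.C (v 0), Polynomial.degree_C_le.trans (by exact_mod_cast Nat.zero_le _),
        fun _ => rfl, fun h => absurd h (by omega)⟩
    by_cases hkn : k < n
    swap
    · exact ⟨0, by simp, fun h => absurd h (by omega), fun _ h => absurd h hkn⟩
    have htk : 0 < t k := h0 ▸ ht hk
    have hkT : t (k + 1) ≤ T := (ht.monotone hkn).trans htn
    have hsub : Icc (t k) (t (k + 1)) ⊆ Ioc 0 T := fun s hs =>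
      ⟨htk.trans_le hs.1, hs.2.trans hkT⟩
    set M := C * t (k + 1) ^ (σ - ((p + 1 : ℕ) : ℝ)) with hM
    have hMb : ∀ x ∈ Icc (t k) (t (k + 1)), |g (p + 1) x| ≤ M := by
      intro x hx
      refine (hgb x (hsub hx) (p + 1) le_rfl).trans ?_
      have hx0 := (hsub hx).1
      set s := ((p + 1 : ℕ) : ℝ) - σ with hs
      have es : σ - ((p + 1 : ℕ) : ℝ) = -s := by rw [hs]; ring
      have a0 := htp k
      have a1 : 1 ≤ T ^ s * t (k + 1) ^ (-s) := by
        rw [Real.rpow_neg a0.le, ← div_eq_mul_inv, one_le_div (by positivity)]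
        exact Real.rpow_le_rpow a0.le hkT hpσ.le
      have a2 : x ^ (-s) ≤ ρ ^ s * t (k + 1) ^ (-s) := by
        have b1 : t (k + 1) / ρ ≤ x := by
          rw [div_le_iff₀' hρ]
          exact (hρt k hk).trans (by gcongr; exact hx.1)
        refine (Real.rpow_le_rpow_of_nonpos (by positivity) b1 (by linarith)).trans (le_of_eq ?_)
        rw [Real.div_rpow a0.le hρ.le, Real.rpow_neg hρ.le s, div_inv_eq_mul, mul_comm]
      rw [hM, es]
      calc C₀ * (1 + x ^ (-s)) ≤ C₀ * (T ^ s * t (k + 1) ^ (-s) + ρ ^ s * t (k + 1) ^ (-s)) := by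
            gcongr
        _ = C₁ * t (k + 1) ^ (-s) := by rw [hC₁]; ring
        _ ≤ C * t (k + 1) ^ (-s) := by
            gcongr
            rw [hC]
            linarith
    obtain ⟨P, hPd, hP1, hP2⟩ := exists_taylor_approx (sub_nonneg.1 (hτ k).le) p g
      (fun l hl x hx => (hg l hl x (hsub hx)).mono hsub) hMb
    rw [hg0] at hP1 hP2
    have e1 : M * (t (k + 1) - t k) ^ (p + 1) = approxBound t σ p C k := by
      rw [hM, approxBound]
      ring
    have e2 : M * (t (k + 1) - t k) ^ p = approxBound t σ p C k / (t (k + 1) - t k) := by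
      rw [← e1, pow_succ]
      have := (hτ k).ne'
      field_simp
    rw [e1] at hP1
    rw [e2] at hP2
    exact ⟨P, hPd, fun h => absurd h (by omega), fun _ _ x hx => ⟨hP1 x hx, hP2 x hx⟩⟩
  choose P hPd hPz hPk using hP
  have hε0 : approxBound t σ p C 0 = C * t 1 ^ σ := by
    rw [approxBound, h0, sub_zero, zero_add, ← Real.rpow_natCast (t 1) (p + 1), mul_assoc,
      ← Real.rpow_add (htp 0)]
    congr 2
    ring
  have hεn : ∀ k, 0 ≤ approxBound t σ p C k := fun k => by
    have := hτ k
    have := htp k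
    unfold approxBound
    positivity
  refine ⟨P, hPd, hw.sub (measurable_pwPoly t n P), hεn, fun x hx => ?_, fun x hx y h1 h2 => ?_⟩
  · have hc := mem_cell ht h0 hx
    have hxT : x ∈ Ioc 0 T := ⟨hx.1, hx.2.trans htn⟩
    have hkn := cellIdx_lt ht h0 hx
    rw [hwv x hxT]
    unfold pwPoly
    unfold cellL cellR at hc
    set k := cellIdx t n x
    rcases Nat.eq_zero_or_pos k with hk | hk
    · rw [hk] at hc ⊢
      rw [hPz 0 rfl, Polynomial.eval_C, hε0]
      refine (hv0 x hxT).trans ?_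
      have : x ^ σ ≤ t 1 ^ σ := Real.rpow_le_rpow hx.1.le hc.2 hσ.le
      have : C₀ ≤ C := by rw [hC]; linarith
      have := hx.1
      gcongr
    · exact (hPk k hk hkn x ⟨hc.1.le, hc.2⟩).1
  · have hc := mem_cell ht h0 hx
    have hxT : x ∈ Ioc 0 T := ⟨hx.1, hx.2.trans htn⟩
    have hkn := cellIdx_lt ht h0 hx
    have hyi := cellIdx_eq_of_cellL_lt ht h0 hx h1 h2.le
    have hy0 : 0 < y := (cellL_nonneg ht h0 x).trans_lt h1
    have hyT : y ∈ Ioc 0 T := ⟨hy0, h2.le.trans hxT.2⟩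
    have hxy : 0 < x - y := sub_pos.2 h2
    rw [hwv x hxT, hwv y hyT]
    unfold pwPoly
    rw [hyi]
    unfold cellL cellR at hc ⊢
    unfold cellL at h1
    set k := cellIdx t n x
    rcases Nat.eq_zero_or_pos k with hk | hk
    · rw [hk] at hc ⊢
      rw [hPz 0 rfl, Polynomial.eval_C, Polynomial.eval_C, sub_sub_sub_cancel_right, hε0, h0,
        sub_zero, sub_zero]
      refine (abs_sub_le_of_singular_deriv hσ hσ1 hC₀.le (fun s hs => hg0 ▸ hg 0 p.zero_le s hs)
        (fun s hs => by simpa using hgb s hs 1 (by omega)) hy0 h2.le hxT.2).trans ?_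
      have e1 : C * t 1 ^ σ * t 1 ^ (-σ) = C := by
        rw [mul_assoc, ← Real.rpow_add (htp 0), add_neg_cancel, Real.rpow_zero, mul_one]
      rw [zero_add, e1]
      have : C₂ ≤ C := by rw [hC]; linarith
      have := hx.1
      gcongr
    · refine ((hPk k hk hkn x ⟨hc.1.le, hc.2⟩).2 y ⟨h1.le, h2.le.trans hc.2⟩).trans ?_
      have hτk := hτ k
      have hw0 : 0 < x - t k := sub_pos.2 hc.1
      have e1 : (t (k + 1) - t k) ^ (-σ) * (t (k + 1) - t k) ^ (σ - 1)
          = (t (k + 1) - t k)⁻¹ := by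
        rw [← Real.rpow_add hτk, ← Real.rpow_neg_one]
        congr 1
        ring
      have e2 : (t (k + 1) - t k) ^ (σ - 1) ≤ (x - t k) ^ (σ - 1) :=
        Real.rpow_le_rpow_of_nonpos hw0 (by linarith [hc.2]) (by linarith)
      rw [abs_of_pos hxy, mul_comm _ (x - y), div_eq_mul_inv, ← e1, ← mul_assoc (approxBound ..)]
      have := hεn k
      gcongr

end

/-! ### The graded mesh -/

section mesh

variable {T r : ℝ} {N : ℕ}

theorem gradedMesh_eq (T r : ℝ) (N k : ℕ) :
    gradedMesh T r N k = T * (N : ℝ) ^ (-r) * (k : ℝ) ^ r := by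
  rw [gradedMesh, Real.div_rpow k.cast_nonneg N.cast_nonneg, Real.rpow_neg N.cast_nonneg]
  ring

theorem gradedMesh_strictMono (hT : 0 < T) (hr : 1 ≤ r) (hN : 1 ≤ N) :
    StrictMono (gradedMesh T r N) := by
  intro a b hab
  have hN' : (0 : ℝ) < N := by exact_mod_cast hN
  simp only [gradedMesh_eq]
  gcongr

theorem gradedMesh_zero (hr : 1 ≤ r) : gradedMesh T r N 0 = 0 := by
  simp [gradedMesh, Real.zero_rpow (by linarith : r ≠ 0)]

theorem gradedMesh_le (hT : 0 < T) (hr : 1 ≤ r) (hN : 1 ≤ N) {n : ℕ} (hn : n ≤ N) :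
    gradedMesh T r N n ≤ T := by
  have h := (gradedMesh_strictMono hT hr hN).monotone hn
  have hN' : (N : ℝ) ≠ 0 := by positivity
  have e : gradedMesh T r N N = T := by simp [gradedMesh, div_self hN']
  rwa [e] at h

theorem gradedMesh_succ_le (hT : 0 < T) (hr : 1 ≤ r) {k : ℕ} (hk : 1 ≤ k) :
    gradedMesh T r N (k + 1) ≤ 2 ^ r * gradedMesh T r N k := by
  have hk' : (1 : ℝ) ≤ k := by exact_mod_cast hk
  rw [gradedMesh_eq, gradedMesh_eq, mul_left_comm, ← Real.mul_rpow (by norm_num) k.cast_nonneg]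
  gcongr
  push_cast
  linarith

theorem gradedMesh_step_monotone (hT : 0 < T) (hr : 1 ≤ r) :
    Monotone fun k => gradedMesh T r N (k + 1) - gradedMesh T r N k := by
  refine monotone_nat_of_le_succ fun k => ?_
  simp only [gradedMesh_eq, ← mul_sub]
  refine mul_le_mul_of_nonneg_left ?_ (by positivity)
  have h := (convexOn_rpow hr).2 (mem_Ici.2 (by positivity : (0 : ℝ) ≤ k))
    (mem_Ici.2 (by positivity : (0 : ℝ) ≤ k + 2)) (by norm_num : (0 : ℝ) ≤ 1 / 2)
    (by norm_num : (0 : ℝ) ≤ 1 / 2) (by norm_num)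
  simp only [smul_eq_mul] at h
  rw [show (1 / 2 : ℝ) * k + 1 / 2 * (k + 2) = k + 1 by ring] at h
  push_cast
  rw [show (k : ℝ) + 1 + 1 = k + 2 by ring]
  linarith

theorem gradedMesh_step_le (hT : 0 < T) (hr : 1 ≤ r) (k : ℕ) :
    gradedMesh T r N (k + 1) - gradedMesh T r N k
      ≤ r * (T * (N : ℝ) ^ (-r)) * ((k : ℝ) + 1) ^ (r - 1) := by
  have hk : (0 : ℝ) < (k : ℝ) + 1 := by positivity
  have h := one_add_mul_self_le_rpow_one_add (s := -1 / ((k : ℝ) + 1)) (p := r)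
    (by rw [neg_div, neg_le_neg_iff, div_le_one hk]; linarith [k.cast_nonneg (α := ℝ)]) hr
  rw [show 1 + -1 / ((k : ℝ) + 1) = k / (k + 1) by field_simp; ring,
    Real.div_rpow k.cast_nonneg hk.le, le_div_iff₀ (by positivity)] at h
  rw [Real.rpow_sub_one hk.ne', gradedMesh_eq, gradedMesh_eq, ← mul_sub]
  push_cast
  calc T * (N : ℝ) ^ (-r) * (((k : ℝ) + 1) ^ r - k ^ r)
      ≤ T * (N : ℝ) ^ (-r) * ((k + 1) ^ r - (1 + r * (-1 / ((k : ℝ) + 1))) * (k + 1) ^ r) := by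
        gcongr
    _ = _ := by ring

theorem gradedMesh_step_le_div (hT : 0 < T) (hr : 1 ≤ r) (hN : 1 ≤ N) {k : ℕ} (hk : k < N) :
    gradedMesh T r N (k + 1) - gradedMesh T r N k ≤ r * T / N := by
  have hN' : (0 : ℝ) < N := by exact_mod_cast hN
  have hkN : (k : ℝ) + 1 ≤ N := by exact_mod_cast hk
  refine (gradedMesh_step_le hT hr k).trans ?_
  calc r * (T * (N : ℝ) ^ (-r)) * ((k : ℝ) + 1) ^ (r - 1)
      ≤ r * (T * (N : ℝ) ^ (-r)) * (N : ℝ) ^ (r - 1) := by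
        gcongr
    _ = r * T * ((N : ℝ) ^ (-r) * (N : ℝ) ^ (r - 1)) := by ring
    _ = r * T / N := by
        rw [← Real.rpow_add hN', show -r + (r - 1) = -1 by ring, Real.rpow_neg_one,
          div_eq_mul_inv]

end mesh

theorem sum_rpow_le_of_pos {γ : ℝ} (hγ : 0 < γ) (n : ℕ) :
    ∑ k ∈ Finset.range n, ((k : ℝ) + 1) ^ (γ - 1) ≤ (1 + 1 / γ) * (n : ℝ) ^ γ := by
  rcases n.eq_zero_or_pos with rfl | hn
  · simp [Real.zero_rpow hγ.ne']
  have hn' : (0 : ℝ) < n := by exact_mod_cast hn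
  have hγ' : 0 < 1 / γ := by positivity
  have hnγ : 0 < (n : ℝ) ^ γ := by positivity
  rcases le_total 1 γ with h1 | h1
  · calc ∑ k ∈ Finset.range n, ((k : ℝ) + 1) ^ (γ - 1)
        ≤ ∑ _k ∈ Finset.range n, (n : ℝ) ^ (γ - 1) := by
          refine Finset.sum_le_sum fun k hk => Real.rpow_le_rpow (by positivity) ?_ (by linarith)
          exact_mod_cast Finset.mem_range.1 hk
      _ = (n : ℝ) ^ γ := by
          rw [Finset.sum_const, Finset.card_range, nsmul_eq_mul, Real.rpow_sub_one hn'.ne']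
          field_simp
      _ ≤ _ := le_mul_of_one_le_left hnγ.le (by linarith)
  · have hterm : ∀ k : ℕ, ((k : ℝ) + 1) ^ (γ - 1)
        ≤ 1 / γ * (((k + 1 : ℕ) : ℝ) ^ γ - (k : ℝ) ^ γ) := by
      intro k
      have hk : (0 : ℝ) < (k : ℝ) + 1 := by positivity
      have h := rpow_one_add_le_one_add_mul_self (s := -1 / ((k : ℝ) + 1)) (p := γ)
        (by rw [neg_div, neg_le_neg_iff, div_le_one hk]; linarith [k.cast_nonneg (α := ℝ)])
        hγ.le h1
      rw [show 1 + -1 / ((k : ℝ) + 1) = k / (k + 1) by field_simp; ring,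
        Real.div_rpow k.cast_nonneg hk.le, div_le_iff₀ (by positivity)] at h
      rw [one_div_mul_eq_div, le_div_iff₀ hγ, Real.rpow_sub_one hk.ne']
      push_cast
      calc ((k : ℝ) + 1) ^ γ / (k + 1) * γ
          = (k + 1) ^ γ - (1 + γ * (-1 / ((k : ℝ) + 1))) * (k + 1) ^ γ := by ring
        _ ≤ _ := by linarith
    calc ∑ k ∈ Finset.range n, ((k : ℝ) + 1) ^ (γ - 1)
        ≤ ∑ k ∈ Finset.range n, 1 / γ * (((k + 1 : ℕ) : ℝ) ^ γ - (k : ℝ) ^ γ) :=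
          Finset.sum_le_sum fun k _ => hterm k
      _ = 1 / γ * (n : ℝ) ^ γ := by
          rw [← Finset.mul_sum, Finset.sum_range_sub fun k : ℕ => (k : ℝ) ^ γ]
          simp [Real.zero_rpow hγ.ne']
      _ ≤ _ := by gcongr; linarith

theorem sum_inv_le_one_add_log (n : ℕ) :
    ∑ k ∈ Finset.range n, ((k : ℝ) + 1) ^ (-1 : ℝ) ≤ 1 + Real.log n := by
  have h := harmonic_le_one_add_log n
  simp only [harmonic, Rat.cast_sum] at h
  refine le_trans (le_of_eq (Finset.sum_congr rfl fun k _ => ?_)) h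
  rw [Real.rpow_neg_one]
  push_cast
  rfl

theorem summable_rpow_sub_one {γ : ℝ} (hγ : γ < 0) :
    Summable fun k : ℕ => ((k : ℝ) + 1) ^ (γ - 1) := by
  have h := (summable_nat_add_iff 1).2 (Real.summable_nat_rpow.2 (by linarith : γ - 1 < -1))
  simpa using h

theorem cellSum_gradedMesh_le {T r α σ : ℝ} (hT : 0 < T) (hr : 1 ≤ r) (hα1 : α < 1) (p : ℕ)
    (C : ℝ) {N : ℕ} (hN : 1 ≤ N) (n : ℕ) :
    cellSum (gradedMesh T r N) n α (approxBound (gradedMesh T r N) σ p C) ≤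
      C ^ 2 * r ^ (2 * (p : ℝ) + 3 - α) * T ^ (1 + 2 * σ - α) *
        (N : ℝ) ^ (-(r * (1 + 2 * σ - α))) *
        ∑ k ∈ Finset.range n,
          ((k : ℝ) + 1) ^ (r * (1 + 2 * σ - α) - (2 * p + 2 - α) - 1) := by
  have hN' : (0 : ℝ) < N := by exact_mod_cast hN
  have hr0 : 0 < r := by linarith
  rw [cellSum, Finset.mul_sum]
  refine Finset.sum_le_sum fun k _ => ?_
  have hτ : 0 < gradedMesh T r N (k + 1) - gradedMesh T r N k :=
    sub_pos.2 (gradedMesh_strictMono hT hr hN k.lt_succ_self)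
  have hle := gradedMesh_step_le (N := N) hT hr k
  have ht : gradedMesh T r N (k + 1) = T * (N : ℝ) ^ (-r) * ((k : ℝ) + 1) ^ r := by
    rw [gradedMesh_eq]; push_cast; rfl
  rw [approxBound]
  set τ := gradedMesh T r N (k + 1) - gradedMesh T r N k
  rw [ht]
  set A := T * (N : ℝ) ^ (-r) with hA
  have hA0 : 0 < A := by positivity
  set m := (k : ℝ) + 1 with hm
  have hm0 : 0 < m := by positivity
  have e1 : (C * τ ^ (p + 1) * (A * m ^ r) ^ (σ - (p + 1 : ℕ))) ^ 2 * τ ^ (1 - α)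
      = C ^ 2 * (A * m ^ r) ^ (2 * (σ - (p + 1 : ℕ))) * τ ^ (2 * (p : ℝ) + 3 - α) := by
    have f1 : ((A * m ^ r) ^ (σ - (p + 1 : ℕ))) ^ 2 = (A * m ^ r) ^ (2 * (σ - (p + 1 : ℕ))) := by
      rw [← Real.rpow_natCast, ← Real.rpow_mul (by positivity)]
      congr 1
      push_cast
      ring
    have f2 : (τ ^ (p + 1)) ^ 2 * τ ^ (1 - α) = τ ^ (2 * (p : ℝ) + 3 - α) := by
      rw [← pow_mul, ← Real.rpow_natCast, ← Real.rpow_add hτ]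
      congr 1
      push_cast
      ring
    rw [mul_pow, mul_pow, f1, ← f2]
    ring
  have e2 : τ ^ (2 * (p : ℝ) + 3 - α) ≤ (r * A * m ^ (r - 1)) ^ (2 * (p : ℝ) + 3 - α) :=
    Real.rpow_le_rpow hτ.le hle (by linarith [p.cast_nonneg (α := ℝ)])
  rw [e1]
  refine (mul_le_mul_of_nonneg_left e2 (by positivity)).trans (le_of_eq ?_)
  have e3 : A ^ (1 + 2 * σ - α) = T ^ (1 + 2 * σ - α) * (N : ℝ) ^ (-(r * (1 + 2 * σ - α))) := by
    rw [hA, Real.mul_rpow hT.le (by positivity), ← Real.rpow_mul hN'.le, neg_mul]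
  clear_value A m
  rw [mul_assoc (C ^ 2 * _) (T ^ _), ← e3, Real.mul_rpow hA0.le (by positivity),
    Real.mul_rpow (by positivity) (by positivity), Real.mul_rpow hr0.le hA0.le,
    ← Real.rpow_mul hm0.le, ← Real.rpow_mul hm0.le]
  have e4 : A ^ (1 + 2 * σ - α)
      = A ^ (2 * (σ - (p + 1 : ℕ))) * A ^ (2 * (p : ℝ) + 3 - α) := by
    rw [← Real.rpow_add hA0]
    congr 1
    push_cast
    ring
  have e5 : m ^ (r * (1 + 2 * σ - α) - (2 * p + 2 - α) - 1)
      = m ^ (r * (2 * (σ - (p + 1 : ℕ)))) * m ^ ((r - 1) * (2 * (p : ℝ) + 3 - α)) := by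
    rw [← Real.rpow_add hm0]
    congr 1
    push_cast
    ring
  rw [e4, e5]
  ring

theorem exists_le_projErrBound {T r α σ : ℝ} (hT : 0 < T) (hr : 1 ≤ r) (hα1 : α < 1)
    (hσ : 0 < σ) (p : ℕ) (C : ℝ) :
    ∃ K : ℝ, 0 < K ∧ ∀ N n : ℕ, 1 ≤ N → 1 ≤ n →
      (r * T / N) ^ α * cellSum (gradedMesh T r N) n α (approxBound (gradedMesh T r N) σ p C) ≤
        K * projErrBound T r α σ p N n := by
  have hr0 : 0 < r := by linarith
  have hs : 0 < 1 + 2 * σ - α := by linarith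
  set s := 1 + 2 * σ - α with hsd
  set γ := r * s - (2 * p + 2 - α) with hγ
  set D := (r * T) ^ α * (C ^ 2 * r ^ (2 * (p : ℝ) + 3 - α) * T ^ s) with hD
  have hD0 : 0 ≤ D := by positivity
  have hmain : ∀ N n : ℕ, 1 ≤ N →
      (r * T / N) ^ α * cellSum (gradedMesh T r N) n α (approxBound (gradedMesh T r N) σ p C) ≤
        D * (N : ℝ) ^ (-(r * s) - α) * ∑ k ∈ Finset.range n, ((k : ℝ) + 1) ^ (γ - 1) := by
    intro N n hN
    have hN' : (0 : ℝ) < N := by exact_mod_cast hN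
    refine (mul_le_mul_of_nonneg_left (cellSum_gradedMesh_le hT hr hα1 p C hN n)
      (by positivity)).trans (le_of_eq ?_)
    rw [Real.div_rpow (by positivity) hN'.le, Real.rpow_sub hN', hD]
    ring
  have hpos : ∀ N n : ℕ, 1 ≤ N → 0 ≤ (N : ℝ) ^ (-(r * s) - α) := fun N n hN => by positivity
  rcases lt_trichotomy γ 0 with h | h | h
  · have hlt : r < (2 * (p : ℝ) + 2 - α) / s := by
      rw [lt_div_iff₀ hs]; linarith
    refine ⟨D * (∑' k : ℕ, ((k : ℝ) + 1) ^ (γ - 1)) + 1, ?_, fun N n hN hn => ?_⟩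
    · have : 0 ≤ ∑' k : ℕ, ((k : ℝ) + 1) ^ (γ - 1) := tsum_nonneg fun k => by positivity
      positivity
    refine (hmain N n hN).trans ?_
    have hp := hpos N n hN
    have hle := (summable_rpow_sub_one h).sum_le_tsum (Finset.range n) fun k _ => by positivity
    rw [projErrBound, if_pos hlt, add_mul, mul_right_comm, one_mul]
    exact le_add_of_le_of_nonneg (by gcongr) hp
  · have heq : r = (2 * (p : ℝ) + 2 - α) / s := by
      rw [eq_div_iff hs.ne']; linarith
    refine ⟨D + 1, by positivity, fun N n hN hn => (hmain N n hN).trans ?_⟩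
    have hn' : (1 : ℝ) ≤ n := by exact_mod_cast hn
    have hlog := Real.log_nonneg hn'
    rw [projErrBound, if_neg heq.not_lt, if_pos heq, h, zero_sub,
      show -2 * (p : ℝ) - 2 = -(r * s) - α by linarith, ← mul_assoc]
    have hp := hpos N n hN
    refine mul_le_mul ?_ (sum_inv_le_one_add_log n) (Finset.sum_nonneg fun k _ => by positivity)
      (by positivity)
    gcongr
    linarith
  · have hgt : (2 * (p : ℝ) + 2 - α) / s < r := by
      rw [div_lt_iff₀ hs]; linarith
    refine ⟨D * (1 + 1 / γ) / T ^ (γ / r) + 1, by positivity, fun N n hN hn =>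
      (hmain N n hN).trans ?_⟩
    have hN' : (0 : ℝ) < N := by exact_mod_cast hN
    have hn' : (0 : ℝ) < n := by exact_mod_cast hn
    have e1 : 1 + 2 * σ - α - (2 * (p : ℝ) + 2 - α) / r = γ / r := by
      rw [hγ, hsd]; field_simp
    have e2 : gradedMesh T r N n ^ (γ / r) = ((n : ℝ) / N) ^ γ * T ^ (γ / r) := by
      rw [gradedMesh, Real.mul_rpow (by positivity) hT.le, ← Real.rpow_mul (by positivity),
        mul_div_cancel₀ _ hr0.ne']
    have e3 : (N : ℝ) ^ (-(r * s) - α) * (n : ℝ) ^ γ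
        = (N : ℝ) ^ (-2 * (p : ℝ) - 2) * ((n : ℝ) / N) ^ γ := by
      rw [Real.div_rpow hn'.le hN'.le, show -(r * s) - α = -2 * (p : ℝ) - 2 - γ by rw [hγ]; ring,
        Real.rpow_sub hN']
      ring
    rw [projErrBound, if_neg hgt.not_gt, if_neg hgt.ne', e1, e2]
    calc D * (N : ℝ) ^ (-(r * s) - α) * ∑ k ∈ Finset.range n, ((k : ℝ) + 1) ^ (γ - 1)
        ≤ D * (N : ℝ) ^ (-(r * s) - α) * ((1 + 1 / γ) * (n : ℝ) ^ γ) := by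
          gcongr
          exact sum_rpow_le_of_pos h n
      _ = D * (1 + 1 / γ) * ((N : ℝ) ^ (-(r * s) - α) * (n : ℝ) ^ γ) := by ring
      _ = D * (1 + 1 / γ) / T ^ (γ / r) *
          ((N : ℝ) ^ (-2 * (p : ℝ) - 2) * (((n : ℝ) / N) ^ γ * T ^ (γ / r))) := by
          rw [e3]; field_simp
      _ ≤ _ := by
          gcongr
          linarith

section

/-! ### Transfer to the Riemann–Liouville formulation -/

variable {t : ℕ → ℝ} {n : ℕ} {α σ : ℝ}

theorem pwPoly_eq (ht : StrictMono t) {k : ℕ} (hk : k < n) {x : ℝ}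
    (hx : x ∈ Ioc (t k) (t (k + 1))) (Q : ℕ → Polynomial ℝ) :
    pwPoly t n Q x = (Q k).eval x := by
  rw [pwPoly, cellIdx_eq ht hk hx]

/-- A function which is polynomial on every cell agrees with some `pwPoly`. -/
theorem exists_eq_pwPoly (ht : StrictMono t) (h0 : t 0 = 0) {p : ℕ} {R : ℝ → ℝ}
    (hR : ∀ k, 1 ≤ k → k ≤ n → ∃ q : Polynomial ℝ, q.degree ≤ p ∧
      ∀ s ∈ Ioc (t (k - 1)) (t k), R s = q.eval s) :
    ∃ Q : ℕ → Polynomial ℝ, (∀ k, (Q k).degree ≤ p) ∧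
      ∀ x ∈ Ioc 0 (t n), R x = pwPoly t n Q x := by
  have h : ∀ k, ∃ q : Polynomial ℝ, q.degree ≤ p ∧
      (k < n → ∀ s ∈ Ioc (t k) (t (k + 1)), R s = q.eval s) := by
    intro k
    by_cases hk : k < n
    · obtain ⟨q, hq, hqR⟩ := hR (k + 1) (by omega) hk
      exact ⟨q, hq, fun _ => hqR⟩
    · exact ⟨0, by simp, fun h => absurd h hk⟩
  choose Q hQ hQR using h
  exact ⟨Q, hQ, fun x hx => hQR _ (cellIdx_lt ht h0 hx) x (mem_cell ht h0 hx)⟩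

/-- The Riemann–Liouville derivative agrees almost everywhere with the Marchaud form. -/
theorem ae_eq_marchaud_of_rlKernel (hα : 0 < α) (hα1 : α < 1) (hσ : 0 < σ)
    (ht : StrictMono t) (h0 : t 0 = 0) {B Λ : ℝ} (hΛ : 0 ≤ Λ) {e f D : ℝ → ℝ} {N : ℕ}
    (hnN : n ≤ N) (he : CellRegular t n σ B Λ e) (hef : ∀ x ∈ Ioc 0 (t n), f x = e x)
    (hD : ∀ x ∈ Ioo 0 (t n), (∀ k ≤ N, x ≠ t k) →
      HasDerivAt (fun τ => ∫ s in (0 : ℝ)..τ, rlKernel (1 - α) (τ - s) * f s) (D x) x) :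
    (fun x => Real.Gamma (1 - α) * D x) =ᵐ[lam (t n)] marchaud α (t n) e := by
  have hΓ : Real.Gamma (1 - α) ≠ 0 := (Real.Gamma_pos_of_pos (by linarith)).ne'
  refine ae_eq_marchaud hα hα1 he.meas he.bdd (he.integrable_ker hα hα1 ht h0 hσ hΛ) ?_
  have hfin : ∀ᵐ x ∂lam (t n), x ∉ t '' Iic N :=
    ((finite_Iic N).image t).countable.ae_notMem _
  filter_upwards [hfin, ae_restrict_mem measurableSet_Ioc] with x hx hxb
  have hne : ∀ k ≤ N, x ≠ t k := fun k hk h => hx ⟨k, hk, h.symm⟩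
  have hxo : x ∈ Ioo 0 (t n) := ⟨hxb.1, lt_of_le_of_ne hxb.2 (hne n hnN)⟩
  refine ((hD x hxo hne).const_mul (Real.Gamma (1 - α))).congr_of_eventuallyEq ?_
  filter_upwards [isOpen_Ioo.mem_nhds hxo] with τ hτ
  rw [← intervalIntegral.integral_const_mul, intervalIntegral.integral_of_le hτ.1.le,
    intervalIntegral.integral_of_le hτ.1.le]
  refine setIntegral_congr_fun measurableSet_Ioc fun s hs => ?_
  simp only [rlKernel, hef s ⟨hs.1, hs.2.trans hτ.2.le⟩, sub_sub_cancel_left]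
  field_simp

end

end GradedRL

open MeasureTheory Set GradedRL in
/-- Optimal `L²` error of the fractional orthogonal projection `R_t^α` onto piecewise
polynomials of degree `p` on the graded mesh:
`∫_0^{t_n} (R(t) - v(t))² dt ≤ C ⋅ E(n,N,σ,α,r,p)`, with `C` depending only on
`p, σ, α, r, C₀, T`. -/
theorem rl_projection_L2_error (T : ℝ) (hT : 0 < T)
    (α : ℝ) (hα0 : 0 < α) (hα1 : α < 1)
    (r : ℝ) (hr : 1 ≤ r) (p : ℕ) (hp : 1 ≤ p)
    (σ C₀ : ℝ) (hσ0 : 0 < σ) (hσ1 : σ < 1) (hC₀ : 0 < C₀) :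
    ∃ C : ℝ, 0 < C ∧
      ∀ (N : ℕ), 1 ≤ N → ∀ v : ℝ → ℝ,
        -- regularity of v
        ContinuousOn v (Set.Icc 0 T) →
        ContDiffOn ℝ (p + 1) v (Set.Ioc 0 T) →
        (∀ t ∈ Set.Ioc (0 : ℝ) T, |v t - v 0| ≤ C₀ * t ^ σ) →
        (∀ t ∈ Set.Ioc (0 : ℝ) T, ∀ ℓ ≤ p + 1,
          |iteratedDerivWithin ℓ v (Set.Ioc 0 T) t| ≤ C₀ * (1 + t ^ (σ - (ℓ : ℝ)))) →
        ∀ n, 1 ≤ n → n ≤ N → ∀ R D : ℝ → ℝ,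
          -- R is piecewise polynomial of degree ≤ p on the mesh of (0, t_n]
          (∀ k, 1 ≤ k → k ≤ n → ∃ q : Polynomial ℝ, q.degree ≤ p ∧
            ∀ s ∈ Set.Ioc (gradedMesh T r N (k - 1)) (gradedMesh T r N k),
              R s = q.eval s) →
          -- D is the Riemann–Liouville derivative of order α of R - v
          (∀ t ∈ Set.Ioo (0 : ℝ) (gradedMesh T r N n),
            (∀ k ≤ N, t ≠ gradedMesh T r N k) →
            HasDerivAt
              (fun τ => ∫ s in (0:ℝ)..τ, rlKernel (1 - α) (τ - s) * (R s - v s)) (D t) t) →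
          -- orthogonality of R - v against all piecewise polynomials of degree ≤ p
          (∀ X : ℝ → ℝ,
            (∀ k, 1 ≤ k → k ≤ n → ∃ q : Polynomial ℝ, q.degree ≤ p ∧
              ∀ s ∈ Set.Ioc (gradedMesh T r N (k - 1)) (gradedMesh T r N k),
                X s = q.eval s) →
            (∫ t in (0:ℝ)..(gradedMesh T r N n), D t * X t) = 0) →
          (∫ t in (0:ℝ)..(gradedMesh T r N n), (R t - v t) ^ 2)
            ≤ C * projErrBound T r α σ p N n := by
  obtain ⟨Ca, -, happrox⟩ :=
    exists_cellSmall_approx hσ0 hσ1 p hT hC₀ (Real.rpow_pos_of_pos two_pos r)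
  obtain ⟨K, hK, hbound⟩ := exists_le_projErrBound hT hr hα1 hσ0 p Ca
  obtain ⟨C, hC, hmain⟩ := exists_integral_sq_le hα0 hα1 hσ0 hσ1 p
  refine ⟨C * K, mul_pos hC hK, fun N hN v hvc hvd hv0 hvℓ n hn hnN R D hR hD hX => ?_⟩
  have hN' : (0 : ℝ) < N := by exact_mod_cast hN
  have hbd := hbound N n hN hn
  have ht := gradedMesh_strictMono hT hr hN
  have h0 : gradedMesh T r N 0 = 0 := gradedMesh_zero hr
  have htn := gradedMesh_le hT hr hN hnN
  have hstep := gradedMesh_step_monotone (N := N) hT hr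
  have hratio := fun k (hk : 1 ≤ k) => gradedMesh_succ_le (N := N) hT hr hk
  have hτ := fun k (hk : k < n) => gradedMesh_step_le_div hT hr hN (hk.trans_le hnN)
  set t := gradedMesh T r N
  have htn0 : 0 < t n := h0 ▸ ht hn
  set w := IccExtend hT.le ((Icc 0 T).domRestrict v) with hw
  have hwm : Measurable w := (hvc.domRestrict.Icc_extend').measurable
  have hwv : ∀ x ∈ Ioc 0 T, w x = v x := fun x hx =>
    IccExtend_of_mem hT.le _ (Ioc_subset_Icc_self hx)
  obtain ⟨P, hP, hη⟩ := happrox t n v w (fun l => iteratedDerivWithin l v (Ioc 0 T)) ht h0 htn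
    hratio hwm hwv iteratedDerivWithin_zero hv0
    (fun l hl x hx => by
      have hd := hvd.differentiableOn_iteratedDerivWithin (m := l)
        (by exact_mod_cast Nat.lt_succ_of_le hl) (uniqueDiffOn_Ioc 0 T) x hx
      simpa only [iteratedDerivWithin_succ] using hd.hasDerivWithinAt) hvℓ
  obtain ⟨q, hq, hqR⟩ := exists_eq_pwPoly ht h0 hR
  set η := fun x => w x - pwPoly t n P x with hηd
  set Q := fun k => q k - P k with hQd
  have hQ : ∀ k, (Q k).degree ≤ p := fun k =>
    (Polynomial.degree_sub_le _ _).trans (max_le (hq k) (hP k))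
  have hef : ∀ x ∈ Ioc 0 (t n), R x - v x = pwPoly t n Q x - η x := fun x hx => by
    simp only [hηd, hqR x hx, hwv x ⟨hx.1, hx.2.trans htn⟩, pwPoly, hQd, Polynomial.eval_sub]
    ring
  obtain ⟨_, _, hlip⟩ := exists_cellLipschitz p
  obtain ⟨L, hL0, hL, -⟩ := hlip α t n Q hα0 ht h0 hQ
  obtain ⟨B, Λ, -, hΛ, hQr⟩ := cellRegular_pwPoly (σ := σ) hσ1 ht h0 hL0 hL
  obtain ⟨B', Λ', -, hΛ', hηr⟩ := hη.cellRegular ht h0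
  have hDae := ae_eq_marchaud_of_rlKernel hα0 hα1 hσ0 ht h0 (add_nonneg hΛ hΛ') hnN
    (hQr.sub hηr) hef hD
  have horth : ∀ Y : ℕ → Polynomial ℝ, (∀ k, (Y k).degree ≤ p) →
      ∫ x, marchaud α (t n) (fun x => pwPoly t n Q x - η x) x * pwPoly t n Y x ∂lam (t n) = 0 := by
    intro Y hY
    have h := hX (pwPoly t n Y) fun k hk hkn => ⟨Y (k - 1), hY _, fun s hs =>
      pwPoly_eq ht (by omega) (by rwa [Nat.sub_add_cancel hk]) Y⟩
    rw [intervalIntegral.integral_of_le htn0.le] at h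
    rw [← mul_zero (Real.Gamma (1 - α)), ← h, ← integral_const_mul]
    refine integral_congr_ae ?_
    filter_upwards [hDae] with x hx
    rw [← hx, mul_assoc]
  have hfinal := hmain t n (r * T / N) Q _ η ht h0 hstep (by positivity) hτ hQ hη horth
  rw [intervalIntegral.integral_of_le htn0.le, setIntegral_congr_fun measurableSet_Ioc
    fun x hx => congrArg (· ^ 2) (hef x hx), mul_assoc C]
  exact hfinal.trans ((mul_assoc C _ _).trans_le (mul_le_mul_of_nonneg_left hbd hC.le))
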